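/- Let 1 ≤ n < α, p = 2n/(n+α), q = 2n/(n−α), and N*(n, α) = π^{(n−α)/2} · Γ(α/2)/Γ((n+α)/2) · (Γ(n/2)/Γ(n))^{−α/n}. A nonnegative f ∈ L^p(ℝⁿ), not identically zero, satisfies ‖I_α f‖_{L^q(ℝⁿ)} = N*(n, α)·‖f‖_{L^p(ℝⁿ)} if and only if there exist constants c > 0, d > 0 and a point x₀ ∈ ℝⁿ such that f(x) = c·(1/(|x−x₀|² + d²))^{(n+α)/2} for all x ∈ ℝⁿ. -/

import Mathlib

open MeasureTheory ENNReal

/-- The Riesz-type integral operator `I_α f(x) = ∫_{ℝⁿ} f(y) |x-y|^(α-n) dy` for `α > n`,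
valued in `ℝ≥0∞`. -/
noncomputable def rieszNeg (n : ℕ) (α : ℝ) (f : EuclideanSpace ℝ (Fin n) → ℝ)
    (x : EuclideanSpace ℝ (Fin n)) : ℝ≥0∞ :=
  ∫⁻ y, ENNReal.ofReal (f y * dist x y ^ (α - n))

namespace RHLS
open EuclideanGeometry

abbrev EE (n : ℕ) := EuclideanSpace ℝ (Fin n)

open Classical in
/-- conformal factor of the inversion -/
noncomputable def J {n : ℕ} (a : EE n) (R : ℝ) (x : EE n) : ℝ :=
  if x = a then 1 else (R / dist x a) ^ 2

lemma J_of_ne {n : ℕ} {a : EE n} {R : ℝ} {x : EE n} (h : x ≠ a) :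
    J a R x = (R / dist x a) ^ 2 := by simp [J, h]

lemma J_pos {n : ℕ} {a : EE n} {R : ℝ} (hR : 0 < R) (x : EE n) : 0 < J a R x := by
  unfold J
  split_ifs with h
  · norm_num
  · have := dist_pos.2 h
    positivity

lemma J_inv {n : ℕ} {a : EE n} {R : ℝ} (hR : 0 < R) (x : EE n) :
    J a R (inversion a R x) = (J a R x)⁻¹ := by
  by_cases h : x = a
  · simp [J, h]
  · have h' : inversion a R x ≠ a := fun h2 => h ((inversion_eq_center hR.ne').1 h2)
    rw [J_of_ne h, J_of_ne h', dist_inversion_center]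
    have := dist_pos.2 h
    field_simp

lemma measurable_inversion {n : ℕ} (a : EE n) (R : ℝ) : Measurable (inversion a R) := by
  have : inversion a R = fun x => (R / dist x a) ^ 2 • (x - a) + a := by
    ext1 x; simp [inversion]
  rw [this]
  fun_prop

lemma measurable_J {n : ℕ} (a : EE n) (R : ℝ) : Measurable (J a R) := by
  unfold J
  refine Measurable.ite ?_ (by fun_prop) (by fun_prop)
  exact measurableSet_singleton a

lemma det_inv {n : ℕ} (a : EE n) {R : ℝ} {x : EE n} (hx : x ≠ a) :
    |((R / dist x a) ^ 2 • ((Submodule.span ℝ {x - a})ᗮ.reflection : EE n →L[ℝ] EE n)).det|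
      = J a R x ^ n := by
  rw [J_of_ne hx]
  rw [ContinuousLinearMap.det]
  have h1 : (((R / dist x a) ^ 2 • ((Submodule.span ℝ {x - a})ᗮ.reflection : EE n →L[ℝ] EE n) :
     EE n →L[ℝ] EE n) : EE n →ₗ[ℝ] EE n) =
     (R / dist x a) ^ 2 • ((Submodule.span ℝ {x - a})ᗮ.reflection.toLinearMap : EE n →ₗ[ℝ] EE n) := by
    ext; simp
  rw [h1, LinearMap.det_smul, Submodule.det_reflection]
  simp [abs_mul]

lemma nontriv {n : ℕ} (hn : 1 ≤ n) : Nontrivial (EE n) := by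
  have : Nonempty (Fin n) := ⟨⟨0, hn⟩⟩
  infer_instance

lemma ae_ne {n : ℕ} (hn : 1 ≤ n) (a : EE n) : ∀ᵐ x : EE n, x ≠ a := by
  have := nontriv hn
  exact Measure.ae_ne volume a

lemma image_compl {n : ℕ} (a : EE n) {R : ℝ} (hR : 0 < R) :
    inversion a R '' {a}ᶜ = {a}ᶜ := by
  ext x
  constructor
  · rintro ⟨y, hy, rfl⟩
    exact fun h => hy ((inversion_eq_center hR.ne').1 h)
  · intro hx
    refine ⟨inversion a R x, fun h => hx ((inversion_eq_center hR.ne').1 h), ?_⟩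
    exact inversion_inversion a hR.ne' x

lemma lintegral_inv {n : ℕ} (hn : 1 ≤ n) (a : EE n) {R : ℝ} (hR : 0 < R) (φ : EE n → ℝ≥0∞) :
    ∫⁻ x, φ x = ∫⁻ x, ENNReal.ofReal (J a R x ^ n) * φ (inversion a R x) := by
  have := nontriv hn
  have h := lintegral_image_eq_lintegral_abs_det_fderiv_mul (volume : Measure (EE n))
    (s := {a}ᶜ) (measurableSet_singleton a).compl
    (fun x hx => (hasFDerivAt_inversion (R := R) (c := a) hx).hasFDerivWithinAt)
    ((inversion_injective a hR.ne').injOn) φ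
  rw [image_compl a hR] at h
  have e1 : ({a}ᶜ : Set (EE n)) =ᵐ[volume] Set.univ := by
    rw [ae_eq_univ]; simp
  rw [setLIntegral_congr e1, Measure.restrict_univ] at h
  rw [h, ← lintegral_indicator (measurableSet_singleton a).compl]
  apply lintegral_congr_ae
  filter_upwards [ae_ne hn a] with x hx
  rw [Set.indicator_of_mem (by simpa using hx), det_inv a hx]

lemma integral_inv {n : ℕ} (hn : 1 ≤ n) (a : EE n) {R : ℝ} (hR : 0 < R) (φ : EE n → ℝ) :
    ∫ x, φ x = ∫ x, J a R x ^ n * φ (inversion a R x) := by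
  have := nontriv hn
  have h := integral_image_eq_integral_abs_det_fderiv_smul (volume : Measure (EE n))
    (s := {a}ᶜ) (measurableSet_singleton a).compl
    (fun x hx => (hasFDerivAt_inversion (R := R) (c := a) hx).hasFDerivWithinAt)
    ((inversion_injective a hR.ne').injOn) φ
  rw [image_compl a hR] at h
  have e1 : ({a}ᶜ : Set (EE n)) =ᵐ[volume] Set.univ := by
    rw [ae_eq_univ]; simp
  rw [setIntegral_congr_set e1, Measure.restrict_univ] at h
  rw [h, ← integral_indicator (measurableSet_singleton a).compl]
  apply integral_congr_ae
  filter_upwards [ae_ne hn a] with x hx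
  rw [Set.indicator_of_mem (by simpa using hx), det_inv a hx, smul_eq_mul]

lemma integrable_inv {n : ℕ} (hn : 1 ≤ n) (a : EE n) {R : ℝ} (hR : 0 < R) (φ : EE n → ℝ) :
    Integrable φ ↔ Integrable (fun x => J a R x ^ n * φ (inversion a R x)) := by
  have := nontriv hn
  have h := integrableOn_image_iff_integrableOn_abs_det_fderiv_smul (volume : Measure (EE n))
    (s := {a}ᶜ) (measurableSet_singleton a).compl
    (fun x hx => (hasFDerivAt_inversion (R := R) (c := a) hx).hasFDerivWithinAt)
    ((inversion_injective a hR.ne').injOn) φ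
  rw [image_compl a hR] at h
  have e1 : ({a}ᶜ : Set (EE n)) =ᵐ[volume] Set.univ := by
    rw [ae_eq_univ]; simp
  rw [integrableOn_congr_set_ae e1, integrableOn_congr_set_ae e1, integrableOn_univ,
    integrableOn_univ] at h
  rw [h]
  apply integrable_congr
  filter_upwards [ae_ne hn a] with x hx
  rw [det_inv a hx, smul_eq_mul]

end RHLS

namespace RHLS
open EuclideanGeometry

noncomputable def refl {n : ℕ} (μ : ℝ) (a : EE n) (R : ℝ) (f : EE n → ℝ) (x : EE n) : ℝ :=
  J a R x ^ ((n : ℝ) + μ / 2) * f (inversion a R x)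

noncomputable def Ks {n : ℕ} (μ : ℝ) (a : EE n) (R : ℝ) (x y : EE n) : ℝ :=
  J a R x ^ (-(μ / 2)) * dist (inversion a R x) y ^ μ

lemma refl_refl {n : ℕ} (μ : ℝ) (a : EE n) {R : ℝ} (hR : 0 < R) (f : EE n → ℝ) :
    refl μ a R (refl μ a R f) = f := by
  ext x
  unfold refl
  rw [J_inv hR, inversion_inversion a hR.ne', ← mul_assoc, Real.inv_rpow (J_pos hR x).le,
    mul_inv_cancel₀ (Real.rpow_pos_of_pos (J_pos hR x) _).ne', one_mul]

lemma refl_nonneg {n : ℕ} (μ : ℝ) (a : EE n) {R : ℝ} (hR : 0 < R) {f : EE n → ℝ}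
    (hf : ∀ x, 0 ≤ f x) (x : EE n) : 0 ≤ refl μ a R f x :=
  mul_nonneg (Real.rpow_nonneg (J_pos hR x).le _) (hf _)

lemma measurable_refl {n : ℕ} (μ : ℝ) (a : EE n) (R : ℝ) {f : EE n → ℝ}
    (hf : Measurable f) : Measurable (refl μ a R f) :=
  ((measurable_J a R).pow_const _).mul (hf.comp (measurable_inversion a R))

lemma measurable_Ks {n : ℕ} (μ : ℝ) (a : EE n) (R : ℝ) :
    Measurable (fun p : EE n × EE n => Ks μ a R p.1 p.2) := by
  unfold Ks
  have h1 : Measurable (fun p : EE n × EE n => J a R p.1) := (measurable_J a R).comp measurable_fst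
  have h2 : Measurable (fun p : EE n × EE n => inversion a R p.1) :=
    (measurable_inversion a R).comp measurable_fst
  exact (h1.pow_const _).mul ((h2.dist measurable_snd).pow_const _)

lemma Ks_nonneg {n : ℕ} (μ : ℝ) (a : EE n) {R : ℝ} (hR : 0 < R) (x y : EE n) :
    0 ≤ Ks μ a R x y :=
  mul_nonneg (Real.rpow_nonneg (J_pos hR x).le _) (Real.rpow_nonneg dist_nonneg _)

lemma dist_rpow_eq {n : ℕ} (μ : ℝ) (x y : EE n) : dist x y ^ μ = (dist x y ^ 2) ^ (μ / 2) := by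
  rw [← Real.rpow_natCast, ← Real.rpow_mul dist_nonneg]
  congr 1; push_cast; ring

lemma sq_formula {n : ℕ} (a : EE n) {R : ℝ} (hR : 0 < R) {x : EE n} (hx : x ≠ a)
    (y : EE n) :
    (J a R x)⁻¹ * dist (inversion a R x) y ^ 2 =
      dist x y ^ 2 + (dist x a ^ 2 - R ^ 2) * (dist y a ^ 2 - R ^ 2) / R ^ 2 := by
  rw [J_of_ne hx]
  have hd := dist_pos.2 hx
  obtain ⟨z, rfl⟩ : ∃ z, x = a + z := ⟨x - a, by simp⟩
  obtain ⟨v, rfl⟩ : ∃ v, y = a + v := ⟨y - a, by simp⟩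
  have hz : dist (a + z) a = ‖z‖ := by simp [dist_eq_norm]
  have hv : dist (a + v) a = ‖v‖ := by simp [dist_eq_norm]
  have hzv : dist (a + z) (a + v) ^ 2 = ‖z‖ ^ 2 - 2 * inner ℝ z v + ‖v‖ ^ 2 := by
    rw [dist_add_left, dist_eq_norm, norm_sub_sq_real]
  have h1 : dist (inversion a R (a + z)) (a + v) ^ 2
      = (R / ‖z‖) ^ 4 * ‖z‖ ^ 2 - 2 * ((R / ‖z‖) ^ 2 * inner ℝ z v) + ‖v‖ ^ 2 := by
    have : inversion a R (a + z) = a + (R / ‖z‖) ^ 2 • z := by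
      simp [inversion, add_comm]
    rw [this, dist_add_left, dist_eq_norm, norm_sub_sq_real, norm_smul, inner_smul_left]
    have h4 : |R| ^ 4 = R ^ 4 := by
      rw [show (4 : ℕ) = 2 * 2 from rfl, pow_mul, sq_abs, ← pow_mul]
    simp
    ring_nf
    rw [h4]; ring
  rw [hz] at hd ⊢
  rw [hv, hzv, h1]
  field_simp
  ring

lemma Ks_eq {n : ℕ} (μ : ℝ) (a : EE n) {R : ℝ} (hR : 0 < R) {x : EE n} (hx : x ≠ a)
    (y : EE n) :
    Ks μ a R x y = (dist x y ^ 2 + (dist x a ^ 2 - R ^ 2) * (dist y a ^ 2 - R ^ 2) / R ^ 2)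
      ^ (μ / 2) := by
  rw [← sq_formula a hR hx, Real.mul_rpow (inv_nonneg.2 (J_pos hR x).le) (by positivity),
    ← dist_rpow_eq, Real.inv_rpow (J_pos hR x).le, ← Real.rpow_neg (J_pos hR x).le, Ks]

lemma Ks_symm {n : ℕ} (μ : ℝ) (a : EE n) {R : ℝ} (hR : 0 < R) {x y : EE n} (hx : x ≠ a)
    (hy : y ≠ a) : Ks μ a R x y = Ks μ a R y x := by
  rw [Ks_eq μ a hR hx, Ks_eq μ a hR hy, dist_comm x y, mul_comm (dist x a ^ 2 - R ^ 2)]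

/-- Both on the same side -/
lemma Ks_ge {n : ℕ} {μ : ℝ} (hμ : 0 < μ) (a : EE n) {R : ℝ} (hR : 0 < R) {x y : EE n} (hx : x ≠ a)
    (h : 0 ≤ (dist x a ^ 2 - R ^ 2) * (dist y a ^ 2 - R ^ 2)) :
    dist x y ^ μ ≤ Ks μ a R x y := by
  rw [Ks_eq μ a hR hx, dist_rpow_eq]
  apply Real.rpow_le_rpow (by positivity) _ (by positivity)
  have : 0 ≤ (dist x a ^ 2 - R ^ 2) * (dist y a ^ 2 - R ^ 2) / R ^ 2 := by positivity
  linarith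

lemma Ks_gt {n : ℕ} {μ : ℝ} (hμ : 0 < μ) (a : EE n) {R : ℝ} (hR : 0 < R) {x y : EE n} (hx : x ≠ a)
    (h : 0 < (dist x a ^ 2 - R ^ 2) * (dist y a ^ 2 - R ^ 2)) :
    dist x y ^ μ < Ks μ a R x y := by
  rw [Ks_eq μ a hR hx, dist_rpow_eq]
  apply Real.rpow_lt_rpow (by positivity) _ (by positivity)
  have : 0 < (dist x a ^ 2 - R ^ 2) * (dist y a ^ 2 - R ^ 2) / R ^ 2 := by positivity
  linarith

lemma Ks_base_nonneg {n : ℕ} (a : EE n) {R : ℝ} (hR : 0 < R) {x : EE n} (hx : x ≠ a)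
    (y : EE n) : 0 ≤ dist x y ^ 2 + (dist x a ^ 2 - R ^ 2) * (dist y a ^ 2 - R ^ 2) / R ^ 2 := by
  rw [← sq_formula a hR hx]
  have := J_pos (a := a) hR x
  positivity

lemma Ks_le {n : ℕ} {μ : ℝ} (hμ : 0 < μ) (a : EE n) {R : ℝ} (hR : 0 < R) {x y : EE n} (hx : x ≠ a)
    (h : (dist x a ^ 2 - R ^ 2) * (dist y a ^ 2 - R ^ 2) ≤ 0) :
    Ks μ a R x y ≤ dist x y ^ μ := by
  rw [Ks_eq μ a hR hx, dist_rpow_eq]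
  apply Real.rpow_le_rpow (Ks_base_nonneg a hR hx y) _ (by positivity)
  have : (dist x a ^ 2 - R ^ 2) * (dist y a ^ 2 - R ^ 2) / R ^ 2 ≤ 0 :=
    div_nonpos_of_nonpos_of_nonneg h (by positivity)
  linarith

lemma Ks_lt {n : ℕ} {μ : ℝ} (hμ : 0 < μ) (a : EE n) {R : ℝ} (hR : 0 < R) {x y : EE n} (hx : x ≠ a)
    (h : (dist x a ^ 2 - R ^ 2) * (dist y a ^ 2 - R ^ 2) < 0) :
    Ks μ a R x y < dist x y ^ μ := by
  rw [Ks_eq μ a hR hx, dist_rpow_eq]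
  apply Real.rpow_lt_rpow (Ks_base_nonneg a hR hx y) _ (by positivity)
  have : (dist x a ^ 2 - R ^ 2) * (dist y a ^ 2 - R ^ 2) / R ^ 2 < 0 :=
    div_neg_of_neg_of_pos h (by positivity)
  linarith

/-- pointwise form of change of variables -/
lemma cv_point {n : ℕ} (μ : ℝ) (a : EE n) {R : ℝ} (hR : 0 < R) {x y : EE n} (hx : x ≠ a)
    (hy : y ≠ a) (f : EE n → ℝ) :
    J a R y ^ n * (dist x (inversion a R y) ^ μ * f (inversion a R y)) =
      Ks μ a R x y * refl μ a R f y := by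
  rw [Ks_symm μ a hR hx hy, Ks, refl, dist_comm x]
  have h := J_pos (a := a) hR y
  have : J a R y ^ n = J a R y ^ (-(μ / 2)) * J a R y ^ ((n : ℝ) + μ / 2) := by
    rw [← Real.rpow_add h, ← Real.rpow_natCast]; congr 1; ring
  rw [this]; ring

lemma pot1 {n : ℕ} (hn : 1 ≤ n) (μ : ℝ) (a : EE n) {R : ℝ} (hR : 0 < R) {x : EE n} (hx : x ≠ a)
    (f : EE n → ℝ) :
    ∫⁻ y, ENNReal.ofReal (dist x y ^ μ * f y) =
      ∫⁻ y, ENNReal.ofReal (Ks μ a R x y * refl μ a R f y) := by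
  rw [lintegral_inv hn a hR]
  apply lintegral_congr_ae
  filter_upwards [ae_ne hn a] with y hy
  rw [← ENNReal.ofReal_mul (pow_nonneg (J_pos hR y).le _), cv_point μ a hR hx hy]

lemma pot2 {n : ℕ} (hn : 1 ≤ n) (μ : ℝ) (a : EE n) {R : ℝ} (hR : 0 < R) {x : EE n} (hx : x ≠ a)
    (f : EE n → ℝ) :
    ∫⁻ y, ENNReal.ofReal (Ks μ a R x y * f y) =
      ∫⁻ y, ENNReal.ofReal (dist x y ^ μ * refl μ a R f y) := by
  rw [pot1 hn μ a hR hx, refl_refl μ a hR]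

lemma rpot1 {n : ℕ} (hn : 1 ≤ n) (μ : ℝ) (a : EE n) {R : ℝ} (hR : 0 < R) {x : EE n} (hx : x ≠ a)
    (f : EE n → ℝ) :
    ∫ y, dist x y ^ μ * f y = ∫ y, Ks μ a R x y * refl μ a R f y := by
  rw [integral_inv hn a hR]
  apply integral_congr_ae
  filter_upwards [ae_ne hn a] with y hy
  rw [cv_point μ a hR hx hy]

lemma rpot2 {n : ℕ} (hn : 1 ≤ n) (μ : ℝ) (a : EE n) {R : ℝ} (hR : 0 < R) {x : EE n} (hx : x ≠ a)
    (f : EE n → ℝ) :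
    ∫ y, Ks μ a R x y * f y = ∫ y, dist x y ^ μ * refl μ a R f y := by
  rw [rpot1 hn μ a hR hx, refl_refl μ a hR]

lemma ipot1 {n : ℕ} (hn : 1 ≤ n) (μ : ℝ) (a : EE n) {R : ℝ} (hR : 0 < R) {x : EE n} (hx : x ≠ a)
    (f : EE n → ℝ) :
    Integrable (fun y => dist x y ^ μ * f y) ↔
      Integrable (fun y => Ks μ a R x y * refl μ a R f y) := by
  rw [integrable_inv hn a hR]
  apply integrable_congr
  filter_upwards [ae_ne hn a] with y hy
  rw [cv_point μ a hR hx hy]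

lemma ipot2 {n : ℕ} (hn : 1 ≤ n) (μ : ℝ) (a : EE n) {R : ℝ} (hR : 0 < R) {x : EE n} (hx : x ≠ a)
    (f : EE n → ℝ) :
    Integrable (fun y => Ks μ a R x y * f y) ↔
      Integrable (fun y => dist x y ^ μ * refl μ a R f y) := by
  rw [ipot1 hn μ a hR hx, refl_refl μ a hR]

/-- The key identity for the difference of potentials. -/
lemma pot_diff {n : ℕ} (hn : 1 ≤ n) (μ : ℝ) (a : EE n) {R : ℝ} (hR : 0 < R) {x : EE n} (hx : x ≠ a)
    (f : EE n → ℝ) (hf : ∀ x, Integrable (fun y => dist x y ^ μ * f y)) :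
    2 * (J a R x ^ (-(μ / 2)) * (∫ y, dist (inversion a R x) y ^ μ * f y)
      - ∫ y, dist x y ^ μ * f y) =
      ∫ y, (Ks μ a R x y - dist x y ^ μ) * (f y - refl μ a R f y) ∧
    Integrable (fun y => (Ks μ a R x y - dist x y ^ μ) * (f y - refl μ a R f y)) := by
  have i1 := hf x
  have i2 := (ipot1 hn μ a hR hx f).1 i1
  have i3 : Integrable (fun y => Ks μ a R x y * f y) := by
    have := (hf (inversion a R x)).const_mul (J a R x ^ (-(μ / 2)))
    refine this.congr (Filter.Eventually.of_forall fun y => ?_)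
    simp only [Ks]; ring
  have i4 := (ipot2 hn μ a hR hx f).1 i3
  have e0 : J a R x ^ (-(μ / 2)) * (∫ y, dist (inversion a R x) y ^ μ * f y) =
      ∫ y, Ks μ a R x y * f y := by
    rw [← integral_const_mul]
    congr 1; ext y; simp only [Ks]; ring
  have e1 := rpot1 hn μ a hR hx f
  have e2 := rpot2 hn μ a hR hx f
  have e : (fun y => (Ks μ a R x y - dist x y ^ μ) * (f y - refl μ a R f y)) =
    (fun y => (Ks μ a R x y * f y + dist x y ^ μ * refl μ a R f y) -
      (dist x y ^ μ * f y + Ks μ a R x y * refl μ a R f y)) := by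
    ext y; ring
  have I1 : Integrable (fun y => Ks μ a R x y * f y + dist x y ^ μ * refl μ a R f y) := i3.add i4
  have I2 : Integrable (fun y => dist x y ^ μ * f y + Ks μ a R x y * refl μ a R f y) := i1.add i2
  have I := I1.sub I2
  constructor
  · rw [e0, e, integral_sub I1 I2]
    rw [integral_add i3 i4, integral_add i1 i2, ← e1, ← e2]; ring
  · rw [e]; exact I

end RHLS

namespace RHLS
open EuclideanGeometry

/-- polarization -/
noncomputable def pol {n : ℕ} (μ : ℝ) (a : EE n) (R e : ℝ) (f : EE n → ℝ) (x : EE n) : ℝ :=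
  if 0 < e * (dist x a ^ 2 - R ^ 2) then max (f x) (refl μ a R f x)
  else min (f x) (refl μ a R f x)

lemma refl_fix {n : ℕ} (μ : ℝ) (a : EE n) {R : ℝ} (hR : 0 < R) (f : EE n → ℝ) {x : EE n}
    (hx : x = a ∨ dist x a ^ 2 = R ^ 2) : refl μ a R f x = f x := by
  rcases hx with rfl | hx
  · simp [refl, J]
  · have hd : dist x a = R := by
      have := sq_eq_sq₀ (dist_nonneg (x := x) (y := a)) hR.le
      exact this.1 hx
    have hxa : x ≠ a := by
      rw [← dist_pos, hd]; exact hR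
    rw [refl, J_of_ne hxa, inversion_of_mem_sphere (Metric.mem_sphere.2 hd), hd, div_self hR.ne']
    simp

lemma side_inv {n : ℕ} (a : EE n) {R : ℝ} (hR : 0 < R) {x : EE n} (hx : x ≠ a) :
    dist (inversion a R x) a ^ 2 - R ^ 2 = - (J a R x * (dist x a ^ 2 - R ^ 2)) := by
  rw [dist_inversion_center, J_of_ne hx]
  have := dist_pos.2 hx
  field_simp
  ring

lemma refl_pol {n : ℕ} (μ : ℝ) (a : EE n) {R e : ℝ} (hR : 0 < R) (he : e ≠ 0)
    (f : EE n → ℝ) (x : EE n) :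
    refl μ a R (pol μ a R e f) x = if 0 < e * (dist x a ^ 2 - R ^ 2)
      then min (f x) (refl μ a R f x) else max (f x) (refl μ a R f x) := by
  by_cases hx : x = a ∨ dist x a ^ 2 = R ^ 2
  · rw [refl_fix μ a hR _ hx, refl_fix μ a hR _ hx]
    unfold pol
    rw [refl_fix μ a hR _ hx]
    simp
  · push Not at hx
    obtain ⟨hx, hb⟩ := hx
    have hJ := J_pos (a := a) hR x
    have hJb : 0 ≤ J a R x ^ ((n : ℝ) + μ / 2) := Real.rpow_nonneg hJ.le _
    have e1 : refl μ a R (refl μ a R f) x = f x := by rw [refl_refl μ a hR]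
    have hs := side_inv a hR hx
    rw [refl, pol, hs]
    have hne : e * (dist x a ^ 2 - R ^ 2) ≠ 0 := mul_ne_zero he (sub_ne_zero.2 hb)
    have e2 : e * -(J a R x * (dist x a ^ 2 - R ^ 2)) = - (J a R x * (e * (dist x a ^ 2 - R ^ 2))) := by
      ring
    rw [e2]
    rcases lt_or_gt_of_ne hne with h | h
    · rw [if_pos (by nlinarith [mul_pos_of_neg_of_neg (neg_lt_zero.2 hJ) h]), if_neg h.le.not_gt,
        mul_max_of_nonneg _ _ hJb, max_comm]
      conv_lhs => rw [← refl, ← refl, e1]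
    · rw [if_neg (by nlinarith [mul_pos hJ h]), if_pos h, mul_min_of_nonneg _ _ hJb, min_comm]
      conv_lhs => rw [← refl, ← refl, e1]

lemma pol_sum {n : ℕ} (μ : ℝ) (a : EE n) {R e : ℝ} (hR : 0 < R) (he : e ≠ 0)
    (f : EE n → ℝ) (x : EE n) {β : Type*} [AddCommMonoid β] (φ : ℝ → β) :
    φ (pol μ a R e f x) + φ (refl μ a R (pol μ a R e f) x) = φ (f x) + φ (refl μ a R f x) := by
  rw [refl_pol μ a hR he, pol]
  split_ifs <;> rcases le_total (f x) (refl μ a R f x) with h | h <;> simp [h, add_comm]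

lemma pol_nonneg {n : ℕ} (μ : ℝ) (a : EE n) {R e : ℝ} (hR : 0 < R) {f : EE n → ℝ}
    (hf : ∀ x, 0 ≤ f x) (x : EE n) : 0 ≤ pol μ a R e f x := by
  have h1 := hf x
  have h2 := refl_nonneg μ a hR hf x
  unfold pol
  split_ifs
  · exact le_max_of_le_left h1
  · exact le_min h1 h2

lemma measurable_pol {n : ℕ} (μ : ℝ) (a : EE n) (R e : ℝ) {f : EE n → ℝ}
    (hf : Measurable f) : Measurable (pol μ a R e f) := by
  have h2 := measurable_refl μ a R hf
  unfold pol
  refine Measurable.ite ?_ (hf.max h2) (hf.min h2)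
  exact measurableSet_lt measurable_const (by fun_prop)

noncomputable def DD {n : ℕ} (μ : ℝ) (f g : EE n → ℝ) : ℝ≥0∞ :=
  ∫⁻ x, ∫⁻ y, ENNReal.ofReal (f x * dist x y ^ μ * g y)

noncomputable def BB {n : ℕ} (μ : ℝ) (a : EE n) (R : ℝ) (f g : EE n → ℝ) (x y : EE n) : ℝ :=
  (f x * g y + refl μ a R f x * refl μ a R g y) * dist x y ^ μ +
  (f x * refl μ a R g y + refl μ a R f x * g y) * Ks μ a R x y

lemma BB_nonneg {n : ℕ} (μ : ℝ) (a : EE n) {R : ℝ} (hR : 0 < R) {f g : EE n → ℝ}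
    (hf : ∀ x, 0 ≤ f x) (hg : ∀ x, 0 ≤ g x) (x y : EE n) : 0 ≤ BB μ a R f g x y := by
  have h1 := hf x
  have h2 := refl_nonneg μ a hR hf x
  have h3 := hg y
  have h4 := refl_nonneg μ a hR hg y
  have h5 := Ks_nonneg μ a hR x y
  have h6 : 0 ≤ dist x y ^ μ := Real.rpow_nonneg dist_nonneg _
  unfold BB
  positivity

lemma measurable_BB {n : ℕ} (μ : ℝ) (a : EE n) (R : ℝ) {f g : EE n → ℝ}
    (hf : Measurable f) (hg : Measurable g) :
    Measurable (fun p : EE n × EE n => BB μ a R f g p.1 p.2) := by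
  have h1 := measurable_refl μ a R hf
  have h2 := measurable_refl μ a R hg
  have h3 := measurable_Ks μ a R
  unfold BB
  fun_prop

lemma DD_t1 {n : ℕ} (hn : 1 ≤ n) (μ : ℝ) (a : EE n) {R : ℝ} (hR : 0 < R) {f g : EE n → ℝ}
    (hf : ∀ x, 0 ≤ f x) :
    DD μ f g = ∫⁻ x, ∫⁻ y, ENNReal.ofReal (f x * (Ks μ a R x y * refl μ a R g y)) := by
  unfold DD
  apply lintegral_congr_ae
  filter_upwards [ae_ne hn a] with x hx
  simp_rw [mul_assoc, ENNReal.ofReal_mul (hf x)]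
  rw [lintegral_const_mul' _ _ ENNReal.ofReal_ne_top, lintegral_const_mul' _ _ ENNReal.ofReal_ne_top]
  rw [pot1 hn μ a hR hx]

lemma DD_t2 {n : ℕ} (hn : 1 ≤ n) (μ : ℝ) (a : EE n) {R : ℝ} (hR : 0 < R) {f g : EE n → ℝ} :
    DD μ f g = ∫⁻ x, ∫⁻ y, ENNReal.ofReal (refl μ a R f x * (Ks μ a R x y * g y)) := by
  unfold DD
  rw [lintegral_inv hn a hR]
  apply lintegral_congr
  intro x
  rw [← lintegral_const_mul' _ _ ENNReal.ofReal_ne_top]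
  apply lintegral_congr
  intro y
  have h := J_pos (a := a) hR x
  rw [← ENNReal.ofReal_mul (pow_nonneg h.le _)]
  congr 1
  have : J a R x ^ n = J a R x ^ (-(μ / 2)) * J a R x ^ ((n : ℝ) + μ / 2) := by
    rw [← Real.rpow_add h, ← Real.rpow_natCast]; congr 1; ring
  rw [this, Ks, refl]; ring

lemma DD_t3 {n : ℕ} (hn : 1 ≤ n) (μ : ℝ) (a : EE n) {R : ℝ} (hR : 0 < R) {f g : EE n → ℝ}
    (hf : ∀ x, 0 ≤ f x) :
    DD μ f g = ∫⁻ x, ∫⁻ y, ENNReal.ofReal (refl μ a R f x * (dist x y ^ μ * refl μ a R g y)) := by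
  rw [DD_t2 hn μ a hR]
  apply lintegral_congr_ae
  filter_upwards [ae_ne hn a] with x hx
  simp_rw [ENNReal.ofReal_mul (refl_nonneg μ a hR hf x)]
  rw [lintegral_const_mul' _ _ ENNReal.ofReal_ne_top, lintegral_const_mul' _ _ ENNReal.ofReal_ne_top]
  rw [pot2 hn μ a hR hx]

lemma DD_four {n : ℕ} (hn : 1 ≤ n) (μ : ℝ) (a : EE n) {R : ℝ} (hR : 0 < R) {f g : EE n → ℝ}
    (hf : ∀ x, 0 ≤ f x) (hg : ∀ x, 0 ≤ g x) (hfm : Measurable f) (hgm : Measurable g) :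
    ∫⁻ x, ∫⁻ y, ENNReal.ofReal (BB μ a R f g x y) = 4 * DD μ f g := by
  have m1 := measurable_refl μ a R hfm
  have m2 := measurable_refl μ a R hgm
  have m3 := measurable_Ks μ a R
  have M1 : Measurable (fun p : EE n × EE n => ENNReal.ofReal (f p.1 * (Ks μ a R p.1 p.2 * refl μ a R g p.2))) := by
    fun_prop
  have M2 : Measurable (fun p : EE n × EE n => ENNReal.ofReal (refl μ a R f p.1 * (Ks μ a R p.1 p.2 * g p.2))) := by
    fun_prop
  have M3 : Measurable (fun p : EE n × EE n => ENNReal.ofReal (refl μ a R f p.1 * (dist p.1 p.2 ^ μ * refl μ a R g p.2))) := by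
    fun_prop
  have M4 : Measurable (fun p : EE n × EE n => ENNReal.ofReal (f p.1 * dist p.1 p.2 ^ μ * g p.2)) := by
    fun_prop
  have h4 : 4 * DD μ f g = ((DD μ f g + DD μ f g) + DD μ f g) + DD μ f g := by ring
  rw [h4]
  nth_rewrite 4 [DD_t3 hn μ a hR hf]
  nth_rewrite 3 [DD_t2 hn μ a hR]
  nth_rewrite 2 [DD_t1 hn μ a hR hf]
  unfold DD
  rw [← lintegral_add_left M4.lintegral_prod_right',
    ← lintegral_add_right _ M2.lintegral_prod_right', ← lintegral_add_right _ M3.lintegral_prod_right']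
  apply lintegral_congr
  intro x
  have s1 := M1.comp (measurable_prodMk_left (x := x))
  have s2 := M2.comp (measurable_prodMk_left (x := x))
  have s3 := M3.comp (measurable_prodMk_left (x := x))
  have s4 := M4.comp (measurable_prodMk_left (x := x))
  simp only [Function.comp_def] at s1 s2 s3 s4
  rw [← lintegral_add_left s4, ← lintegral_add_right _ s2, ← lintegral_add_right _ s3]
  apply lintegral_congr
  intro y
  have h1 := hf x
  have h2 := refl_nonneg μ a hR hf x
  have h3 := hg y
  have h4 := refl_nonneg μ a hR hg y
  have h5 := Ks_nonneg μ a hR x y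
  have h6 : 0 ≤ dist x y ^ μ := Real.rpow_nonneg dist_nonneg _
  rw [← ENNReal.ofReal_add (by positivity) (by positivity),
    ← ENNReal.ofReal_add (by positivity) (by positivity),
    ← ENNReal.ofReal_add (by positivity) (by positivity)]
  congr 1
  unfold BB; ring

lemma minmax1 (a a' b b' : ℝ) : max a a' * max b b' + min a a' * min b b'
    = a * b + a' * b' + max 0 (-((a - a') * (b - b'))) := by
  rcases le_total a a' with h | h <;> rcases le_total b b' with h' | h' <;> simp [h, h']
  · rw [max_eq_left (by nlinarith)]; ring
  · rw [max_eq_right (by nlinarith)]; ring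
  · rw [max_eq_right (by nlinarith)]; ring
  · exact mul_nonneg (by linarith) (by linarith)

lemma minmax2 (a a' b b' : ℝ) : max a a' * min b b' + min a a' * max b b'
    = a * b' + a' * b - max 0 (-((a - a') * (b - b'))) := by
  have h1 := minmax1 a a' b b'
  have h2 : max a a' + min a a' = a + a' := max_add_min a a'
  have h3 : max b b' + min b b' = b + b' := max_add_min b b'
  have : (max a a' + min a a') * (max b b' + min b b') = (a + a') * (b + b') := by rw [h2, h3]
  linarith

lemma minmax3 (a a' b b' : ℝ) : max a a' * max b b' + min a a' * min b b'
    = a * b' + a' * b + max 0 ((a - a') * (b - b')) := by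
  have h := minmax1 a a' b' b
  rw [max_comm b' b, min_comm b' b] at h
  rw [h]; congr 2; ring

lemma minmax4 (a a' b b' : ℝ) : max a a' * min b b' + min a a' * max b b'
    = a * b + a' * b' - max 0 ((a - a') * (b - b')) := by
  have h := minmax2 a a' b' b
  rw [max_comm b' b, min_comm b' b] at h
  rw [h]; congr 2; ring

lemma BB_pol {n : ℕ} {μ : ℝ} (hμ : 0 < μ) (a : EE n) {R e : ℝ} (hR : 0 < R) (he : e ≠ 0)
    (f g : EE n → ℝ) {x y : EE n} (hx : x ≠ a) :
    BB μ a R (pol μ a R e f) (pol μ a R e g) x y ≤ BB μ a R f g x y ∧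
    (BB μ a R (pol μ a R e f) (pol μ a R e g) x y = BB μ a R f g x y →
      0 ≤ ((dist x a ^ 2 - R ^ 2) * (f x - refl μ a R f x)) *
        ((dist y a ^ 2 - R ^ 2) * (g y - refl μ a R g y))) := by
  unfold BB
  rw [refl_pol μ a hR he, refl_pol μ a hR he, pol, pol]
  set K := dist x y ^ μ
  set K' := Ks μ a R x y with hK'
  set p := dist x a ^ 2 - R ^ 2 with hp
  set s := dist y a ^ 2 - R ^ 2 with hs
  set A := f x
  set A' := refl μ a R f x
  set B := g y
  set B' := refl μ a R g y
  have hge : 0 ≤ p * s → K ≤ K' := Ks_ge hμ a hR hx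
  have hgt : 0 < p * s → K < K' := Ks_gt hμ a hR hx
  have hle : p * s ≤ 0 → K' ≤ K := Ks_le hμ a hR hx
  have hlt : p * s < 0 → K' < K := Ks_lt hμ a hR hx
  have hee : 0 < e * e := mul_self_pos.2 he
  have key1 : 0 ≤ p * s → ∀ d : ℝ, 0 ≤ d →
      (A * B + A' * B' + d) * K + (A * B' + A' * B - d) * K' ≤
        (A * B + A' * B') * K + (A * B' + A' * B) * K' := by
    intro h d hd
    nlinarith [mul_nonneg hd (sub_nonneg.2 (hge h))]
  have key2 : p * s ≤ 0 → ∀ d : ℝ, 0 ≤ d →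
      (A * B + A' * B' - d) * K + (A * B' + A' * B + d) * K' ≤
        (A * B + A' * B') * K + (A * B' + A' * B) * K' := by
    intro h d hd
    nlinarith [mul_nonneg hd (sub_nonneg.2 (hle h))]
  have m1 := minmax1 A A' B B'
  have m2 := minmax2 A A' B B'
  have m3 := minmax3 A A' B B'
  have m4 := minmax4 A A' B B'
  set d := max 0 (-((A - A') * (B - B'))) with hd
  set d' := max 0 ((A - A') * (B - B')) with hd'
  have d0 : 0 ≤ d := le_max_left _ _
  have d0' : 0 ≤ d' := le_max_left _ _
  have d1 : -((A - A') * (B - B')) ≤ d := le_max_right _ _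
  have d1' : ((A - A') * (B - B')) ≤ d' := le_max_right _ _
  have concl1 : 0 ≤ p * s → (A * B + A' * B' + d) * K + (A * B' + A' * B - d) * K' =
        (A * B + A' * B') * K + (A * B' + A' * B) * K' → 0 ≤ p * (A - A') * (s * (B - B')) := by
    intro h hh
    have : p * (A - A') * (s * (B - B')) = (p * s) * ((A - A') * (B - B')) := by ring
    rw [this]
    rcases h.eq_or_lt with h0 | h0
    · rw [← h0]; simp
    · have h1 : d * (K' - K) = 0 := by linarith
      have h2 : d = 0 := by
        rcases mul_eq_zero.1 h1 with h2 | h2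
        · exact h2
        · linarith [hgt h0]
      apply mul_nonneg h; linarith
  have concl2 : p * s ≤ 0 → (A * B + A' * B' - d') * K + (A * B' + A' * B + d') * K' =
        (A * B + A' * B') * K + (A * B' + A' * B) * K' → 0 ≤ p * (A - A') * (s * (B - B')) := by
    intro h hh
    have : p * (A - A') * (s * (B - B')) = (-(p * s)) * (-((A - A') * (B - B'))) := by ring
    rw [this]
    rcases h.eq_or_lt with h0 | h0
    · rw [h0]; simp
    · have h1 : d' * (K - K') = 0 := by linarith
      have h2 : d' = 0 := by
        rcases mul_eq_zero.1 h1 with h2 | h2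
        · exact h2
        · linarith [hlt h0]
      apply mul_nonneg (by linarith); linarith
  split_ifs with c1 c2 c2
  · have h : 0 ≤ p * s := by
      have := mul_pos c1 c2
      have h2 : e * p * (e * s) = (e * e) * (p * s) := by ring
      rw [h2] at this
      exact (pos_of_mul_pos_right this hee.le).le
    rw [m1, m2]
    exact ⟨key1 h d d0, concl1 h⟩
  · have h : p * s ≤ 0 := by
      have := mul_nonpos_of_nonneg_of_nonpos c1.le (not_lt.1 c2)
      have h2 : e * p * (e * s) = (e * e) * (p * s) := by ring
      rw [h2] at this
      nlinarith
    rw [m4, m3]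
    exact ⟨key2 h d' d0', concl2 h⟩
  · have h : p * s ≤ 0 := by
      have := mul_nonpos_of_nonneg_of_nonpos c2.le (not_lt.1 c1)
      have h2 : e * s * (e * p) = (e * e) * (p * s) := by ring
      rw [h2] at this
      nlinarith
    rw [show min A A' * max B B' + max A A' * min B B' = max A A' * min B B' + min A A' * max B B' by ring,
      show min A A' * min B B' + max A A' * max B B' = max A A' * max B B' + min A A' * min B B' by ring,
      m4, m3]
    exact ⟨key2 h d' d0', concl2 h⟩
  · have h : 0 ≤ p * s := by
      have := mul_nonneg_of_nonpos_of_nonpos (not_lt.1 c1) (not_lt.1 c2)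
      have h2 : e * p * (e * s) = (e * e) * (p * s) := by ring
      rw [h2] at this
      exact nonneg_of_mul_nonneg_right this hee
    rw [show min A A' * min B B' + max A A' * max B B' = max A A' * max B B' + min A A' * min B B' by ring,
      show min A A' * max B B' + max A A' * min B B' = max A A' * min B B' + min A A' * max B B' by ring,
      m1, m2]
    exact ⟨key1 h d d0, concl1 h⟩

theorem DD_pol_le {n : ℕ} (hn : 1 ≤ n) {μ : ℝ} (hμ : 0 < μ) (a : EE n) {R e : ℝ} (hR : 0 < R)
    (he : e ≠ 0) {f g : EE n → ℝ}
    (hf : ∀ x, 0 ≤ f x) (hg : ∀ x, 0 ≤ g x) (hfm : Measurable f) (hgm : Measurable g) :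
    DD μ (pol μ a R e f) (pol μ a R e g) ≤ DD μ f g := by
  have h1 := DD_four hn μ a hR hf hg hfm hgm
  have h2 := DD_four hn μ a hR (pol_nonneg μ a (e := e) hR hf) (pol_nonneg μ a (e := e) hR hg)
    (measurable_pol μ a R e hfm) (measurable_pol μ a R e hgm)
  have : 4 * DD μ (pol μ a R e f) (pol μ a R e g) ≤ 4 * DD μ f g := by
    rw [← h1, ← h2]
    apply lintegral_mono_ae
    filter_upwards [ae_ne hn a] with x hx
    apply lintegral_mono
    intro y
    exact ENNReal.ofReal_le_ofReal (BB_pol hμ a hR he f g hx).1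
  rwa [ENNReal.mul_le_mul_iff_right (by norm_num) (by norm_num)] at this

theorem DD_pol_eq {n : ℕ} (hn : 1 ≤ n) {μ : ℝ} (hμ : 0 < μ) (a : EE n) {R e : ℝ} (hR : 0 < R)
    (he : e ≠ 0) {f g : EE n → ℝ}
    (hf : ∀ x, 0 ≤ f x) (hg : ∀ x, 0 ≤ g x) (hfm : Measurable f) (hgm : Measurable g)
    (hfin : DD μ f g ≠ ∞) (heq : DD μ f g ≤ DD μ (pol μ a R e f) (pol μ a R e g)) :
    ∀ᵐ x : EE n, ∀ᵐ y : EE n, 0 ≤ ((dist x a ^ 2 - R ^ 2) * (f x - refl μ a R f x)) *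
        ((dist y a ^ 2 - R ^ 2) * (g y - refl μ a R g y)) := by
  have h1 := DD_four hn μ a hR hf hg hfm hgm
  have pf := pol_nonneg μ a (e := e) hR hf
  have pg := pol_nonneg μ a (e := e) hR hg
  have h2 := DD_four hn μ a hR pf pg
    (measurable_pol μ a R e hfm) (measurable_pol μ a R e hgm)
  have mB := (measurable_BB μ a R hfm hgm).ennreal_ofReal
  have mP := (measurable_BB μ a R (measurable_pol μ a R e hfm) (measurable_pol μ a R e hgm)).ennreal_ofReal
  have hle := DD_pol_le hn hμ a hR he hf hg hfm hgm
  have hfin1 : ∫⁻ x, ∫⁻ y, ENNReal.ofReal (BB μ a R f g x y) ≠ ∞ := by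
    rw [h1]; exact ENNReal.mul_ne_top (by norm_num) hfin
  have hfin2 : ∫⁻ x, ∫⁻ y, ENNReal.ofReal (BB μ a R (pol μ a R e f) (pol μ a R e g) x y) ≠ ∞ := by
    rw [h2]; exact ENNReal.mul_ne_top (by norm_num) (ne_top_of_le_ne_top hfin hle)
  have ale : (fun x => ∫⁻ y, ENNReal.ofReal (BB μ a R (pol μ a R e f) (pol μ a R e g) x y)) ≤ᵐ[volume]
      (fun x => ∫⁻ y, ENNReal.ofReal (BB μ a R f g x y)) := by
    filter_upwards [ae_ne hn a] with x hx
    apply lintegral_mono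
    intro y
    exact ENNReal.ofReal_le_ofReal (BB_pol hμ a hR he f g hx).1
  have aeq := ae_eq_of_ae_le_of_lintegral_le ale hfin2 (mB.lintegral_prod_right').aemeasurable
    (by rw [h1, h2]; gcongr)
  have afin := ae_lt_top (mP.lintegral_prod_right') hfin2
  filter_upwards [aeq, afin, ae_ne hn a] with x hx hx2 hxa
  have ale2 : (fun y => ENNReal.ofReal (BB μ a R (pol μ a R e f) (pol μ a R e g) x y)) ≤ᵐ[volume]
      (fun y => ENNReal.ofReal (BB μ a R f g x y)) :=
    Filter.Eventually.of_forall fun y => ENNReal.ofReal_le_ofReal (BB_pol hμ a hR he f g hxa).1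
  have aeq2 := ae_eq_of_ae_le_of_lintegral_le ale2 hx2.ne
    (mB.comp (measurable_prodMk_left (x := x))).aemeasurable hx.symm.le
  filter_upwards [aeq2] with y hy
  refine (BB_pol hμ a hR he f g hxa).2 ?_
  rwa [ENNReal.ofReal_eq_ofReal_iff (BB_nonneg μ a hR pf pg x y) (BB_nonneg μ a hR hf hg x y)] at hy

end RHLS

namespace RHLS
open EuclideanGeometry

noncomputable def ww {n : ℕ} (x : EE n) : ℝ := (1 + ‖x‖ ^ 2)⁻¹

lemma ww_pos {n : ℕ} (x : EE n) : 0 < ww x := by unfold ww; positivity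

lemma ww_le_one {n : ℕ} (x : EE n) : ww x ≤ 1 := by
  unfold ww
  apply inv_le_one_of_one_le₀
  nlinarith [sq_nonneg ‖x‖]

lemma continuous_ww {n : ℕ} : Continuous (ww : EE n → ℝ) := by
  unfold ww
  exact Continuous.inv₀ (by fun_prop) (fun x => by positivity)

lemma continuous_ww_rpow {n : ℕ} (c : ℝ) : Continuous (fun x : EE n => ww x ^ c) :=
  continuous_ww.rpow_const (fun x => Or.inl (ww_pos x).ne')

lemma measurable_ww {n : ℕ} : Measurable (ww : EE n → ℝ) := continuous_ww.measurable

lemma integrable_ww {n : ℕ} {c : ℝ} (hc : (n : ℝ) < 2 * c) :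
    Integrable (fun x : EE n => ww x ^ c) := by
  have := integrable_rpow_neg_one_add_norm_sq (E := EE n) (μ := volume) (r := 2 * c)
    (by simpa using hc)
  refine this.congr (Filter.Eventually.of_forall fun x => ?_)
  simp only [ww]
  rw [Real.inv_rpow (by positivity), ← Real.rpow_neg (by positivity)]
  congr 1; ring

lemma dist_bound {n : ℕ} {μ : ℝ} (hμ : 0 < μ) (x y : EE n) :
    dist x y ^ μ ≤ (2 * (1 + ‖x‖ ^ 2)) ^ (μ / 2) * ww y ^ (-(μ / 2)) := by
  rw [dist_rpow_eq, ww, Real.inv_rpow (by positivity), Real.rpow_neg (by positivity), inv_inv,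
    ← Real.mul_rpow (by positivity) (by positivity)]
  apply Real.rpow_le_rpow (by positivity) _ (by positivity)
  have h : dist x y ≤ ‖x‖ + ‖y‖ := by rw [dist_eq_norm]; exact norm_sub_le x y
  have h0 := dist_nonneg (x := x) (y := y)
  have h1 : dist x y ^ 2 ≤ (‖x‖ + ‖y‖) ^ 2 := by gcongr
  nlinarith [sq_nonneg (‖x‖ - ‖y‖), mul_nonneg (sq_nonneg ‖x‖) (sq_nonneg ‖y‖)]

noncomputable def pot {n : ℕ} (μ : ℝ) (f : EE n → ℝ) (x : EE n) : ℝ := ∫ y, dist x y ^ μ * f y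

structure Good {n : ℕ} (μ : ℝ) (f : EE n → ℝ) : Prop where
  meas : Measurable f
  nonneg : ∀ x, 0 ≤ f x
  int : Integrable (fun y => ww y ^ (-(μ / 2)) * f y)

lemma Good.integrable {n : ℕ} {μ : ℝ} (hμ : 0 < μ) {f : EE n → ℝ} (h : Good μ f) (x : EE n) :
    Integrable (fun y => dist x y ^ μ * f y) := by
  have := h.meas
  refine (h.int.const_mul ((2 * (1 + ‖x‖ ^ 2)) ^ (μ / 2))).mono'
    (Measurable.aestronglyMeasurable (by fun_prop)) (Filter.Eventually.of_forall fun y => ?_)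
  have h0 : 0 ≤ dist x y ^ μ := Real.rpow_nonneg dist_nonneg _
  rw [Real.norm_of_nonneg (mul_nonneg h0 (h.nonneg y)), ← mul_assoc]
  exact mul_le_mul_of_nonneg_right (dist_bound hμ x y) (h.nonneg y)

lemma Good.integrable_self {n : ℕ} {μ : ℝ} (hμ : 0 < μ) {f : EE n → ℝ} (h : Good μ f) :
    Integrable f := by
  refine h.int.mono' h.meas.aestronglyMeasurable (Filter.Eventually.of_forall fun y => ?_)
  rw [Real.norm_of_nonneg (h.nonneg y)]
  refine le_mul_of_one_le_left (h.nonneg y) ?_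
  exact Real.one_le_rpow_of_pos_of_le_one_of_nonpos (ww_pos y) (ww_le_one y) (by linarith)

/-- uniform continuity of potentials with a dominating function -/
lemma Good.tendsto_diff {n : ℕ} {μ : ℝ} (hμ : 0 < μ) {f : EE n → ℝ} (h : Good μ f)
    {ι : Type*} {l : Filter ι} [l.IsCountablyGenerated] {c : ι → ℝ} {c0 : ℝ} {z : ι → EE n} {z0 : EE n}
    (hc : Filter.Tendsto c l (nhds c0)) (hz : Filter.Tendsto z l (nhds z0)) :
    Filter.Tendsto (fun i => ∫ y, |c i * dist (z i) y ^ μ - c0 * dist z0 y ^ μ| * f y) l (nhds 0) := by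
  have hm := h.meas
  have e : (0 : ℝ) = ∫ y : EE n, (0 : ℝ) := by simp
  rw [e]
  have hc' : ∀ᶠ i in l, |c i| ≤ |c0| + 1 :=
    (hc.abs).eventually (eventually_le_nhds (by linarith))
  have hz' : ∀ᶠ i in l, ‖z i‖ ≤ ‖z0‖ + 1 :=
    (hz.norm).eventually (eventually_le_nhds (by linarith))
  refine tendsto_integral_filter_of_dominated_convergence
    (fun y => (2 * (|c0| + 1) * (2 * (1 + (‖z0‖ + 1) ^ 2)) ^ (μ / 2)) * (ww y ^ (-(μ / 2)) * f y))
    ?_ ?_ (h.int.const_mul _) ?_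
  · exact Filter.Eventually.of_forall fun i => Measurable.aestronglyMeasurable (by fun_prop)
  · filter_upwards [hc', hz'] with i hi1 hi2
    refine Filter.Eventually.of_forall fun y => ?_
    have hf := h.nonneg y
    rw [Real.norm_of_nonneg (by positivity), ← mul_assoc]
    refine mul_le_mul_of_nonneg_right ?_ hf
    have hw : 0 < ww y ^ (-(μ / 2)) := Real.rpow_pos_of_pos (ww_pos y) _
    have b1 : dist (z i) y ^ μ ≤ (2 * (1 + (‖z0‖ + 1) ^ 2)) ^ (μ / 2) * ww y ^ (-(μ / 2)) := by
      refine (dist_bound hμ _ y).trans ?_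
      gcongr
    have b2 : dist z0 y ^ μ ≤ (2 * (1 + (‖z0‖ + 1) ^ 2)) ^ (μ / 2) * ww y ^ (-(μ / 2)) := by
      refine (dist_bound hμ _ y).trans ?_
      gcongr
      linarith
    have b3 : 0 ≤ dist (z i) y ^ μ := Real.rpow_nonneg dist_nonneg _
    have b4 : 0 ≤ dist z0 y ^ μ := Real.rpow_nonneg dist_nonneg _
    set X := (2 * (1 + (‖z0‖ + 1) ^ 2)) ^ (μ / 2) * ww y ^ (-(μ / 2)) with hX
    calc |c i * dist (z i) y ^ μ - c0 * dist z0 y ^ μ| ≤ |c i * dist (z i) y ^ μ| + |c0 * dist z0 y ^ μ| :=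
          abs_sub _ _
      _ = |c i| * dist (z i) y ^ μ + |c0| * dist z0 y ^ μ := by
          rw [abs_mul, abs_mul, abs_of_nonneg b3, abs_of_nonneg b4]
      _ ≤ (|c0| + 1) * X + (|c0| + 1) * X := by
          have := abs_nonneg c0
          gcongr
          linarith
      _ = 2 * (|c0| + 1) * (2 * (1 + (‖z0‖ + 1) ^ 2)) ^ (μ / 2) * ww y ^ (-(μ / 2)) := by
          rw [hX]; ring
  · refine Filter.Eventually.of_forall fun y => ?_
    have t1 : Filter.Tendsto (fun i => dist (z i) y ^ μ) l (nhds (dist z0 y ^ μ)) :=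
      (hz.dist tendsto_const_nhds).rpow_const (Or.inr hμ.le)
    have t2 := (((hc.mul t1).sub (tendsto_const_nhds (x := c0 * dist z0 y ^ μ))).abs).mul_const (f y)
    simpa using t2

lemma Good.continuous {n : ℕ} {μ : ℝ} (hμ : 0 < μ) {f : EE n → ℝ} (h : Good μ f) :
    Continuous (pot μ f) := by
  rw [continuous_iff_continuousAt]
  intro x
  have hd := h.tendsto_diff hμ (l := nhds x) (c := fun _ => 1) (c0 := 1) (z := fun y => y) (z0 := x)
    tendsto_const_nhds Filter.tendsto_id
  rw [ContinuousAt, tendsto_iff_norm_sub_tendsto_zero]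
  refine squeeze_zero (fun _ => norm_nonneg _) (fun y => ?_) hd
  unfold pot
  rw [← integral_sub (h.integrable hμ y) (h.integrable hμ x)]
  refine (norm_integral_le_integral_norm _).trans (le_of_eq ?_)
  congr 1; ext z
  rw [← sub_mul, norm_mul, Real.norm_of_nonneg (h.nonneg z)]
  simp

lemma pot_nonneg {n : ℕ} {μ : ℝ} {f : EE n → ℝ} (h : ∀ x, 0 ≤ f x) (x : EE n) : 0 ≤ pot μ f x :=
  integral_nonneg fun y => mul_nonneg (Real.rpow_nonneg dist_nonneg _) (h y)

/-- the conformal weight -/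
lemma Jw_formula {n : ℕ} (a : EE n) {R : ℝ} (hR : 0 < R) {x : EE n} (hx : x ≠ a) :
    J a R x * ww (inversion a R x) =
      (1 + ‖x‖ ^ 2 + (1 + ‖a‖ ^ 2 - R ^ 2) * (dist x a ^ 2 - R ^ 2) / R ^ 2)⁻¹ := by
  have h := sq_formula a hR hx 0
  have hJ := J_pos (a := a) hR x
  have hd := dist_pos.2 hx
  rw [dist_zero_right, dist_zero_right, dist_zero_left] at h
  unfold ww
  rw [← inv_inv (J a R x), ← mul_inv]
  congr 1
  rw [mul_add, h, J_of_ne hx]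
  field_simp
  ring

lemma Jw_pos {n : ℕ} (a : EE n) {R : ℝ} (hR : 0 < R) (x : EE n) :
    0 < J a R x * ww (inversion a R x) := mul_pos (J_pos hR x) (ww_pos _)

lemma Jw_le {n : ℕ} (a : EE n) {R : ℝ} (hR : 0 < R) {x : EE n}
    (h : 0 ≤ (1 + ‖a‖ ^ 2 - R ^ 2) * (dist x a ^ 2 - R ^ 2)) :
    J a R x * ww (inversion a R x) ≤ ww x := by
  by_cases hx : x = a
  · subst hx; simp [J]
  rw [Jw_formula a hR hx, ww]
  have : 0 ≤ (1 + ‖a‖ ^ 2 - R ^ 2) * (dist x a ^ 2 - R ^ 2) / R ^ 2 := by positivity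
  apply inv_anti₀ (by positivity); linarith

lemma Jw_lt {n : ℕ} (a : EE n) {R : ℝ} (hR : 0 < R) {x : EE n} (hx : x ≠ a)
    (h : 0 < (1 + ‖a‖ ^ 2 - R ^ 2) * (dist x a ^ 2 - R ^ 2)) :
    J a R x * ww (inversion a R x) < ww x := by
  rw [Jw_formula a hR hx, ww]
  have : 0 < (1 + ‖a‖ ^ 2 - R ^ 2) * (dist x a ^ 2 - R ^ 2) / R ^ 2 := by positivity
  apply inv_strictAnti₀ (by positivity); linarith

lemma Jw_ge {n : ℕ} (a : EE n) {R : ℝ} (hR : 0 < R) {x : EE n}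
    (h : (1 + ‖a‖ ^ 2 - R ^ 2) * (dist x a ^ 2 - R ^ 2) ≤ 0) :
    ww x ≤ J a R x * ww (inversion a R x) := by
  by_cases hx : x = a
  · subst hx; simp [J]
  have hp := Jw_pos a hR x
  rw [Jw_formula a hR hx] at hp ⊢
  rw [ww]
  have : (1 + ‖a‖ ^ 2 - R ^ 2) * (dist x a ^ 2 - R ^ 2) / R ^ 2 ≤ 0 :=
    div_nonpos_of_nonpos_of_nonneg h (by positivity)
  apply inv_anti₀ (inv_pos.1 hp); linarith

lemma Jw_gt {n : ℕ} (a : EE n) {R : ℝ} (hR : 0 < R) {x : EE n} (hx : x ≠ a)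
    (h : (1 + ‖a‖ ^ 2 - R ^ 2) * (dist x a ^ 2 - R ^ 2) < 0) :
    ww x < J a R x * ww (inversion a R x) := by
  have hp := Jw_pos a hR x
  rw [Jw_formula a hR hx] at hp ⊢
  rw [ww]
  have : (1 + ‖a‖ ^ 2 - R ^ 2) * (dist x a ^ 2 - R ^ 2) / R ^ 2 < 0 :=
    div_neg_of_neg_of_pos h (by positivity)
  apply inv_strictAnti₀ (inv_pos.1 hp); linarith

/-- the standard bubble is good -/
noncomputable def bub {n : ℕ} (μ : ℝ) (x : EE n) : ℝ := ww x ^ ((n : ℝ) + μ / 2)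

lemma bub_pos {n : ℕ} (μ : ℝ) (x : EE n) : 0 < bub μ x := Real.rpow_pos_of_pos (ww_pos x) _

lemma measurable_bub {n : ℕ} (μ : ℝ) : Measurable (bub μ : EE n → ℝ) :=
  (continuous_ww_rpow _).measurable

lemma bub_good {n : ℕ} (hn : 1 ≤ n) (μ : ℝ) : Good μ (bub μ : EE n → ℝ) := by
  refine ⟨measurable_bub μ, fun x => (bub_pos μ x).le, ?_⟩
  have hn' : (1 : ℝ) ≤ n := by exact_mod_cast hn
  refine (integrable_ww (n := n) (c := n) (by linarith)).congr (Filter.Eventually.of_forall fun x => ?_)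
  simp only [bub]
  rw [← Real.rpow_add (ww_pos x)]; congr 1; ring

lemma refl_bub {n : ℕ} (μ : ℝ) (a : EE n) {R : ℝ} (hR : 0 < R) (x : EE n) :
    refl μ a R (bub μ) x = (J a R x * ww (inversion a R x)) ^ ((n : ℝ) + μ / 2) := by
  rw [refl, bub, Real.mul_rpow (J_pos hR x).le (ww_pos _).le]

lemma refl_mono {n : ℕ} (μ : ℝ) (a : EE n) {R : ℝ} (hR : 0 < R) {f g : EE n → ℝ}
    (h : ∀ x, f x ≤ g x) (x : EE n) : refl μ a R f x ≤ refl μ a R g x :=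
  mul_le_mul_of_nonneg_left (h _) (Real.rpow_nonneg (J_pos hR x).le _)

structure Cls {n : ℕ} (μ m : ℝ) (f : EE n → ℝ) : Prop where
  meas : Measurable f
  lower : ∀ x, m * bub μ x ≤ f x
  upper : ∀ x, f x ≤ bub μ x

lemma Cls.nonneg {n : ℕ} {μ m : ℝ} (hm : 0 ≤ m) {f : EE n → ℝ} (h : Cls μ m f) (x : EE n) :
    0 ≤ f x := (mul_nonneg hm (bub_pos μ x).le).trans (h.lower x)

lemma Cls.good {n : ℕ} (hn : 1 ≤ n) {μ m : ℝ} (hm : 0 ≤ m) {f : EE n → ℝ} (h : Cls μ m f) :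
    Good μ f := by
  refine ⟨h.meas, h.nonneg hm, ?_⟩
  have hmm := h.meas
  have hw := measurable_ww (n := n)
  refine (bub_good hn μ).int.mono' (Measurable.aestronglyMeasurable (by fun_prop))
    (Filter.Eventually.of_forall fun x => ?_)
  have := Real.rpow_nonneg (ww_pos x).le (-(μ / 2))
  rw [Real.norm_of_nonneg (mul_nonneg this (h.nonneg hm x))]
  exact mul_le_mul_of_nonneg_left (h.upper x) this

lemma Cls.pol {n : ℕ} {μ m : ℝ} (hμ : 0 < μ) (hm : 0 < m) {f : EE n → ℝ} (h : Cls μ m f)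
    (a : EE n) {R : ℝ} (hR : 0 < R) :
    Cls μ m (pol μ a R (1 + ‖a‖ ^ 2 - R ^ 2) f) := by
  have hb : 0 ≤ (n : ℝ) + μ / 2 := by positivity
  refine ⟨measurable_pol _ _ _ _ h.meas, fun x => ?_, fun x => ?_⟩
  · unfold RHLS.pol
    split_ifs with c
    · exact le_max_of_le_left (h.lower x)
    · refine le_min (h.lower x) ?_
      have h1 := refl_mono μ a hR h.lower x
      refine le_trans ?_ h1
      have : refl μ a R (fun x => m * bub μ x) x = m * refl μ a R (bub μ) x := by
        simp only [refl]; ring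
      rw [this, refl_bub μ a hR, bub]
      exact mul_le_mul_of_nonneg_left
        (Real.rpow_le_rpow (ww_pos x).le (Jw_ge a hR (not_lt.1 c)) hb) hm.le
  · unfold RHLS.pol
    split_ifs with c
    · refine max_le (h.upper x) ?_
      refine (refl_mono μ a hR h.upper x).trans ?_
      rw [refl_bub μ a hR, bub]
      exact Real.rpow_le_rpow (Jw_pos a hR x).le (Jw_le a hR c.le) hb
    · exact min_le_of_left_le (h.upper x)

end RHLS

namespace RHLS
open EuclideanGeometry

/-- subcritical functional -/
noncomputable def TT {n : ℕ} (μ r : ℝ) (f : EE n → ℝ) : ℝ :=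
  ∫ x, f x ^ r * ww x ^ ((n : ℝ) - r * ((n : ℝ) + μ / 2))

lemma TT_le_ww {n : ℕ} {μ r m : ℝ} (hr : 0 < r) (hm : 0 < m) {f : EE n → ℝ} (h : Cls μ m f)
    (x : EE n) : f x ^ r * ww x ^ ((n : ℝ) - r * ((n : ℝ) + μ / 2)) ≤ ww x ^ (n : ℝ) := by
  have h1 : f x ^ r ≤ bub μ x ^ r := Real.rpow_le_rpow (h.nonneg hm.le x) (h.upper x) hr.le
  have h2 : bub μ x ^ r * ww x ^ ((n : ℝ) - r * ((n : ℝ) + μ / 2)) = ww x ^ (n : ℝ) := by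
    rw [bub, ← Real.rpow_mul (ww_pos x).le, ← Real.rpow_add (ww_pos x)]
    congr 1; ring
  rw [← h2]
  exact mul_le_mul_of_nonneg_right h1 (Real.rpow_nonneg (ww_pos x).le _)

lemma integrable_wwn {n : ℕ} (hn : 1 ≤ n) : Integrable (fun x : EE n => ww x ^ (n : ℝ)) := by
  have hn' : (1 : ℝ) ≤ n := by exact_mod_cast hn
  exact integrable_ww (by linarith)

lemma TT_int {n : ℕ} (hn : 1 ≤ n) {μ r m : ℝ} (hr : 0 < r) (hm : 0 < m) {f : EE n → ℝ}
    (h : Cls μ m f) :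
    Integrable (fun x => f x ^ r * ww x ^ ((n : ℝ) - r * ((n : ℝ) + μ / 2))) := by
  have hmm := h.meas
  have hw := measurable_ww (n := n)
  refine (integrable_wwn hn).mono' (Measurable.aestronglyMeasurable (by fun_prop))
    (Filter.Eventually.of_forall fun x => ?_)
  rw [Real.norm_of_nonneg (mul_nonneg (Real.rpow_nonneg (h.nonneg hm.le x) _)
    (Real.rpow_nonneg (ww_pos x).le _))]
  exact TT_le_ww hr hm h x

/-- the reflected weight -/
noncomputable def VV {n : ℕ} (ε : ℝ) (a : EE n) (R : ℝ) (x : EE n) : ℝ :=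
  (J a R x * ww (inversion a R x)) ^ ε

lemma measurable_VV {n : ℕ} (ε : ℝ) (a : EE n) (R : ℝ) : Measurable (VV ε a R) :=
  ((measurable_J a R).mul (measurable_ww.comp (measurable_inversion a R))).pow_const _

lemma TT_point {n : ℕ} (μ r : ℝ) (a : EE n) {R : ℝ} (hR : 0 < R) {f : EE n → ℝ}
    (hf : ∀ x, 0 ≤ f x) (x : EE n) :
    J a R x ^ n * (f (inversion a R x) ^ r *
      ww (inversion a R x) ^ ((n : ℝ) - r * ((n : ℝ) + μ / 2))) =
    refl μ a R f x ^ r * VV ((n : ℝ) - r * ((n : ℝ) + μ / 2)) a R x := by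
  have hJ := J_pos (a := a) hR x
  rw [refl, VV, Real.mul_rpow (Real.rpow_nonneg hJ.le _) (hf _), Real.mul_rpow hJ.le (ww_pos _).le,
    ← Real.rpow_mul hJ.le, ← Real.rpow_natCast]
  have : J a R x ^ (n : ℝ) = J a R x ^ (((n : ℝ) + μ / 2) * r) *
      J a R x ^ ((n : ℝ) - r * ((n : ℝ) + μ / 2)) := by
    rw [← Real.rpow_add hJ]; congr 1; ring
  rw [this]; ring

lemma rpow_tangent {r : ℝ} (hr : 0 < r) (hr1 : r < 1) {x y B : ℝ} (hx : 0 ≤ x) (hxy : x ≤ y)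
    (hy : 0 < y) (hB : y ≤ B) : r * B ^ (r - 1) * (y - x) ≤ y ^ r - x ^ r := by
  have h1 : x ^ r ≤ y ^ r + r * y ^ (r - 1) * (x - y) := by
    have := rpow_one_add_le_one_add_mul_self (s := x / y - 1) (p := r)
      (by have : 0 ≤ x / y := by positivity
          linarith) hr.le hr1.le
    rw [show 1 + (x / y - 1) = x / y by ring, Real.div_rpow hx hy.le, div_le_iff₀ (by positivity)] at this
    refine this.trans (le_of_eq ?_)
    rw [Real.rpow_sub_one hy.ne']
    field_simp
  have h2 : B ^ (r - 1) ≤ y ^ (r - 1) := Real.rpow_le_rpow_of_nonpos hy hB (by linarith)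
  have h3 : r * B ^ (r - 1) * (y - x) ≤ r * y ^ (r - 1) * (y - x) := by
    apply mul_le_mul_of_nonneg_right _ (by linarith)
    exact mul_le_mul_of_nonneg_left h2 hr.le
  linarith

noncomputable def thet {n : ℕ} (μ r : ℝ) (a : EE n) (R : ℝ) (x : EE n) : ℝ :=
  r * bub μ x ^ (r - 1) * |ww x ^ ((n : ℝ) - r * ((n : ℝ) + μ / 2)) -
    VV ((n : ℝ) - r * ((n : ℝ) + μ / 2)) a R x|

lemma measurable_thet {n : ℕ} (μ r : ℝ) (a : EE n) (R : ℝ) : Measurable (thet μ r a R) := by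
  have h1 := measurable_VV ((n : ℝ) - r * ((n : ℝ) + μ / 2)) a R
  have h2 := measurable_ww (n := n)
  have h3 := measurable_bub (n := n) μ
  unfold thet
  exact ((h3.pow_const _).const_mul r).mul ((h2.pow_const _).sub h1).abs

lemma thet_nonneg {n : ℕ} {μ r : ℝ} (hr : 0 < r) (a : EE n) (R : ℝ) (x : EE n) :
    0 ≤ thet μ r a R x := by
  unfold thet
  have := Real.rpow_nonneg (bub_pos μ x).le (r - 1)
  positivity

lemma thet_pos {n : ℕ} (hn : 1 ≤ n) {μ r : ℝ} (hr : 0 < r)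
    (hε : r * ((n : ℝ) + μ / 2) < n) (a : EE n) {R : ℝ} (hR : 0 < R)
    (he : 1 + ‖a‖ ^ 2 - R ^ 2 ≠ 0) : ∀ᵐ x : EE n, 0 < thet μ r a R x := by
  haveI := nontriv hn
  have h1 : ∀ᵐ x : EE n, x ∉ Metric.sphere a R := by
    have : volume (Metric.sphere a R) = 0 := Measure.addHaar_sphere _ _ _
    exact measure_eq_zero_iff_ae_notMem.1 this
  filter_upwards [h1, ae_ne hn a] with x hx hxa
  have hd : dist x a ^ 2 - R ^ 2 ≠ 0 := by
    intro h0
    apply hx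
    rw [Metric.mem_sphere]
    have : dist x a ^ 2 = R ^ 2 := by linarith
    exact (pow_left_inj₀ dist_nonneg hR.le two_ne_zero).1 this
  have hne : J a R x * ww (inversion a R x) ≠ ww x := by
    rcases lt_or_gt_of_ne (mul_ne_zero he hd) with h | h
    · exact (Jw_gt a hR hxa h).ne'
    · exact (Jw_lt a hR hxa h).ne
  have hV : ww x ^ ((n : ℝ) - r * ((n : ℝ) + μ / 2)) - VV ((n : ℝ) - r * ((n : ℝ) + μ / 2)) a R x ≠ 0 := by
    rw [sub_ne_zero, VV]
    intro h
    exact hne (Real.rpow_left_injOn (x := (n : ℝ) - r * ((n : ℝ) + μ / 2)) (by linarith)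
      (ww_pos x).le (Jw_pos a hR x).le h).symm
  unfold thet
  have := Real.rpow_pos_of_pos (bub_pos μ x) (r - 1)
  have := abs_pos.2 hV
  positivity

lemma TT_pol {n : ℕ} (hn : 1 ≤ n) {μ r m : ℝ} (hμ : 0 < μ) (hr : 0 < r) (hr1 : r < 1)
    (hε : r * ((n : ℝ) + μ / 2) < n) (hm : 0 < m) {f : EE n → ℝ} (h : Cls μ m f)
    (a : EE n) {R : ℝ} (hR : 0 < R) (he : 1 + ‖a‖ ^ 2 - R ^ 2 ≠ 0) :
    Integrable (fun x => thet μ r a R x * |pol μ a R (1 + ‖a‖ ^ 2 - R ^ 2) f x - f x|) ∧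
    ∫ x, thet μ r a R x * |pol μ a R (1 + ‖a‖ ^ 2 - R ^ 2) f x - f x| ≤
      2 * (TT μ r (pol μ a R (1 + ‖a‖ ^ 2 - R ^ 2) f) - TT μ r f) := by
  set e := 1 + ‖a‖ ^ 2 - R ^ 2 with hedef
  set P := pol μ a R e f with hP
  have hC : Cls μ m P := h.pol hμ hm a hR
  set ε := (n : ℝ) - r * ((n : ℝ) + μ / 2) with hεd
  have hε0 : 0 < ε := by linarith
  have i1 := TT_int hn hr hm h
  have i2 := TT_int hn hr hm hC
  have j1 := (integrable_inv hn a hR _).1 i1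
  have j2 := (integrable_inv hn a hR _).1 i2
  have e1 := integral_inv hn a hR (fun x => f x ^ r * ww x ^ ((n : ℝ) - r * ((n : ℝ) + μ / 2)))
  have e2 := integral_inv hn a hR (fun x => P x ^ r * ww x ^ ((n : ℝ) - r * ((n : ℝ) + μ / 2)))
  simp only [TT_point μ r a hR (h.nonneg hm.le)] at j1 e1
  simp only [TT_point μ r a hR (hC.nonneg hm.le)] at j2 e2
  rw [← hεd] at *
  have key : ∀ x, (P x ^ r - f x ^ r) * (ww x ^ ε - VV ε a R x) =
      (P x ^ r * ww x ^ ε + refl μ a R P x ^ r * VV ε a R x) -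
      (f x ^ r * ww x ^ ε + refl μ a R f x ^ r * VV ε a R x) := by
    intro x
    have := pol_sum μ a hR he f x (fun t : ℝ => t ^ r)
    simp only [← hP] at this
    have h2 : refl μ a R P x ^ r = f x ^ r + refl μ a R f x ^ r - P x ^ r := by linarith
    rw [h2]; ring
  have hIntg : Integrable (fun x => (P x ^ r - f x ^ r) * (ww x ^ ε - VV ε a R x)) := by
    simp only [key]
    exact (i2.add j2).sub (i1.add j1)
  have hval : ∫ x, (P x ^ r - f x ^ r) * (ww x ^ ε - VV ε a R x) = 2 * (TT μ r P - TT μ r f) := by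
    simp only [key]
    have q1 := integral_sub (i2.add j2) (i1.add j1)
    have q2 := integral_add i2 j2
    have q3 := integral_add i1 j1
    simp only [Pi.add_apply] at q1 q2 q3
    rw [q1, q2, q3, ← e1, ← e2]
    simp only [TT]; rw [← hεd]; ring
  have hle : ∀ x, thet μ r a R x * |P x - f x| ≤ (P x ^ r - f x ^ r) * (ww x ^ ε - VV ε a R x) := by
    intro x
    rw [thet, ← hεd]
    have hfx : 0 < f x := (mul_pos hm (bub_pos μ x)).trans_le (h.lower x)
    have hPx : 0 < P x := (mul_pos hm (bub_pos μ x)).trans_le (hC.lower x)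
    by_cases c : 0 < e * (dist x a ^ 2 - R ^ 2)
    · have hle : f x ≤ P x := by rw [hP, pol, if_pos c]; exact le_max_left _ _
      have hV : VV ε a R x ≤ ww x ^ ε :=
        Real.rpow_le_rpow (Jw_pos a hR x).le (Jw_le a hR c.le) hε0.le
      rw [abs_of_nonneg (sub_nonneg.2 hV), abs_of_nonneg (sub_nonneg.2 hle)]
      have := rpow_tangent hr hr1 hfx.le hle hPx (hC.upper x)
      have := mul_le_mul_of_nonneg_right this (sub_nonneg.2 hV)
      linarith
    · have hle : P x ≤ f x := by rw [hP, pol, if_neg c]; exact min_le_left _ _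
      have hV : ww x ^ ε ≤ VV ε a R x :=
        Real.rpow_le_rpow (ww_pos x).le (Jw_ge a hR (not_lt.1 c)) hε0.le
      rw [abs_of_nonpos (sub_nonpos.2 hV), abs_of_nonpos (sub_nonpos.2 hle)]
      have := rpow_tangent hr hr1 hPx.le hle hfx (h.upper x)
      have := mul_le_mul_of_nonneg_right this (sub_nonneg.2 hV)
      linarith
  have hmeas : Measurable (fun x => thet μ r a R x * |P x - f x|) :=
    (measurable_thet μ r a R).mul (hC.meas.sub h.meas).abs
  have hI : Integrable (fun x => thet μ r a R x * |P x - f x|) := by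
    refine hIntg.mono' hmeas.aestronglyMeasurable (Filter.Eventually.of_forall fun x => ?_)
    rw [Real.norm_of_nonneg (mul_nonneg (thet_nonneg hr a R x) (abs_nonneg _))]
    exact hle x
  exact ⟨hI, hval ▸ integral_mono hI hIntg hle⟩

/-- convergence lemma -/
lemma conv_lemma {X : Type*} [MeasurableSpace X] {ν : Measure X} {θ κ w : X → ℝ}
    {h : ℕ → X → ℝ} (hθm : Measurable θ) (hκm : Measurable κ) (hhm : ∀ k, Measurable (h k))
    (hh0 : ∀ k x, 0 ≤ h k x) (hhw : ∀ k x, h k x ≤ w x) (hκ : ∀ x, 0 ≤ κ x) (hθ0 : ∀ x, 0 ≤ θ x)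
    (hθ : ∀ᵐ x ∂ν, 0 < θ x) (hκw : Integrable (fun x => κ x * w x) ν)
    (hIntg : ∀ k, Integrable (fun x => θ x * h k x) ν)
    (hlim : Filter.Tendsto (fun k => ∫ x, θ x * h k x ∂ν) Filter.atTop (nhds 0)) :
    Filter.Tendsto (fun k => ∫ x, κ x * h k x ∂ν) Filter.atTop (nhds 0) := by
  have hw : ∀ x, 0 ≤ w x := fun x => (hh0 0 x).trans (hhw 0 x)
  have hκh : ∀ k, Integrable (fun x => κ x * h k x) ν := by
    intro k
    refine hκw.mono' (hκm.mul (hhm k)).aestronglyMeasurable (Filter.Eventually.of_forall fun x => ?_)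
    rw [Real.norm_of_nonneg (mul_nonneg (hκ x) (hh0 k x))]
    exact mul_le_mul_of_nonneg_left (hhw k x) (hκ x)
  -- tail
  have htail : Filter.Tendsto (fun C : ℕ => ∫ x, {x | (C : ℝ) * θ x < κ x}.indicator
      (fun x => κ x * w x) x ∂ν) Filter.atTop (nhds 0) := by
    have e0 : (0 : ℝ) = ∫ x, (0 : ℝ) ∂ν := by simp
    rw [e0]
    refine tendsto_integral_of_dominated_convergence (fun x => κ x * w x) ?_ hκw ?_ ?_
    · intro C
      exact hκw.aestronglyMeasurable.indicator (measurableSet_lt (hθm.const_mul _) hκm)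
    · intro C
      refine Filter.Eventually.of_forall fun x => ?_
      have := mul_nonneg (hκ x) (hw x)
      by_cases hx : (C : ℝ) * θ x < κ x
      · rw [Set.indicator_of_mem (by exact hx), Real.norm_of_nonneg this]
      · rw [Set.indicator_of_notMem (by exact hx)]; simpa using this
    · filter_upwards [hθ] with x hx
      refine tendsto_const_nhds.congr' ?_
      obtain ⟨N, hN⟩ := exists_nat_ge (κ x / θ x)
      filter_upwards [Filter.eventually_ge_atTop N] with C hC
      rw [Set.indicator_of_notMem]
      simp only [Set.mem_ofPred_eq, not_lt]
      rw [div_le_iff₀ hx] at hN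
      refine hN.trans (mul_le_mul_of_nonneg_right (by exact_mod_cast hC) hx.le)
  rw [Metric.tendsto_atTop]
  intro δ hδ
  obtain ⟨C, hC⟩ := (htail.eventually (gt_mem_nhds (half_pos hδ))).exists
  have hlim2 : Filter.Tendsto (fun k => (C : ℝ) * ∫ x, θ x * h k x ∂ν) Filter.atTop (nhds 0) := by
    simpa using hlim.const_mul (C : ℝ)
  obtain ⟨N, hN⟩ := Filter.eventually_atTop.1 (hlim2.eventually (gt_mem_nhds (half_pos hδ)))
  refine ⟨N, fun k hk => ?_⟩
  have hpos : 0 ≤ ∫ x, κ x * h k x ∂ν := integral_nonneg fun x => mul_nonneg (hκ x) (hh0 k x)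
  rw [Real.dist_eq, sub_zero, abs_of_nonneg hpos]
  have hb : ∫ x, κ x * h k x ∂ν ≤ ∫ x, ((C : ℝ) * (θ x * h k x) + {x | (C : ℝ) * θ x < κ x}.indicator
      (fun x => κ x * w x) x) ∂ν := by
    refine integral_mono (hκh k) (((hIntg k).const_mul _).add
      (hκw.indicator (measurableSet_lt (hθm.const_mul _) hκm))) fun x => ?_
    by_cases hx : (C : ℝ) * θ x < κ x
    · simp only
      rw [Set.indicator_of_mem (by exact hx)]
      have h1 : κ x * h k x ≤ κ x * w x := mul_le_mul_of_nonneg_left (hhw k x) (hκ x)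
      have h2 : 0 ≤ (C : ℝ) * (θ x * h k x) :=
        mul_nonneg (Nat.cast_nonneg _) (mul_nonneg (hθ0 x) (hh0 k x))
      linarith
    · simp only
      rw [Set.indicator_of_notMem (by exact hx)]
      have := mul_le_mul_of_nonneg_right (not_lt.1 hx) (hh0 k x)
      linarith
  rw [integral_add ((hIntg k).const_mul _)
      (hκw.indicator (measurableSet_lt (hθm.const_mul _) hκm)), integral_const_mul] at hb
  have := hN k hk
  linarith

end RHLS

namespace RHLS
open EuclideanGeometry

lemma integrable_kap0 {n : ℕ} (hn : 1 ≤ n) {μ : ℝ} (hμ : 0 < μ) (a : EE n) {R : ℝ} (x : EE n) :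
    Integrable (fun y => |Ks μ a R x y - dist x y ^ μ| * bub μ y) := by
  have hb := bub_good hn μ (n := n)
  have i1 := (hb.integrable hμ (inversion a R x)).const_mul (J a R x ^ (-(μ / 2)))
  have i2 := hb.integrable hμ x
  refine (i1.sub i2).abs.congr (Filter.Eventually.of_forall fun y => ?_)
  simp only [Ks, Pi.sub_apply]
  rw [← mul_assoc, ← sub_mul, abs_mul, abs_of_pos (bub_pos μ y)]

lemma measurable_kap {n : ℕ} {μ : ℝ} (a : EE n) {R : ℝ} (x : EE n) :
    Measurable (fun y => |Ks μ a R x y - dist x y ^ μ|) := by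
  simp only [Ks]; fun_prop

lemma pol_diff_le {n : ℕ} {μ m : ℝ} {f g : EE n → ℝ} (hm : 0 ≤ m)
    (h : Cls μ m f) (hP : Cls μ m g) (y : EE n) : |g y - f y| ≤ bub μ y := by
  rw [abs_le]
  have := h.nonneg hm y
  have := h.upper y
  have := hP.nonneg hm y
  have := hP.upper y
  constructor <;> linarith

lemma integrable_kap {n : ℕ} (hn : 1 ≤ n) {μ m : ℝ} (hμ : 0 < μ) (a : EE n) {R : ℝ} (x : EE n)
    {f g : EE n → ℝ} (h : Cls μ m f) (hP : Cls μ m g) (hm : 0 ≤ m) :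
    Integrable (fun y => |Ks μ a R x y - dist x y ^ μ| * |g y - f y|) := by
  refine (integrable_kap0 hn hμ a x (R := R)).mono' ((measurable_kap a x).mul
    (hP.meas.sub h.meas).abs).aestronglyMeasurable (Filter.Eventually.of_forall fun y => ?_)
  rw [Real.norm_of_nonneg (by positivity)]
  exact mul_le_mul_of_nonneg_left (pol_diff_le hm h hP y) (abs_nonneg _)

lemma pot_diff_lower {n : ℕ} (hn : 1 ≤ n) {μ m : ℝ} (hμ : 0 < μ) (hm : 0 < m) {f : EE n → ℝ}
    (h : Cls μ m f) (a : EE n) {R : ℝ} (hR : 0 < R) {x : EE n} (hx : x ≠ a)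
    (hH : 0 < (1 + ‖a‖ ^ 2 - R ^ 2) * (dist x a ^ 2 - R ^ 2)) :
    - ∫ y, |Ks μ a R x y - dist x y ^ μ| * |pol μ a R (1 + ‖a‖ ^ 2 - R ^ 2) f y - f y| ≤
      2 * (J a R x ^ (-(μ / 2)) * pot μ f (inversion a R x) - pot μ f x) := by
  have hG := h.good hn hm.le
  have hb := bub_good hn μ (n := n)
  have hP := h.pol hμ hm a hR
  obtain ⟨h1, h2⟩ := pot_diff hn μ a hR hx f (hG.integrable hμ)
  simp only [pot]
  rw [h1, ← integral_neg]
  set e := (1 + ‖a‖ ^ 2 - R ^ 2) with he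
  have hKb : Integrable (fun y => |Ks μ a R x y - dist x y ^ μ| * |pol μ a R e f y - f y|) :=
    integrable_kap hn hμ a x h hP hm.le
  refine integral_mono hKb.neg h2 fun y => ?_
  have hKK : Ks μ a R x y - dist x y ^ μ ≤ |Ks μ a R x y - dist x y ^ μ| := le_abs_self _
  by_cases c : 0 < e * (dist y a ^ 2 - R ^ 2)
  · have hd : 0 ≤ (dist x a ^ 2 - R ^ 2) * (dist y a ^ 2 - R ^ 2) := by
      have := mul_pos hH c
      have h3 : 0 < e ^ 2 * ((dist x a ^ 2 - R ^ 2) * (dist y a ^ 2 - R ^ 2)) := by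
        calc 0 < _ := this
          _ = _ := by ring
      exact (pos_of_mul_pos_right h3 (sq_nonneg e)).le
    have hk := Ks_ge hμ a hR hx hd
    have hp : f y ≤ pol μ a R e f y := by rw [pol, if_pos c]; exact le_max_left _ _
    have hp2 : refl μ a R f y ≤ pol μ a R e f y := by rw [pol, if_pos c]; exact le_max_right _ _
    simp only [abs_of_nonneg (sub_nonneg.2 hk), abs_of_nonneg (sub_nonneg.2 hp)]
    nlinarith
  · have hd : (dist x a ^ 2 - R ^ 2) * (dist y a ^ 2 - R ^ 2) ≤ 0 := by
      by_contra hcon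
      push Not at hcon
      apply c
      have h3 : 0 < (e * (dist x a ^ 2 - R ^ 2)) * ((dist x a ^ 2 - R ^ 2) * (dist y a ^ 2 - R ^ 2)) :=
        mul_pos hH hcon
      have h4 : 0 < (dist x a ^ 2 - R ^ 2) ^ 2 * (e * (dist y a ^ 2 - R ^ 2)) := by
        calc 0 < _ := h3
          _ = _ := by ring
      exact pos_of_mul_pos_right h4 (sq_nonneg _)
    have hk := Ks_le hμ a hR hx hd
    have hp : pol μ a R e f y ≤ f y := by rw [pol, if_neg c]; exact min_le_left _ _
    have hp2 : pol μ a R e f y ≤ refl μ a R f y := by rw [pol, if_neg c]; exact min_le_right _ _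
    simp only [abs_of_nonpos (sub_nonpos.2 hk), abs_of_nonpos (sub_nonpos.2 hp)]
    nlinarith


/-- asymptotic polarization-stability of a sequence -/
def Stab {n : ℕ} (μ r : ℝ) (F : ℕ → EE n → ℝ) : Prop :=
  ∀ (a : EE n) (R : ℝ), 0 < R → 1 + ‖a‖ ^ 2 - R ^ 2 ≠ 0 →
    Filter.Tendsto (fun k => TT μ r (pol μ a R (1 + ‖a‖ ^ 2 - R ^ 2) (F k)) - TT μ r (F k))
      Filter.atTop (nhds 0)

lemma stab_one {n : ℕ} (hn : 1 ≤ n) {μ m r : ℝ} (hμ : 0 < μ) (hm : 0 < m) (hr : 0 < r) (hr1 : r < 1)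
    (hε : r * ((n : ℝ) + μ / 2) < n) {F : ℕ → EE n → ℝ}
    (h : ∀ k, Cls μ m (F k)) (hS : Stab μ r F) (a : EE n) {R : ℝ} (hR : 0 < R) {x : EE n} (hx : x ≠ a)
    (hH : 0 < (1 + ‖a‖ ^ 2 - R ^ 2) * (dist x a ^ 2 - R ^ 2)) {δ : ℝ} (hδ : 0 < δ) :
    ∀ᶠ k in Filter.atTop,
      -δ ≤ J a R x ^ (-(μ / 2)) * pot μ (F k) (inversion a R x) - pot μ (F k) x := by
  have he : 1 + ‖a‖ ^ 2 - R ^ 2 ≠ 0 := fun h0 => by simp [h0] at hH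
  have ht := hS a R hR he
  have hT : Filter.Tendsto (fun k => ∫ x, thet μ r a R x *
      |pol μ a R (1 + ‖a‖ ^ 2 - R ^ 2) (F k) x - F k x|) Filter.atTop (nhds 0) := by
    refine squeeze_zero (fun k => integral_nonneg fun x => mul_nonneg (thet_nonneg hr a R x)
      (abs_nonneg _)) (fun k => (TT_pol hn hμ hr hr1 hε hm (h k) a hR he).2) ?_
    simpa using ht.const_mul 2
  have hc := conv_lemma (ν := volume) (θ := thet μ r a R)
    (κ := fun y => |Ks μ a R x y - dist x y ^ μ|) (w := bub μ)
    (h := fun k x => |pol μ a R (1 + ‖a‖ ^ 2 - R ^ 2) (F k) x - F k x|)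
    (measurable_thet μ r a R) (measurable_kap a x)
    (fun k => (((h k).pol hμ hm a hR).meas.sub (h k).meas).abs) (fun k x => abs_nonneg _)
    (fun k x => pol_diff_le hm.le (h k) ((h k).pol hμ hm a hR) x) (fun x => abs_nonneg _)
    (thet_nonneg hr a R) (thet_pos hn hr hε a hR he) (integrable_kap0 hn hμ a x)
    (fun k => (TT_pol hn hμ hr hr1 hε hm (h k) a hR he).1) hT
  filter_upwards [hc.eventually (gt_mem_nhds hδ)] with k hk
  have := pot_diff_lower hn hμ hm (h k) a hR hx hH
  linarith

lemma pot_close {n : ℕ} (hn : 1 ≤ n) {μ m : ℝ} (hμ : 0 < μ) (hm : 0 < m)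
    {f : EE n → ℝ} (h : Cls μ m f) (c c0 : ℝ) (z z0 : EE n) :
    |c * pot μ f z - c0 * pot μ f z0| ≤ ∫ y, |c * dist z y ^ μ - c0 * dist z0 y ^ μ| * bub μ y := by
  have hG := h.good hn hm.le
  have hb := bub_good hn μ (n := n)
  unfold pot
  rw [← integral_const_mul, ← integral_const_mul, ← integral_sub ((hG.integrable hμ z).const_mul _)
    ((hG.integrable hμ z0).const_mul _)]
  refine (abs_integral_le_integral_abs).trans ?_
  refine integral_mono ((((hG.integrable hμ z).const_mul _).sub
    ((hG.integrable hμ z0).const_mul _)).abs) ?_ fun y => ?_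
  · refine (((hb.integrable hμ z).const_mul c).sub
      ((hb.integrable hμ z0).const_mul c0)).abs.congr (Filter.Eventually.of_forall fun y => ?_)
    simp only [Pi.sub_apply]
    rw [← mul_assoc, ← mul_assoc, ← sub_mul, abs_mul, abs_of_pos (bub_pos μ y)]
  · simp only [Pi.sub_apply]
    rw [← mul_assoc, ← mul_assoc, ← sub_mul, abs_mul, abs_of_nonneg (hG.nonneg y)]
    exact mul_le_mul_of_nonneg_left (h.upper y) (abs_nonneg _)

lemma stab_two {n : ℕ} (hn : 1 ≤ n) {μ m r : ℝ} (hμ : 0 < μ) (hm : 0 < m) (hr : 0 < r) (hr1 : r < 1)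
    (hε : r * ((n : ℝ) + μ / 2) < n) {F : ℕ → EE n → ℝ}
    (h : ∀ k, Cls μ m (F k)) (hS : Stab μ r F) (a : EE n) {R0 : ℝ} (hR0 : 0 < R0) {x : EE n} (hx : x ≠ a)
    (l : Filter ℝ) [l.NeBot] [l.IsCountablyGenerated] (hl : l ≤ nhds R0)
    (hH : ∀ᶠ R in l, 0 < (1 + ‖a‖ ^ 2 - R ^ 2) * (dist x a ^ 2 - R ^ 2)) {δ : ℝ} (hδ : 0 < δ) :
    ∀ᶠ k in Filter.atTop,
      -δ ≤ J a R0 x ^ (-(μ / 2)) * pot μ (F k) (inversion a R0 x) - pot μ (F k) x := by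
  have hd := dist_pos.2 hx
  have t1 : Filter.Tendsto (fun R => J a R x ^ (-(μ / 2))) l (nhds (J a R0 x ^ (-(μ / 2)))) := by
    refine Filter.Tendsto.rpow_const ?_ (Or.inl (J_pos hR0 x).ne')
    simp only [J_of_ne hx]
    refine Filter.Tendsto.mono_left ?_ hl
    exact ((Filter.tendsto_id.div_const _).pow 2)
  have t2 : Filter.Tendsto (fun R => inversion a R x) l (nhds (inversion a R0 x)) := by
    refine Filter.Tendsto.mono_left ?_ hl
    simp only [inversion, vsub_eq_sub, vadd_eq_add]
    exact (((Filter.tendsto_id.div_const _).pow 2).smul_const _).add_const _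
  have ht := (bub_good hn μ (n := n)).tendsto_diff hμ t1 t2
  have hp : ∀ᶠ R in l, 0 < R := hl (lt_mem_nhds hR0)
  obtain ⟨R, hR1, hR2, hR3⟩ := (hH.and (hp.and (ht.eventually (gt_mem_nhds (half_pos hδ))))).exists
  filter_upwards [stab_one hn hμ hm hr hr1 hε h hS a hR2 hx hR1 (half_pos hδ)] with k hk
  have := pot_close hn hμ hm (h k) (J a R x ^ (-(μ / 2))) (J a R0 x ^ (-(μ / 2)))
    (inversion a R x) (inversion a R0 x)
  have := (abs_le.1 (this.trans hR3.le)).2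
  linarith

/-- sphere exchanging `0` and `y` -/
lemma exch {n : ℕ} {y : EE n} (hy : y ≠ 0) :
    ∃ (a : EE n) (R : ℝ), 0 < R ∧ R ^ 2 = 1 + ‖a‖ ^ 2 ∧ (0 : EE n) ≠ a ∧ y ≠ a ∧
      inversion a R 0 = y ∧ inversion a R y = 0 ∧ J a R 0 = (ww y)⁻¹ ∧ J a R y = ww y ∧
      dist (0 : EE n) a ^ 2 < R ^ 2 ∧ R ^ 2 < dist y a ^ 2 := by
  have hs : 0 < ‖y‖ := norm_pos_iff.2 hy
  set s := ‖y‖ with hsd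
  set a : EE n := (-(s ^ 2)⁻¹) • y with ha
  have hna : ‖a‖ = s⁻¹ := by
    rw [ha, norm_smul, norm_neg, Real.norm_of_nonneg (by positivity), ← hsd]; field_simp
  have hR0 : 0 < 1 + ‖a‖ ^ 2 := by positivity
  refine ⟨a, Real.sqrt (1 + ‖a‖ ^ 2), Real.sqrt_pos.2 hR0, Real.sq_sqrt hR0.le, ?_⟩
  set R := Real.sqrt (1 + ‖a‖ ^ 2) with hRd
  have hR : 0 < R := Real.sqrt_pos.2 hR0
  have hR2 : R ^ 2 = 1 + (s⁻¹) ^ 2 := by rw [hRd, Real.sq_sqrt hR0.le, hna]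
  have h0a : (0 : EE n) ≠ a := by
    intro h0; rw [← h0, norm_zero] at hna; exact (inv_pos.2 hs).ne hna
  have d0 : dist (0 : EE n) a = s⁻¹ := by rw [dist_zero_left, hna]
  have hya : y - a = (1 + (s ^ 2)⁻¹) • y := by rw [ha]; module
  have dy : dist y a = (1 + (s ^ 2)⁻¹) * s := by
    rw [dist_eq_norm, hya, norm_smul, Real.norm_of_nonneg (by positivity)]
  have hyna : y ≠ a := by
    rw [← dist_pos, dy]; positivity
  have i0 : inversion a R 0 = y := by
    simp only [inversion, vsub_eq_sub, vadd_eq_add]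
    rw [d0, div_pow, hR2, ha]
    have e1 : (1 + s⁻¹ ^ 2) / s⁻¹ ^ 2 = s ^ 2 + 1 := by field_simp
    have e2 : (s ^ 2 + 1) * (s ^ 2)⁻¹ - (s ^ 2)⁻¹ = 1 := by field_simp; ring
    rw [e1]
    calc (s ^ 2 + 1) • (0 - -(s ^ 2)⁻¹ • y) + -(s ^ 2)⁻¹ • y
        = ((s ^ 2 + 1) * (s ^ 2)⁻¹ - (s ^ 2)⁻¹) • y := by module
      _ = y := by rw [e2, one_smul]
  refine ⟨h0a, hyna, i0, ?_, ?_, ?_, ?_, ?_⟩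
  · rw [← i0, inversion_inversion _ hR.ne']
  · rw [J_of_ne h0a, d0, div_pow, hR2, ww, inv_inv, ← hsd]; field_simp; ring
  · rw [J_of_ne hyna, dy, div_pow, hR2, ww, ← hsd]; field_simp; ring
  · rw [d0, hR2]; linarith
  · rw [dy, hR2]; field_simp; nlinarith [sq_nonneg s]

lemma stab_three {n : ℕ} (hn : 1 ≤ n) {μ m r : ℝ} (hμ : 0 < μ) (hm : 0 < m) (hr : 0 < r) (hr1 : r < 1)
    (hε : r * ((n : ℝ) + μ / 2) < n) {F : ℕ → EE n → ℝ}
    (h : ∀ k, Cls μ m (F k)) (hS : Stab μ r F) (y : EE n) :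
    Filter.Tendsto (fun k => ww y ^ (μ / 2) * pot μ (F k) y - pot μ (F k) 0) Filter.atTop (nhds 0) := by
  by_cases hy : y = 0
  · subst hy; simp [ww]
  obtain ⟨a, R, hR, hRa, h0a, hya, i0, iy, J0, Jy, hin, hout⟩ := exch hy
  have hw := ww_pos y
  rw [Metric.tendsto_atTop']
  intro δ hδ
  have A : ∀ᶠ k in Filter.atTop,
      -(δ / 2) ≤ J a R 0 ^ (-(μ / 2)) * pot μ (F k) (inversion a R 0) - pot μ (F k) 0 := by
    refine stab_two hn hμ hm hr hr1 hε h hS a hR h0a (nhdsWithin R (Set.Ioi R)) nhdsWithin_le_nhds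
      ?_ (half_pos hδ)
    filter_upwards [self_mem_nhdsWithin] with R' hR'
    have : R ^ 2 < R' ^ 2 := pow_lt_pow_left₀ hR' hR.le two_ne_zero
    exact mul_pos_of_neg_of_neg (by linarith) (by linarith)
  have B : ∀ᶠ k in Filter.atTop,
      -(δ / 2) ≤ J a R y ^ (-(μ / 2)) * pot μ (F k) (inversion a R y) - pot μ (F k) y := by
    refine stab_two hn hμ hm hr hr1 hε h hS a hR hya (nhdsWithin R (Set.Iio R)) nhdsWithin_le_nhds
      ?_ (half_pos hδ)
    have : ∀ᶠ R' in nhdsWithin R (Set.Iio R), 0 < R' := nhdsWithin_le_nhds (lt_mem_nhds hR)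
    filter_upwards [self_mem_nhdsWithin, this] with R' hR' h0
    have : R' ^ 2 < R ^ 2 := pow_lt_pow_left₀ hR' h0.le two_ne_zero
    exact mul_pos (by linarith) (by linarith)
  rw [i0, J0, Real.inv_rpow hw.le, ← Real.rpow_neg hw.le, neg_neg] at A
  rw [iy, Jy] at B
  obtain ⟨N, hN⟩ := Filter.eventually_atTop.1 (A.and B)
  refine ⟨N, fun k hk => ?_⟩
  obtain ⟨h1, h2⟩ := hN k hk.le
  rw [Real.dist_eq, sub_zero, abs_lt]
  constructor
  · linarith
  · have hp : 0 < ww y ^ (μ / 2) := Real.rpow_pos_of_pos hw _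
    have hp1 : ww y ^ (μ / 2) ≤ 1 := Real.rpow_le_one hw.le (ww_le_one y) (by linarith)
    have h3 := mul_le_mul_of_nonneg_left h2 hp.le
    have h4 : ww y ^ (μ / 2) * ww y ^ (-(μ / 2)) = 1 := by
      rw [← Real.rpow_add hw]; simp
    have h5 : ww y ^ (μ / 2) * (ww y ^ (-(μ / 2)) * pot μ (F k) 0 - pot μ (F k) y) =
      pot μ (F k) 0 - ww y ^ (μ / 2) * pot μ (F k) y := by
      rw [mul_sub, ← mul_assoc, h4, one_mul]
    nlinarith

noncomputable def k0 (n : ℕ) (μ : ℝ) : ℝ := pot μ (bub μ : EE n → ℝ) 0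

lemma pot_bub {n : ℕ} (hn : 1 ≤ n) {μ : ℝ} (hμ : 0 < μ) (y : EE n) :
    pot μ (bub μ) y = k0 n μ * ww y ^ (-(μ / 2)) := by
  unfold k0
  by_cases hy : y = 0
  · subst hy; simp [ww]
  obtain ⟨a, R, hR, hRa, h0a, hya, i0, iy, J0, Jy, hin, hout⟩ := exch hy
  have hw := ww_pos y
  have hd := (pot_diff hn μ a hR h0a (bub μ) ((bub_good hn μ).integrable hμ)).1
  have hz : ∀ z, refl μ a R (bub μ) z = bub μ z := by
    intro z
    rw [refl_bub μ a hR, bub]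
    congr 1
    have : 1 + ‖a‖ ^ 2 - R ^ 2 = 0 := by linarith
    exact le_antisymm (Jw_le a hR (by rw [this]; simp)) (Jw_ge a hR (by rw [this]; simp))
  simp only [hz, sub_self, mul_zero, integral_zero] at hd
  rw [i0, J0, Real.inv_rpow hw.le, ← Real.rpow_neg hw.le, neg_neg] at hd
  have h4 : ww y ^ (-(μ / 2)) * ww y ^ (μ / 2) = 1 := by
    rw [← Real.rpow_add hw]; simp
  have hd' : ww y ^ (μ / 2) * pot μ (bub μ) y = pot μ (bub μ) (0 : EE n) := by
    simp only [pot]; linarith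
  rw [← hd', mul_comm, ← mul_assoc, h4, one_mul]

end RHLS

namespace RHLS
open EuclideanGeometry

noncomputable def SS (n : ℕ) : ℝ := ∫ x : EE n, ww x ^ (n : ℝ)

lemma SS_pos {n : ℕ} (hn : 1 ≤ n) : 0 < SS n := by
  refine (integral_pos_iff_support_of_nonneg (fun x => Real.rpow_nonneg (ww_pos x).le _)
    (integrable_wwn hn)).2 ?_
  have : Function.support (fun x : EE n => ww x ^ (n : ℝ)) = Set.univ := by
    ext x
    simp only [Function.mem_support, Set.mem_univ, iff_true]
    exact (Real.rpow_pos_of_pos (ww_pos x) _).ne'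
  rw [this]; exact Measure.measure_univ_pos.2 (NeZero.ne _)

lemma pot_pos {n : ℕ} (hn : 1 ≤ n) {μ : ℝ} (hμ : 0 < μ) {f : EE n → ℝ} (h : Good μ f)
    (hf : ¬ f =ᵐ[volume] 0) (x : EE n) : 0 < pot μ f x := by
  have h0 : ∀ y, 0 ≤ dist x y ^ μ * f y := fun y => mul_nonneg (Real.rpow_nonneg dist_nonneg _) (h.nonneg y)
  refine lt_of_le_of_ne (pot_nonneg h.nonneg x) fun hz => hf ?_
  have := (integral_eq_zero_iff_of_nonneg h0 (h.integrable hμ x)).1 hz.symm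
  filter_upwards [this, ae_ne hn x] with y hy hyx
  have hd : 0 < dist x y ^ μ := Real.rpow_pos_of_pos (dist_pos.2 hyx.symm) _
  simpa [hd.ne'] using hy

lemma bub_ne {n : ℕ} (μ : ℝ) : ¬ (bub μ : EE n → ℝ) =ᵐ[volume] 0 := by
  intro h
  have h2 : ∀ᵐ x : EE n, False := by
    filter_upwards [h] with x hx
    exact (bub_pos μ x).ne' hx
  rw [Filter.eventually_false_iff_eq_bot, ae_eq_bot] at h2
  exact NeZero.ne (volume : Measure (EE n)) h2

lemma k0_pos {n : ℕ} (hn : 1 ≤ n) {μ : ℝ} (hμ : 0 < μ) : 0 < k0 n μ :=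
  pot_pos hn hμ (bub_good hn μ) (bub_ne μ) 0

lemma DD_eq_pot {n : ℕ} {μ : ℝ} (hμ : 0 < μ) {f g : EE n → ℝ} (hf : ∀ x, 0 ≤ f x)
    (hg : Good μ g) : DD μ f g = ∫⁻ x, ENNReal.ofReal (f x * pot μ g x) := by
  unfold DD
  congr 1; ext x
  rw [pot, ← integral_const_mul, ofReal_integral_eq_lintegral_ofReal]
  · congr 1; ext y; congr 1; ring
  · exact (hg.integrable hμ x).const_mul _
  · exact Filter.Eventually.of_forall fun y => mul_nonneg (hf x)
      (mul_nonneg (Real.rpow_nonneg dist_nonneg _) (hg.nonneg y))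

lemma DD_symm {n : ℕ} {μ : ℝ} {f g : EE n → ℝ} (hf : Measurable f) (hg : Measurable g) :
    DD μ f g = DD μ g f := by
  unfold DD
  rw [lintegral_lintegral_swap]
  · congr 1; ext x; congr 1; ext y; rw [dist_comm]; congr 1; ring
  · apply Measurable.aemeasurable
    apply Measurable.ennreal_ofReal
    show Measurable fun p : EE n × EE n => f p.1 * dist p.1 p.2 ^ μ * g p.2
    fun_prop

noncomputable def MM {n : ℕ} (μ : ℝ) (f : EE n → ℝ) : ℝ := ∫ x, ww x ^ (-(μ / 2)) * f x

lemma ww_mul_bub {n : ℕ} (μ : ℝ) (x : EE n) : ww x ^ (-(μ / 2)) * bub μ x = ww x ^ (n : ℝ) := by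
  rw [bub, ← Real.rpow_add (ww_pos x)]; congr 1; ring

lemma MM_le {n : ℕ} (hn : 1 ≤ n) {μ m : ℝ} (hm : 0 < m) {f : EE n → ℝ} (h : Cls μ m f) :
    MM μ f ≤ SS n := by
  refine integral_mono (h.good hn hm.le).int (integrable_wwn hn) fun x => ?_
  simp only
  rw [← ww_mul_bub μ x]
  exact mul_le_mul_of_nonneg_left (h.upper x) (Real.rpow_nonneg (ww_pos x).le _)

lemma MM_ge {n : ℕ} (hn : 1 ≤ n) {μ m : ℝ} (hm : 0 < m) {f : EE n → ℝ} (h : Cls μ m f) :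
    m * SS n ≤ MM μ f := by
  rw [SS, ← integral_const_mul]
  refine integral_mono ((integrable_wwn hn).const_mul m) (h.good hn hm.le).int fun x => ?_
  simp only
  rw [← ww_mul_bub μ x]
  have := mul_le_mul_of_nonneg_left (h.lower x) (Real.rpow_nonneg (ww_pos x).le (-(μ / 2)))
  linarith

lemma pot_mono {n : ℕ} {μ : ℝ} (hμ : 0 < μ) {f g : EE n → ℝ} (hf : Good μ f) (hg : Good μ g)
    (h : ∀ x, f x ≤ g x) (x : EE n) : pot μ f x ≤ pot μ g x :=
  integral_mono (hf.integrable hμ x) (hg.integrable hμ x) fun y =>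
    mul_le_mul_of_nonneg_left (h y) (Real.rpow_nonneg dist_nonneg _)

lemma Cls.pot_le {n : ℕ} (hn : 1 ≤ n) {μ m : ℝ} (hμ : 0 < μ) (hm : 0 < m) {f : EE n → ℝ}
    (h : Cls μ m f) (x : EE n) : pot μ f x ≤ k0 n μ * ww x ^ (-(μ / 2)) := by
  rw [← pot_bub hn hμ]
  exact pot_mono hμ (h.good hn hm.le) (bub_good hn μ) h.upper x

lemma Cls.dint {n : ℕ} (hn : 1 ≤ n) {μ m : ℝ} (hμ : 0 < μ) (hm : 0 < m) {f g : EE n → ℝ}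
    (hf : Good μ f) (h : Cls μ m g) : Integrable (fun x => f x * pot μ g x) := by
  refine (hf.int.const_mul (k0 n μ)).mono' (hf.meas.mul
    ((h.good hn hm.le).continuous hμ).measurable).aestronglyMeasurable
    (Filter.Eventually.of_forall fun x => ?_)
  rw [Real.norm_of_nonneg (mul_nonneg (hf.nonneg x) (pot_nonneg (h.nonneg hm.le) x))]
  have := mul_le_mul_of_nonneg_left (h.pot_le hn hμ hm x) (hf.nonneg x)
  linarith

lemma Cls.bub {n : ℕ} {μ : ℝ} : Cls μ 1 (bub μ : EE n → ℝ) :=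
  ⟨measurable_bub μ, fun x => by simp, fun x => le_rfl⟩

lemma Cls.DD_eq {n : ℕ} (hn : 1 ≤ n) {μ m : ℝ} (hμ : 0 < μ) (hm : 0 < m) {f g : EE n → ℝ}
    (hf : Good μ f) (h : Cls μ m g) : DD μ f g = ENNReal.ofReal (∫ x, f x * pot μ g x) := by
  rw [DD_eq_pot hμ hf.nonneg (h.good hn hm.le), ofReal_integral_eq_lintegral_ofReal
    (Cls.dint hn hμ hm hf h)]
  exact Filter.Eventually.of_forall fun x => mul_nonneg (hf.nonneg x) (pot_nonneg (h.nonneg hm.le) x)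

lemma int_bub_pot {n : ℕ} (hn : 1 ≤ n) {μ m : ℝ} (hμ : 0 < μ) (hm : 0 < m) {g : EE n → ℝ}
    (h : Cls μ m g) : ∫ x, bub μ x * pot μ g x = k0 n μ * MM μ g := by
  have h1 := Cls.DD_eq hn hμ hm (bub_good hn μ) h
  rw [DD_symm (measurable_bub μ) h.meas, Cls.DD_eq hn hμ one_pos (h.good hn hm.le) Cls.bub,
    ENNReal.ofReal_eq_ofReal_iff] at h1
  · rw [← h1, MM, ← integral_const_mul]
    congr 1; ext x
    rw [pot_bub hn hμ]; ring
  · exact integral_nonneg fun x => mul_nonneg (h.nonneg hm.le x) (pot_nonneg (fun x => (bub_pos μ x).le) x)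
  · exact integral_nonneg fun x => mul_nonneg (bub_pos μ x).le (pot_nonneg (h.nonneg hm.le) x)

/-- key asymptotics -/
lemma asym {n : ℕ} (hn : 1 ≤ n) {μ m r : ℝ} (hμ : 0 < μ) (hm : 0 < m) (hr : 0 < r) (hr1 : r < 1)
    (hε : r * ((n : ℝ) + μ / 2) < n) {F G : ℕ → EE n → ℝ}
    (hF : ∀ k, Cls μ m (F k)) (h : ∀ k, Cls μ m (G k)) (hS : Stab μ r G) :
    Filter.Tendsto (fun k => SS n * (∫ x, F k x * pot μ (G k) x) - k0 n μ * MM μ (F k) * MM μ (G k))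
      Filter.atTop (nhds 0) := by
  have h3 := stab_three hn hμ hm hr hr1 hε h hS
  have hk := k0_pos hn hμ
  have wb : ∀ x : EE n, ww x ^ (μ / 2) * ww x ^ (-(μ / 2)) = 1 := fun x => by
    rw [← Real.rpow_add (ww_pos x)]; simp
  -- uniform bound
  have hU : ∀ k x, |ww x ^ (μ / 2) * pot μ (G k) x - pot μ (G k) 0| ≤ k0 n μ := by
    intro k x
    have a1 := (h k).pot_le hn hμ hm x
    have a2 := (h k).pot_le hn hμ hm 0
    have a3 := pot_nonneg (μ := μ) ((h k).nonneg hm.le) x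
    have a4 := pot_nonneg (μ := μ) ((h k).nonneg hm.le) 0
    have hp := Real.rpow_nonneg (ww_pos x).le (μ / 2)
    have a5 : ww x ^ (μ / 2) * pot μ (G k) x ≤ k0 n μ := by
      calc _ ≤ ww x ^ (μ / 2) * (k0 n μ * ww x ^ (-(μ / 2))) := mul_le_mul_of_nonneg_left a1 hp
        _ = k0 n μ * (ww x ^ (μ / 2) * ww x ^ (-(μ / 2))) := by ring
        _ = k0 n μ := by rw [wb, mul_one]
    have a6 : pot μ (G k) 0 ≤ k0 n μ := by simpa [ww] using a2
    have a7 := mul_nonneg hp a3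
    rw [abs_le]; constructor <;> linarith
  -- general convergence
  have key : ∀ H : ℕ → EE n → ℝ, (∀ k, Cls μ m (H k)) →
      Filter.Tendsto (fun k => (∫ x, H k x * pot μ (G k) x) - pot μ (G k) 0 * MM μ (H k))
        Filter.atTop (nhds 0) := by
    intro H hH
    have e : ∀ k, (∫ x, H k x * pot μ (G k) x) - pot μ (G k) 0 * MM μ (H k) =
        ∫ x, (ww x ^ (-(μ / 2)) * H k x) * (ww x ^ (μ / 2) * pot μ (G k) x - pot μ (G k) 0) := by
      intro k
      rw [MM, ← integral_const_mul, ← integral_sub (Cls.dint hn hμ hm ((hH k).good hn hm.le) (h k))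
        (((hH k).good hn hm.le).int.const_mul _)]
      congr 1; ext x
      have := wb x
      linear_combination (-(H k x * pot μ (G k) x)) * this
    simp only [e]
    have e0 : (0 : ℝ) = ∫ x : EE n, (0 : ℝ) := by simp
    rw [e0]
    refine tendsto_integral_of_dominated_convergence (fun x => k0 n μ * ww x ^ (n : ℝ)) ?_
      ((integrable_wwn hn).const_mul _) ?_ ?_
    · intro k
      have m1 := (hH k).meas
      have m2 := (((h k).good hn hm.le).continuous hμ).measurable
      have m3 := measurable_ww (n := n)
      exact Measurable.aestronglyMeasurable (by fun_prop)
    · intro k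
      refine Filter.Eventually.of_forall fun x => ?_
      have b1 : ww x ^ (-(μ / 2)) * H k x ≤ ww x ^ (n : ℝ) := by
        rw [← ww_mul_bub μ x]
        exact mul_le_mul_of_nonneg_left ((hH k).upper x) (Real.rpow_nonneg (ww_pos x).le _)
      have b0 : 0 ≤ ww x ^ (-(μ / 2)) * H k x :=
        mul_nonneg (Real.rpow_nonneg (ww_pos x).le _) ((hH k).nonneg hm.le x)
      rw [norm_mul, Real.norm_of_nonneg b0, Real.norm_eq_abs, mul_comm]
      exact mul_le_mul (hU k x) b1 b0 hk.le
    · refine Filter.Eventually.of_forall fun x => ?_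
      refine squeeze_zero_norm (a := fun k => ww x ^ (n : ℝ) *
        |ww x ^ (μ / 2) * pot μ (G k) x - pot μ (G k) 0|) (fun k => ?_) ?_
      · have b1 : ww x ^ (-(μ / 2)) * H k x ≤ ww x ^ (n : ℝ) := by
          rw [← ww_mul_bub μ x]
          exact mul_le_mul_of_nonneg_left ((hH k).upper x) (Real.rpow_nonneg (ww_pos x).le _)
        have b0 : 0 ≤ ww x ^ (-(μ / 2)) * H k x :=
          mul_nonneg (Real.rpow_nonneg (ww_pos x).le _) ((hH k).nonneg hm.le x)
        rw [norm_mul, Real.norm_of_nonneg b0, Real.norm_eq_abs]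
        exact mul_le_mul_of_nonneg_right b1 (abs_nonneg _)
      · simpa using ((h3 x).abs.const_mul (ww x ^ (n : ℝ)))
  have k1 := key F hF
  by_cases hm1 : m ≤ 1
  swap
  · exfalso
    have := ((hF 0).lower 0).trans ((hF 0).upper 0)
    have hb := bub_pos μ (0 : EE n)
    nlinarith
  have k2 := key (fun _ => bub μ) (fun _ => ⟨measurable_bub μ, fun x => by
    have := bub_pos μ x; nlinarith, fun x => le_rfl⟩)
  have k3 : Filter.Tendsto (fun k => MM μ (F k) * ((∫ x, bub μ x * pot μ (G k) x) -
      pot μ (G k) 0 * MM μ (bub μ : EE n → ℝ))) Filter.atTop (nhds 0) := by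
    refine squeeze_zero_norm (a := fun k => SS n * |((∫ x, bub μ x * pot μ (G k) x) -
      pot μ (G k) 0 * MM μ (bub μ : EE n → ℝ))|) (fun k => ?_) ?_
    · have q1 := MM_le hn hm (hF k)
      have q2 := (mul_nonneg hm.le (SS_pos hn).le).trans (MM_ge hn hm (hF k))
      rw [norm_mul, Real.norm_of_nonneg q2, Real.norm_eq_abs]
      exact mul_le_mul_of_nonneg_right q1 (abs_nonneg _)
    · simpa using k2.abs.const_mul (SS n)
  have hMb : MM μ (bub μ : EE n → ℝ) = SS n := by
    simp only [MM, ww_mul_bub, SS]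
  have k4 := (k1.const_mul (SS n)).sub k3
  simp only [mul_zero, sub_zero] at k4
  refine k4.congr fun k => ?_
  rw [hMb, int_bub_pot hn hμ hm (h k)]
  ring

end RHLS

namespace RHLS
open EuclideanGeometry

lemma rpow_le_tangent {r : ℝ} (hr : 0 < r) (hr1 : r < 1) {x y : ℝ} (hx : 0 ≤ x) (hy : 0 < y) :
    x ^ r ≤ y ^ r + r * y ^ (r - 1) * (x - y) := by
  have := rpow_one_add_le_one_add_mul_self (s := x / y - 1) (p := r)
    (by have : 0 ≤ x / y := by positivity
        linarith) hr.le hr1.le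
  rw [show 1 + (x / y - 1) = x / y by ring, Real.div_rpow hx hy.le, div_le_iff₀ (by positivity)] at this
  refine this.trans (le_of_eq ?_)
  rw [Real.rpow_sub_one hy.ne']
  field_simp

lemma TT_integrand {n : ℕ} {μ r : ℝ} {f : EE n → ℝ} (hf : ∀ x, 0 ≤ f x) (x : EE n) :
    f x ^ r * ww x ^ ((n : ℝ) - r * ((n : ℝ) + μ / 2)) = (f x / bub μ x) ^ r * ww x ^ (n : ℝ) := by
  rw [Real.div_rpow (hf x) (bub_pos μ x).le, bub, ← Real.rpow_mul (ww_pos x).le,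
    Real.rpow_sub (ww_pos x), mul_comm r]
  ring

lemma TT_jensen {n : ℕ} (hn : 1 ≤ n) {μ r m : ℝ} (hr : 0 < r) (hr1 : r < 1) (hm : 0 < m)
    {f : EE n → ℝ} (h : Cls μ m f) :
    TT μ r f ≤ (MM μ f / SS n) ^ r * SS n := by
  have hS := SS_pos hn
  have hM : 0 < MM μ f := (mul_pos hm hS).trans_le (MM_ge hn hm h)
  set t := MM μ f / SS n with ht
  have ht0 : 0 < t := by positivity
  have hG := h.good hn hm.le
  have hI := ((integrable_wwn hn).const_mul (t ^ r)).add
    ((hG.int.sub ((integrable_wwn hn).const_mul t)).const_mul (r * t ^ (r - 1)))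
  have hle : TT μ r f ≤ ∫ x, (t ^ r * ww x ^ (n : ℝ) + r * t ^ (r - 1) *
      (ww x ^ (-(μ / 2)) * f x - t * ww x ^ (n : ℝ))) := by
    refine integral_mono (TT_int hn hr hm h) hI fun x => ?_
    simp only
    rw [TT_integrand (h.nonneg hm.le)]
    have h1 := rpow_le_tangent hr hr1 (x := f x / bub μ x) (div_nonneg (h.nonneg hm.le x) (bub_pos μ x).le) ht0
    have h2 : ww x ^ (-(μ / 2)) * f x = (f x / bub μ x) * ww x ^ (n : ℝ) := by
      rw [← ww_mul_bub μ x]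
      have := (bub_pos μ x).ne'
      field_simp
    rw [h2]
    have := mul_le_mul_of_nonneg_right h1 (Real.rpow_nonneg (ww_pos x).le n)
    linarith
  refine hle.trans (le_of_eq ?_)
  have hsub : Integrable (fun x => ww x ^ (-(μ / 2)) * f x - t * ww x ^ (n : ℝ)) :=
    hG.int.sub ((integrable_wwn hn).const_mul t)
  rw [integral_add ((integrable_wwn hn).const_mul (t ^ r)) (hsub.const_mul (r * t ^ (r - 1))),
    integral_const_mul, integral_const_mul, integral_sub hG.int ((integrable_wwn hn).const_mul t),
    integral_const_mul]
  change t ^ r * SS n + r * t ^ (r - 1) * (MM μ f - t * SS n) = _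
  have : t * SS n = MM μ f := by rw [ht]; field_simp
  rw [this]; ring

lemma TT_le {n : ℕ} (hn : 1 ≤ n) {μ r m : ℝ} (hr : 0 < r) (hm : 0 < m)
    {f : EE n → ℝ} (h : Cls μ m f) : TT μ r f ≤ SS n :=
  integral_mono (TT_int hn hr hm h) (integrable_wwn hn) fun x => TT_le_ww hr hm h x

lemma TT_pos {n : ℕ} (hn : 1 ≤ n) {μ r m : ℝ} (hr : 0 < r) (hm : 0 < m)
    {f : EE n → ℝ} (h : Cls μ m f) : 0 < TT μ r f := by
  have : m ^ r * SS n ≤ TT μ r f := by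
    rw [SS, ← integral_const_mul]
    refine integral_mono ((integrable_wwn hn).const_mul _) (TT_int hn hr hm h) fun x => ?_
    simp only
    rw [TT_integrand (h.nonneg hm.le)]
    have hb := bub_pos μ x
    have : m ≤ f x / bub μ x := by rw [le_div_iff₀ hb]; exact h.lower x
    exact mul_le_mul_of_nonneg_right (Real.rpow_le_rpow hm.le this hr.le)
      (Real.rpow_nonneg (ww_pos x).le _)
  have := SS_pos hn
  have : 0 < m ^ r * SS n := by positivity
  linarith

lemma TT_pol_le {n : ℕ} (hn : 1 ≤ n) {μ r m : ℝ} (hμ : 0 < μ) (hr : 0 < r) (hr1 : r < 1)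
    (hε : r * ((n : ℝ) + μ / 2) < n) (hm : 0 < m) {f : EE n → ℝ} (h : Cls μ m f)
    (a : EE n) {R : ℝ} (hR : 0 < R) (he : 1 + ‖a‖ ^ 2 - R ^ 2 ≠ 0) :
    TT μ r f ≤ TT μ r (pol μ a R (1 + ‖a‖ ^ 2 - R ^ 2) f) := by
  have h1 := (TT_pol hn hμ hr hr1 hε hm h a hR he).2
  have h2 : 0 ≤ ∫ x, thet μ r a R x * |pol μ a R (1 + ‖a‖ ^ 2 - R ^ 2) f x - f x| :=
    integral_nonneg fun x => mul_nonneg (thet_nonneg hr a R x) (abs_nonneg _)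
  linarith

noncomputable def DR {n : ℕ} (μ : ℝ) (f g : EE n → ℝ) : ℝ := ∫ x, f x * pot μ g x

lemma DR_lower {n : ℕ} (hn : 1 ≤ n) {μ m : ℝ} (hμ : 0 < μ) (hm : 0 < m) {f g : EE n → ℝ}
    (hf : Cls μ m f) (h : Cls μ m g) : m ^ 2 * (k0 n μ * SS n) ≤ DR μ f g := by
  have h1 : m * (k0 n μ * MM μ g) ≤ DR μ f g := by
    rw [← int_bub_pot hn hμ hm h, ← integral_const_mul]
    refine integral_mono ((Cls.dint hn hμ hm (bub_good hn μ) h).const_mul m)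
      (Cls.dint hn hμ hm (hf.good hn hm.le) h) fun x => ?_
    simp only
    rw [← mul_assoc]
    exact mul_le_mul_of_nonneg_right (hf.lower x) (pot_nonneg (h.nonneg hm.le) x)
  have h2 := MM_ge hn hm h
  have hk := k0_pos hn hμ
  have : m * (k0 n μ * (m * SS n)) ≤ m * (k0 n μ * MM μ g) := by gcongr
  linarith

lemma DR_pol {n : ℕ} (hn : 1 ≤ n) {μ m : ℝ} (hμ : 0 < μ) (hm : 0 < m) {f g : EE n → ℝ}
    (hf : Cls μ m f) (h : Cls μ m g) (a : EE n) {R : ℝ} (hR : 0 < R) (he : 1 + ‖a‖ ^ 2 - R ^ 2 ≠ 0) :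
    DR μ (pol μ a R (1 + ‖a‖ ^ 2 - R ^ 2) f) (pol μ a R (1 + ‖a‖ ^ 2 - R ^ 2) g) ≤ DR μ f g := by
  have := DD_pol_le hn hμ a hR he (hf.nonneg hm.le) (h.nonneg hm.le) hf.meas h.meas
  rw [Cls.DD_eq hn hμ hm ((hf.pol hμ hm a hR).good hn hm.le) (h.pol hμ hm a hR),
    Cls.DD_eq hn hμ hm (hf.good hn hm.le) h, ENNReal.ofReal_le_ofReal_iff] at this
  · exact this
  · exact integral_nonneg fun x => mul_nonneg (hf.nonneg hm.le x) (pot_nonneg (h.nonneg hm.le) x)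

theorem sub_sharp {n : ℕ} (hn : 1 ≤ n) {μ m r : ℝ} (hμ : 0 < μ) (hm : 0 < m) (hr : 0 < r) (hr1 : r < 1)
    (hε : r * ((n : ℝ) + μ / 2) < n) {f g : EE n → ℝ} (hf : Cls μ m f) (hg : Cls μ m g) :
    k0 n μ * SS n ^ (1 - 2 / r) * (TT μ r f ^ (1 / r) * TT μ r g ^ (1 / r)) ≤ DR μ f g := by
  have hS := SS_pos hn
  have hk := k0_pos hn hμ
  have hNp : ∀ f : EE n → ℝ, Cls μ m f → 0 < TT μ r f ^ (1 / r) := fun f hf =>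
    Real.rpow_pos_of_pos (TT_pos hn hr hm hf) _
  set Q : Set ℝ := {q | ∃ f g : EE n → ℝ, Cls μ m f ∧ Cls μ m g ∧
    q = DR μ f g / (TT μ r f ^ (1 / r) * TT μ r g ^ (1 / r))} with hQ
  have hQne : Q.Nonempty := ⟨_, f, g, hf, hg, rfl⟩
  set c := m ^ 2 * (k0 n μ * SS n) / (SS n ^ (1 / r) * SS n ^ (1 / r)) with hc
  have hc0 : 0 < c := by positivity
  have hQlow : ∀ q ∈ Q, c ≤ q := by
    rintro q ⟨f, g, hf, hg, rfl⟩
    have h1 : TT μ r f ^ (1 / r) ≤ SS n ^ (1 / r) :=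
      Real.rpow_le_rpow (TT_pos hn hr hm hf).le (TT_le hn hr hm hf) (by positivity)
    have h2 : TT μ r g ^ (1 / r) ≤ SS n ^ (1 / r) :=
      Real.rpow_le_rpow (TT_pos hn hr hm hg).le (TT_le hn hr hm hg) (by positivity)
    have h3 := DR_lower hn hμ hm hf hg
    have p1 := hNp f hf
    have p2 := hNp g hg
    rw [hc]
    have : 0 ≤ m ^ 2 * (k0 n μ * SS n) := by positivity
    have := this.trans h3
    gcongr
  have hbdd : BddBelow Q := ⟨c, hQlow⟩
  set Qs := sInf Q with hQs
  have hQs0 : 0 < Qs := hc0.trans_le (le_csInf hQne hQlow)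
  suffices hmain : k0 n μ * SS n ^ (1 - 2 / r) ≤ Qs by
    have h1 : Qs ≤ DR μ f g / (TT μ r f ^ (1 / r) * TT μ r g ^ (1 / r)) :=
      csInf_le hbdd ⟨f, g, hf, hg, rfl⟩
    rw [le_div_iff₀ (mul_pos (hNp f hf) (hNp g hg))] at h1
    refine le_trans ?_ h1
    exact mul_le_mul_of_nonneg_right hmain (mul_pos (hNp f hf) (hNp g hg)).le
  obtain ⟨q, -, hqt, hqQ⟩ := exists_seq_tendsto_sInf hQne hbdd
  choose F G hF hG hq using hqQ
  have hDq : ∀ k, DR μ (F k) (G k) = q k * (TT μ r (F k) ^ (1 / r) * TT μ r (G k) ^ (1 / r)) := by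
    intro k
    rw [hq k, div_mul_cancel₀ _ (mul_pos (hNp _ (hF k)) (hNp _ (hG k))).ne']
  have hstab : Stab μ r G := by
    intro a R hR he
    have hup : ∀ k, TT μ r (pol μ a R (1 + ‖a‖ ^ 2 - R ^ 2) (G k)) ≤ (q k / Qs) ^ r * TT μ r (G k) := by
      intro k
      have cF := (hF k).pol hμ hm a hR
      have cG := (hG k).pol hμ hm a hR
      set PF := pol μ a R (1 + ‖a‖ ^ 2 - R ^ 2) (F k) with hPF
      set PG := pol μ a R (1 + ‖a‖ ^ 2 - R ^ 2) (G k) with hPG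
      have h1 : Qs ≤ DR μ PF PG / (TT μ r PF ^ (1 / r) * TT μ r PG ^ (1 / r)) :=
        csInf_le hbdd ⟨PF, PG, cF, cG, rfl⟩
      rw [le_div_iff₀ (mul_pos (hNp _ cF) (hNp _ cG))] at h1
      have h2 := DR_pol hn hμ hm (hF k) (hG k) a hR he
      rw [hDq k, ← hPF, ← hPG] at h2
      have h3 : TT μ r (F k) ^ (1 / r) ≤ TT μ r PF ^ (1 / r) :=
        Real.rpow_le_rpow (TT_pos hn hr hm (hF k)).le
          (TT_pol_le hn hμ hr hr1 hε hm (hF k) a hR he) (by positivity)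
      have p0 := hNp _ (hF k)
      have p1 := hNp _ cG
      have p2 := hNp _ (hG k)
      have h4 : Qs * (TT μ r (F k) ^ (1 / r) * TT μ r PG ^ (1 / r)) ≤
          q k * (TT μ r (F k) ^ (1 / r) * TT μ r (G k) ^ (1 / r)) := by
        refine le_trans ?_ (h1.trans h2)
        gcongr
      have h5 : Qs * TT μ r PG ^ (1 / r) ≤ q k * TT μ r (G k) ^ (1 / r) := by
        have : TT μ r (F k) ^ (1 / r) * (Qs * TT μ r PG ^ (1 / r)) ≤
          TT μ r (F k) ^ (1 / r) * (q k * TT μ r (G k) ^ (1 / r)) := by linarith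
        exact le_of_mul_le_mul_left this p0
      have hqk : 0 ≤ q k := hQs0.le.trans (csInf_le hbdd ⟨F k, G k, hF k, hG k, hq k⟩)
      have h6 : TT μ r PG ^ (1 / r) ≤ q k / Qs * TT μ r (G k) ^ (1 / r) := by
        rw [div_mul_eq_mul_div, le_div_iff₀ hQs0]; linarith
      have h7 := Real.rpow_le_rpow p1.le h6 hr.le
      rw [Real.mul_rpow (by positivity) p2.le, ← Real.rpow_mul (TT_pos hn hr hm cG).le,
        ← Real.rpow_mul (TT_pos hn hr hm (hG k)).le, one_div_mul_cancel hr.ne', Real.rpow_one,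
        Real.rpow_one] at h7
      exact h7
    have hlim : Filter.Tendsto (fun k => ((q k / Qs) ^ r - 1) * SS n) Filter.atTop (nhds 0) := by
      have t1 : Filter.Tendsto (fun k => q k / Qs) Filter.atTop (nhds 1) := by
        have := hqt.div_const Qs
        rwa [← hQs, div_self hQs0.ne'] at this
      have t2 := ((t1.rpow_const (p := r) (Or.inl one_ne_zero)).sub_const 1).mul_const (SS n)
      simpa using t2
    refine squeeze_zero (fun k => sub_nonneg.2 (TT_pol_le hn hμ hr hr1 hε hm (hG k) a hR he))
      (fun k => ?_) hlim
    have h1 := hup k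
    have h2 : 1 ≤ (q k / Qs) ^ r := by
      apply Real.one_le_rpow _ hr.le
      rw [le_div_iff₀ hQs0, one_mul]
      exact csInf_le hbdd ⟨F k, G k, hF k, hG k, hq k⟩
    have h3 := TT_le hn hr hm (hG k)
    nlinarith
  have has := asym hn hμ hm hr hr1 hε hF hG hstab
  -- Jensen
  have hJ : ∀ f : EE n → ℝ, Cls μ m f → TT μ r f ^ (1 / r) ≤ MM μ f * (SS n)⁻¹ * SS n ^ (1 / r) := by
    intro f hf
    have h1 := TT_jensen hn hr hr1 hm hf
    have hM : 0 < MM μ f := (mul_pos hm hS).trans_le (MM_ge hn hm hf)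
    have h2 := Real.rpow_le_rpow (TT_pos hn hr hm hf).le h1 (by positivity : (0 : ℝ) ≤ 1 / r)
    rw [Real.mul_rpow (by positivity) hS.le, ← Real.rpow_mul (by positivity), mul_one_div_cancel hr.ne',
      Real.rpow_one, div_eq_mul_inv] at h2
    exact h2
  by_contra hcon
  push Not at hcon
  -- contradiction
  set e1 := SS n ^ (1 / r) with he1
  have he1p : 0 < e1 := by positivity
  have hexp : SS n ^ (1 - 2 / r) = SS n / (e1 * e1) := by
    rw [he1, ← Real.rpow_add hS, Real.rpow_sub hS, Real.rpow_one]; congr 2; ring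
  have hz : Filter.Tendsto (fun k => q k * (e1 * e1) / SS n - k0 n μ) Filter.atTop
      (nhds (Qs * (e1 * e1) / SS n - k0 n μ)) := ((hqt.mul_const _).div_const _).sub_const _
  have hneg : Qs * (e1 * e1) / SS n - k0 n μ < 0 := by
    rw [hexp] at hcon
    have : Qs * (e1 * e1) / SS n < k0 n μ := by
      rw [div_lt_iff₀ hS]
      have h := mul_lt_mul_of_pos_right hcon (mul_pos he1p he1p)
      have h2 : k0 n μ * (SS n / (e1 * e1)) * (e1 * e1) = k0 n μ * SS n := by field_simp
      linarith
    linarith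
  set η := -(Qs * (e1 * e1) / SS n - k0 n μ) / 2 with hη
  have hη0 : 0 < η := by rw [hη]; linarith
  have ev1 : ∀ᶠ k in Filter.atTop, q k * (e1 * e1) / SS n - k0 n μ < -η :=
    hz.eventually (gt_mem_nhds (by rw [hη]; linarith))
  have hδ : 0 < η * (m * SS n) ^ 2 := by positivity
  have ev2 := has.eventually (lt_mem_nhds (neg_lt_zero.2 hδ))
  obtain ⟨k, hk1, hk2⟩ := (ev1.and ev2).exists
  have hk2' : -(η * (m * SS n) ^ 2) < SS n * DR μ (F k) (G k) - k0 n μ * MM μ (F k) * MM μ (G k) := hk2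
  rw [hDq k] at hk2'
  have hMF := MM_ge hn hm (hF k)
  have hMG := MM_ge hn hm (hG k)
  have hMF0 : 0 < MM μ (F k) := (mul_pos hm hS).trans_le hMF
  have hMG0 : 0 < MM μ (G k) := (mul_pos hm hS).trans_le hMG
  have hqk : 0 ≤ q k := hQs0.le.trans (csInf_le hbdd ⟨F k, G k, hF k, hG k, hq k⟩)
  have hNN : TT μ r (F k) ^ (1 / r) * TT μ r (G k) ^ (1 / r) ≤
      (MM μ (F k) * (SS n)⁻¹ * e1) * (MM μ (G k) * (SS n)⁻¹ * e1) :=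
    mul_le_mul (hJ _ (hF k)) (hJ _ (hG k)) (hNp _ (hG k)).le (by positivity)
  have h1 : SS n * (q k * (TT μ r (F k) ^ (1 / r) * TT μ r (G k) ^ (1 / r))) ≤
      SS n * (q k * ((MM μ (F k) * (SS n)⁻¹ * e1) * (MM μ (G k) * (SS n)⁻¹ * e1))) := by gcongr
  have h2 : SS n * (q k * ((MM μ (F k) * (SS n)⁻¹ * e1) * (MM μ (G k) * (SS n)⁻¹ * e1))) =
      (q k * (e1 * e1) / SS n) * (MM μ (F k) * MM μ (G k)) := by field_simp
  have h3 : (q k * (e1 * e1) / SS n - k0 n μ) * (MM μ (F k) * MM μ (G k)) ≤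
      -η * (MM μ (F k) * MM μ (G k)) := mul_le_mul_of_nonneg_right hk1.le (by positivity)
  have h4 : (m * SS n) ^ 2 ≤ MM μ (F k) * MM μ (G k) := by
    rw [sq]; exact mul_le_mul hMF hMG (by positivity) hMF0.le
  nlinarith

end RHLS

namespace RHLS
open EuclideanGeometry

noncomputable def pp (n : ℕ) (μ : ℝ) : ℝ := (n : ℝ) / ((n : ℝ) + μ / 2)

lemma pp_pos {n : ℕ} (hn : 1 ≤ n) {μ : ℝ} (hμ : 0 < μ) : 0 < pp n μ := by
  have hn' : (1 : ℝ) ≤ n := by exact_mod_cast hn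
  unfold pp; positivity

lemma pp_lt_one {n : ℕ} (hn : 1 ≤ n) {μ : ℝ} (hμ : 0 < μ) : pp n μ < 1 := by
  have hn' : (1 : ℝ) ≤ n := by exact_mod_cast hn
  unfold pp; rw [div_lt_one (by positivity)]; linarith

lemma pp_mul {n : ℕ} {μ : ℝ} (hμ : 0 < μ) : pp n μ * ((n : ℝ) + μ / 2) = n := by
  unfold pp
  have : (0 : ℝ) < (n : ℝ) + μ / 2 := by positivity
  field_simp

lemma TT_pp {n : ℕ} {μ : ℝ} (hμ : 0 < μ) (f : EE n → ℝ) : TT μ (pp n μ) f = ∫ x, f x ^ pp n μ := by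
  unfold TT
  rw [pp_mul hμ]; simp

noncomputable def NN (n : ℕ) (μ : ℝ) : ℝ := k0 n μ * SS n ^ (1 - 2 / pp n μ)

lemma NN_pos {n : ℕ} (hn : 1 ≤ n) {μ : ℝ} (hμ : 0 < μ) : 0 < NN n μ :=
  mul_pos (k0_pos hn hμ) (Real.rpow_pos_of_pos (SS_pos hn) _)

lemma crit_Cls {n : ℕ} (hn : 1 ≤ n) {μ m : ℝ} (hμ : 0 < μ) (hm : 0 < m)
    {f g : EE n → ℝ} (hf : Cls μ m f) (hg : Cls μ m g) :
    NN n μ * (TT μ (pp n μ) f ^ (1 / pp n μ) * TT μ (pp n μ) g ^ (1 / pp n μ)) ≤ DR μ f g := by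
  have hp := pp_pos hn hμ
  have hp1 := pp_lt_one hn hμ
  have hS := SS_pos hn
  set p := pp n μ with hpd
  have hmono : ∀ r, 0 < r → r < p → ∀ f : EE n → ℝ, Cls μ m f → TT μ p f ≤ TT μ r f := by
    intro r hr hrp f hf
    refine integral_mono (TT_int hn hp hm hf) (TT_int hn hr hm hf) fun x => ?_
    simp only
    rw [TT_integrand (hf.nonneg hm.le), TT_integrand (hf.nonneg hm.le)]
    have hb := bub_pos μ x
    have h0 : 0 < f x / bub μ x := div_pos ((mul_pos hm hb).trans_le (hf.lower x)) hb
    have h1 : f x / bub μ x ≤ 1 := by rw [div_le_one hb]; exact hf.upper x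
    exact mul_le_mul_of_nonneg_right (Real.rpow_le_rpow_of_exponent_ge h0 h1 hrp.le)
      (Real.rpow_nonneg (ww_pos x).le _)
  have hle : ∀ᶠ r in nhdsWithin p (Set.Iio p), k0 n μ * SS n ^ (1 - 2 / r) *
      (TT μ p f ^ (1 / r) * TT μ p g ^ (1 / r)) ≤ DR μ f g := by
    have : ∀ᶠ r in nhdsWithin p (Set.Iio p), 0 < r := nhdsWithin_le_nhds (lt_mem_nhds hp)
    filter_upwards [this, self_mem_nhdsWithin] with r hr hrp
    have hrp' : r < p := hrp
    have hε : r * ((n : ℝ) + μ / 2) < n := by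
      have : (0 : ℝ) < (n : ℝ) + μ / 2 := by positivity
      exact (mul_lt_mul_of_pos_right hrp' this).trans_eq (pp_mul hμ)
    refine le_trans ?_ (sub_sharp hn hμ hm hr (hrp'.trans hp1) hε hf hg)
    have a1 := TT_pos hn hp hm hf
    have a2 := TT_pos hn hp hm hg
    have a3 := hmono r hr hrp' f hf
    have a4 := hmono r hr hrp' g hg
    have := k0_pos hn hμ
    have a5 := TT_pos hn hr hm hf
    have a6 := TT_pos hn hr hm hg
    have a7 := Real.rpow_nonneg a5.le (1 / r)
    have a8 := Real.rpow_nonneg a6.le (1 / r)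
    gcongr
  have t0 : Filter.Tendsto (fun r : ℝ => r) (nhdsWithin p (Set.Iio p)) (nhds p) := nhdsWithin_le_nhds
  have t1 : Filter.Tendsto (fun r : ℝ => 1 / r) (nhdsWithin p (Set.Iio p)) (nhds (1 / p)) :=
    tendsto_const_nhds.div t0 hp.ne'
  have t2 : Filter.Tendsto (fun r : ℝ => 1 - 2 / r) (nhdsWithin p (Set.Iio p)) (nhds (1 - 2 / p)) :=
    tendsto_const_nhds.sub (tendsto_const_nhds.div t0 hp.ne')
  have a1 := TT_pos hn hp hm hf
  have a2 := TT_pos hn hp hm hg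
  have t3 := ((tendsto_const_nhds (x := SS n)).rpow t2 (Or.inl hS.ne')).const_mul (k0 n μ)
  have t4 := t3.mul (((tendsto_const_nhds (x := TT μ p f)).rpow t1 (Or.inl a1.ne')).mul
    ((tendsto_const_nhds (x := TT μ p g)).rpow t1 (Or.inl a2.ne')))
  have := le_of_tendsto t4 hle
  rw [NN]
  exact this

noncomputable def nrm {n : ℕ} (p : ℝ) (f : EE n → ℝ) : ℝ≥0∞ := (∫⁻ x, ENNReal.ofReal (f x ^ p)) ^ (1 / p)

lemma nrm_mono {n : ℕ} {p : ℝ} (hp : 0 < p) {f g : EE n → ℝ} (hf : ∀ x, 0 ≤ f x)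
    (h : ∀ x, f x ≤ g x) : nrm p f ≤ nrm p g := by
  unfold nrm
  apply ENNReal.rpow_le_rpow _ (by positivity)
  exact lintegral_mono fun x => ENNReal.ofReal_le_ofReal (Real.rpow_le_rpow (hf x) (h x) hp.le)

lemma nrm_smul {n : ℕ} {p : ℝ} (hp : 0 < p) {f : EE n → ℝ} (hf : ∀ x, 0 ≤ f x) {c : ℝ} (hc : 0 ≤ c) :
    nrm p (fun x => c * f x) = ENNReal.ofReal c * nrm p f := by
  unfold nrm
  have : ∀ x, ENNReal.ofReal ((c * f x) ^ p) = ENNReal.ofReal (c ^ p) * ENNReal.ofReal (f x ^ p) := by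
    intro x
    rw [Real.mul_rpow hc (hf x), ENNReal.ofReal_mul (by positivity)]
  simp only [this]
  rw [lintegral_const_mul' _ _ ENNReal.ofReal_ne_top, ENNReal.mul_rpow_of_nonneg _ _ (by positivity),
    ENNReal.ofReal_rpow_of_nonneg (by positivity) (by positivity), ← Real.rpow_mul hc,
    mul_one_div_cancel hp.ne', Real.rpow_one]

lemma nrm_Cls {n : ℕ} (hn : 1 ≤ n) {μ m : ℝ} (hμ : 0 < μ) (hm : 0 < m)
    {f : EE n → ℝ} (hf : Cls μ m f) :
    nrm (pp n μ) f = ENNReal.ofReal (TT μ (pp n μ) f ^ (1 / pp n μ)) := by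
  have hp := pp_pos hn hμ
  have hi := TT_int hn hp hm hf
  rw [pp_mul hμ] at hi
  simp only [sub_self, Real.rpow_zero, mul_one] at hi
  rw [nrm, ← ENNReal.ofReal_rpow_of_nonneg (TT_pos hn hp hm hf).le (by positivity), TT_pp hμ,
    ofReal_integral_eq_lintegral_ofReal hi]
  exact Filter.Eventually.of_forall fun x => Real.rpow_nonneg (hf.nonneg hm.le x) _

lemma crit_Cls' {n : ℕ} (hn : 1 ≤ n) {μ m : ℝ} (hμ : 0 < μ) (hm : 0 < m)
    {f g : EE n → ℝ} (hf : Cls μ m f) (hg : Cls μ m g) :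
    ENNReal.ofReal (NN n μ) * (nrm (pp n μ) f * nrm (pp n μ) g) ≤ DD μ f g := by
  have hp := pp_pos hn hμ
  rw [nrm_Cls hn hμ hm hf, nrm_Cls hn hμ hm hg, Cls.DD_eq hn hμ hm (hf.good hn hm.le) hg,
    ← ENNReal.ofReal_mul (Real.rpow_nonneg (TT_pos hn hp hm hf).le _),
    ← ENNReal.ofReal_mul (NN_pos hn hμ).le]
  exact ENNReal.ofReal_le_ofReal (crit_Cls hn hμ hm hf hg)

lemma DD_mono {n : ℕ} {μ : ℝ} {f g f' g' : EE n → ℝ} (hf : ∀ x, 0 ≤ f x) (hg : ∀ x, 0 ≤ g x)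
    (h1 : ∀ x, f x ≤ f' x) (h2 : ∀ x, g x ≤ g' x) : DD μ f g ≤ DD μ f' g' := by
  refine lintegral_mono fun x => lintegral_mono fun y => ENNReal.ofReal_le_ofReal ?_
  have hK : 0 ≤ dist x y ^ μ := Real.rpow_nonneg dist_nonneg _
  exact mul_le_mul (mul_le_mul_of_nonneg_right (h1 x) hK) (h2 y) (hg y)
    (mul_nonneg ((hf x).trans (h1 x)) hK)

lemma crit_bdd {n : ℕ} (hn : 1 ≤ n) {μ k : ℝ} (hμ : 0 < μ) (hk : 0 < k)
    {f g : EE n → ℝ} (hf : ∀ x, 0 ≤ f x) (hg : ∀ x, 0 ≤ g x) (hfm : Measurable f) (hgm : Measurable g)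
    (hfk : ∀ x, f x ≤ k * bub μ x) (hgk : ∀ x, g x ≤ k * bub μ x) :
    ENNReal.ofReal (NN n μ) * (nrm (pp n μ) f * nrm (pp n μ) g) ≤ DD μ f g := by
  have hp := pp_pos hn hμ
  have hfin : DD μ (bub μ : EE n → ℝ) (bub μ) ≠ ∞ := by
    rw [Cls.DD_eq hn hμ one_pos (bub_good hn μ) Cls.bub]; exact ENNReal.ofReal_ne_top
  have hstep : ∀ m : ℝ, 0 < m → ENNReal.ofReal (NN n μ) * (nrm (pp n μ) f * nrm (pp n μ) g) ≤
      DD μ f g + ENNReal.ofReal (2 * m * k + m ^ 2) * DD μ (bub μ : EE n → ℝ) (bub μ) := by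
    intro m hm
    set c := (k + m)⁻¹ with hc
    have hc0 : 0 < c := by positivity
    have hcls : ∀ f : EE n → ℝ, (∀ x, 0 ≤ f x) → Measurable f → (∀ x, f x ≤ k * bub μ x) →
        Cls μ (c * m) (fun x => c * (f x + m * bub μ x)) := by
      intro f hf hfm hfk
      refine ⟨(hfm.add ((measurable_bub μ).const_mul m)).const_mul c, fun x => ?_, fun x => ?_⟩
      · have := mul_nonneg hc0.le (hf x)
        linarith
      · have h1 : f x + m * bub μ x ≤ (k + m) * bub μ x := by linarith [hfk x]
        have h2 := mul_le_mul_of_nonneg_left h1 hc0.le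
        rwa [← mul_assoc, hc, inv_mul_cancel₀ (by positivity), one_mul] at h2
    have key := crit_Cls' hn hμ (mul_pos hc0 hm) (hcls f hf hfm hfk) (hcls g hg hgm hgk)
    have n1 : ∀ f : EE n → ℝ, (∀ x, 0 ≤ f x) →
        ENNReal.ofReal c * nrm (pp n μ) f ≤ nrm (pp n μ) (fun x => c * (f x + m * bub μ x)) := by
      intro f hf
      rw [← nrm_smul hp hf hc0.le]
      refine nrm_mono hp (fun x => mul_nonneg hc0.le (hf x)) fun x => ?_
      refine mul_le_mul_of_nonneg_left ?_ hc0.le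
      have := mul_pos hm (bub_pos μ x)
      linarith
    have d1 : DD μ (fun x => c * (f x + m * bub μ x)) (fun x => c * (g x + m * bub μ x)) ≤
        ENNReal.ofReal (c * c) * (DD μ f g + ENNReal.ofReal (2 * m * k + m ^ 2) *
          DD μ (bub μ : EE n → ℝ) (bub μ)) := by
      have mb := measurable_bub (n := n) μ
      unfold DD
      rw [← lintegral_const_mul' _ _ ENNReal.ofReal_ne_top, ← lintegral_add_left,
        ← lintegral_const_mul' _ _ ENNReal.ofReal_ne_top]
      · refine lintegral_mono fun x => ?_
        rw [← lintegral_const_mul' _ _ ENNReal.ofReal_ne_top, ← lintegral_add_left,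
          ← lintegral_const_mul' _ _ ENNReal.ofReal_ne_top]
        · refine lintegral_mono fun y => ?_
          have hK : 0 ≤ dist x y ^ μ := Real.rpow_nonneg dist_nonneg _
          have b1 := bub_pos μ x
          have b2 := bub_pos μ y
          have f1 := hf x
          have g1 := hg y
          simp only
          rw [← ENNReal.ofReal_mul (by positivity), ← ENNReal.ofReal_add (by positivity) (by positivity),
            ← ENNReal.ofReal_mul (by positivity)]
          apply ENNReal.ofReal_le_ofReal
          have e : (f x + m * bub μ x) * (g y + m * bub μ y) ≤
              f x * g y + (2 * m * k + m ^ 2) * (bub μ x * bub μ y) := by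
            have q1 := mul_le_mul_of_nonneg_right (hfk x) (mul_pos hm b2).le
            have q2 := mul_le_mul_of_nonneg_right (hgk y) (mul_pos hm b1).le
            nlinarith
          have := mul_le_mul_of_nonneg_left e (mul_nonneg (mul_nonneg hc0.le hc0.le) hK)
          linarith
        · fun_prop
      · apply Measurable.lintegral_prod_right'
          (f := fun p : EE n × EE n => ENNReal.ofReal (f p.1 * dist p.1 p.2 ^ μ * g p.2))
        fun_prop
    have hcc : ENNReal.ofReal (c * c) ≠ 0 := by
      rw [Ne, ENNReal.ofReal_eq_zero, not_le]; positivity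
    refine (ENNReal.mul_le_mul_iff_right hcc ENNReal.ofReal_ne_top).1 ((le_trans ?_ key).trans d1)
    rw [ENNReal.ofReal_mul hc0.le]
    calc _ = ENNReal.ofReal (NN n μ) * ((ENNReal.ofReal c * nrm (pp n μ) f) *
          (ENNReal.ofReal c * nrm (pp n μ) g)) := by ring
      _ ≤ _ := by
        gcongr
        · exact n1 f hf
        · exact n1 g hg
  have t0 : Filter.Tendsto (fun m : ℝ => 2 * m * k + m ^ 2) (nhdsWithin 0 (Set.Ioi 0)) (nhds 0) := by
    have : Continuous (fun m : ℝ => 2 * m * k + m ^ 2) := by fun_prop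
    have h := this.tendsto 0
    simp only [mul_zero, zero_mul, ne_eq, OfNat.ofNat_ne_zero, not_false_eq_true, zero_pow, add_zero] at h
    exact h.mono_left nhdsWithin_le_nhds
  have t1 := (ENNReal.Tendsto.mul_const (ENNReal.tendsto_ofReal t0) (b := DD μ (bub μ : EE n → ℝ) (bub μ))
    (Or.inr hfin)).const_add (DD μ f g)
  simp only [ENNReal.ofReal_zero, zero_mul, add_zero] at t1
  refine ge_of_tendsto t1 ?_
  filter_upwards [self_mem_nhdsWithin] with m hm
  exact hstep m hm

lemma nrm_iSup {n : ℕ} {μ p : ℝ} (hp : 0 < p) {f : EE n → ℝ} (hf : ∀ x, 0 ≤ f x)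
    (hfm : Measurable f) :
    ⨆ k : ℕ, nrm p (fun x => min (f x) (((k : ℝ) + 1) * bub μ x)) = nrm p f := by
  have mb := measurable_bub (n := n) μ
  have h0 : ∀ (k : ℕ) x, 0 ≤ min (f x) (((k : ℝ) + 1) * bub μ x) := fun k x =>
    le_min (hf x) (mul_nonneg (by positivity) (bub_pos μ x).le)
  refine iSup_eq_of_tendsto ?_ ?_
  · intro i j hij
    refine nrm_mono hp (h0 i) fun x => ?_
    apply min_le_min_left
    have : (i : ℝ) ≤ j := by exact_mod_cast hij
    exact mul_le_mul_of_nonneg_right (by linarith) (bub_pos μ x).le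
  · unfold nrm
    refine (ENNReal.continuous_rpow_const.tendsto _).comp ?_
    refine lintegral_tendsto_of_tendsto_of_monotone ?_ ?_ ?_
    · intro k
      exact (((hfm.min (mb.const_mul _)).pow_const p).ennreal_ofReal).aemeasurable
    · refine Filter.Eventually.of_forall fun x i j hij => ?_
      apply ENNReal.ofReal_le_ofReal
      refine Real.rpow_le_rpow (h0 i x) ?_ hp.le
      apply min_le_min_left
      have : (i : ℝ) ≤ j := by exact_mod_cast hij
      exact mul_le_mul_of_nonneg_right (by linarith) (bub_pos μ x).le
    · refine Filter.Eventually.of_forall fun x => ?_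
      refine tendsto_const_nhds.congr' ?_
      obtain ⟨N, hN⟩ := exists_nat_ge (f x / bub μ x)
      filter_upwards [Filter.eventually_ge_atTop N] with k hk
      rw [min_eq_left]
      rw [div_le_iff₀ (bub_pos μ x)] at hN
      have : (N : ℝ) ≤ k := by exact_mod_cast hk
      exact hN.trans (mul_le_mul_of_nonneg_right (by linarith) (bub_pos μ x).le)

/-- the sharp reversed HLS inequality -/
theorem crit_sharp {n : ℕ} (hn : 1 ≤ n) {μ : ℝ} (hμ : 0 < μ)
    {f g : EE n → ℝ} (hf : ∀ x, 0 ≤ f x) (hg : ∀ x, 0 ≤ g x) (hfm : Measurable f) (hgm : Measurable g) :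
    ENNReal.ofReal (NN n μ) * (nrm (pp n μ) f * nrm (pp n μ) g) ≤ DD μ f g := by
  have hp := pp_pos hn hμ
  have mb := measurable_bub (n := n) μ
  rw [← nrm_iSup (μ := μ) hp hf hfm, ← nrm_iSup (μ := μ) hp hg hgm]
  simp only [ENNReal.mul_iSup, ENNReal.iSup_mul]
  refine iSup_le fun i => iSup_le fun j => ?_
  have h0 : ∀ (f : EE n → ℝ), (∀ x, 0 ≤ f x) → ∀ (k : ℕ) x, 0 ≤ min (f x) (((k : ℝ) + 1) * bub μ x) :=
    fun f hf k x => le_min (hf x) (mul_nonneg (by positivity) (bub_pos μ x).le)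
  have hb : ∀ (f : EE n → ℝ) (k l : ℕ) x, min (f x) (((k : ℝ) + 1) * bub μ x) ≤
      ((k : ℝ) + l + 1) * bub μ x := by
    intro f k l x
    refine (min_le_right _ _).trans (mul_le_mul_of_nonneg_right ?_ (bub_pos μ x).le)
    have : (0 : ℝ) ≤ l := by positivity
    linarith
  first
  | refine (crit_bdd hn hμ (k := (i : ℝ) + j + 1) (by positivity) (h0 f hf i) (h0 g hg j)
      (hfm.min (mb.const_mul _)) (hgm.min (mb.const_mul _)) (hb f i j)
      (fun x => by rw [add_comm (i : ℝ) j]; exact hb g j i x)).trans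
      (DD_mono (h0 f hf i) (h0 g hg j) (fun x => min_le_left _ _) (fun x => min_le_left _ _))
  | refine (crit_bdd hn hμ (k := (j : ℝ) + i + 1) (by positivity) (h0 f hf j) (h0 g hg i)
      (hfm.min (mb.const_mul _)) (hgm.min (mb.const_mul _)) (hb f j i)
      (fun x => by rw [add_comm (j : ℝ) i]; exact hb g i j x)).trans
      (DD_mono (h0 f hf j) (h0 g hg i) (fun x => min_le_left _ _) (fun x => min_le_left _ _))

end RHLS

namespace RHLS
open EuclideanGeometry

lemma lint_of_int {f : ℝ → ℝ} (hf : ∀ x ∈ Set.Ioi (0 : ℝ), 0 ≤ f x) {v : ℝ} (hv : 0 < v)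
    (h : ∫ x in Set.Ioi (0 : ℝ), f x = v) :
    ∫⁻ x in Set.Ioi (0 : ℝ), ENNReal.ofReal (f x) = ENNReal.ofReal v := by
  have hi : Integrable f (volume.restrict (Set.Ioi 0)) := by
    by_contra hc
    rw [integral_undef hc] at h
    linarith
  rw [← h, ofReal_integral_eq_lintegral_ofReal hi]
  exact (ae_restrict_iff' measurableSet_Ioi).2 (Filter.Eventually.of_forall hf)

lemma beta_int {a c : ℝ} (ha : -1 < a) (hc : (a + 1) / 2 < c) :
    ∫ r in Set.Ioi (0 : ℝ), r ^ a * (1 + r ^ 2) ^ (-c) =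
      Real.Gamma ((a + 1) / 2) * Real.Gamma (c - (a + 1) / 2) / (2 * Real.Gamma c) := by
  have hc0 : 0 < c := by linarith
  have G1 := Real.Gamma_pos_of_pos hc0
  have G2 := Real.Gamma_pos_of_pos (show 0 < (a + 1) / 2 by linarith)
  have G3 := Real.Gamma_pos_of_pos (show 0 < c - (a + 1) / 2 by linarith)
  let F : ℝ → ℝ → ℝ := fun r t => r ^ a * (t ^ (c - 1) * Real.exp (-((1 + r ^ 2) * t)))
  have hFm : Measurable (Function.uncurry F) := by
    unfold F Function.uncurry
    fun_prop
  have e1 : ∀ r ∈ Set.Ioi (0 : ℝ), ∫⁻ t in Set.Ioi (0 : ℝ), ENNReal.ofReal (F r t) =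
      ENNReal.ofReal (Real.Gamma c) * ENNReal.ofReal (r ^ a * (1 + r ^ 2) ^ (-c)) := by
    intro r hr
    have hr0 : (0 : ℝ) < r := hr
    have h1 : (0 : ℝ) < 1 + r ^ 2 := by positivity
    have h2 : ∫ t in Set.Ioi (0 : ℝ), F r t = Real.Gamma c * (r ^ a * (1 + r ^ 2) ^ (-c)) := by
      simp only [F]
      rw [integral_const_mul, Real.integral_rpow_mul_exp_neg_mul_Ioi hc0 h1, one_div,
        Real.inv_rpow h1.le, Real.rpow_neg h1.le]
      ring
    rw [lint_of_int _ (by positivity) h2, ENNReal.ofReal_mul G1.le]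
    intro t ht
    have ht0 : (0 : ℝ) < t := ht
    simp only [F]; positivity
  have e2 : ∀ t ∈ Set.Ioi (0 : ℝ), ∫⁻ r in Set.Ioi (0 : ℝ), ENNReal.ofReal (F r t) =
      ENNReal.ofReal (1 / 2 * Real.Gamma ((a + 1) / 2)) *
        ENNReal.ofReal (t ^ (c - (a + 1) / 2 - 1) * Real.exp (-(1 * t))) := by
    intro t ht
    have ht0 : (0 : ℝ) < t := ht
    have h2 : ∫ r in Set.Ioi (0 : ℝ), F r t = (1 / 2 * Real.Gamma ((a + 1) / 2)) *
        (t ^ (c - (a + 1) / 2 - 1) * Real.exp (-(1 * t))) := by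
      have : ∀ r : ℝ, F r t = (t ^ (c - 1) * Real.exp (-t)) * (r ^ a * Real.exp (-t * r ^ (2 : ℝ))) := by
        intro r
        simp only [F]
        rw [show -((1 + r ^ 2) * t) = -t + -t * r ^ (2 : ℝ) by rw [Real.rpow_two]; ring, Real.exp_add]
        ring
      simp only [this]
      rw [integral_const_mul, integral_rpow_mul_exp_neg_mul_rpow two_pos ha ht0,
        show c - (a + 1) / 2 - 1 = (c - 1) + -(a + 1) / 2 by ring, Real.rpow_add ht0]
      ring_nf
    rw [lint_of_int _ (by positivity) h2, ENNReal.ofReal_mul (by positivity)]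
    intro r hr
    have hr0 : (0 : ℝ) < r := hr
    simp only [F]; positivity
  have e3 := lintegral_lintegral_swap (μ := volume.restrict (Set.Ioi (0 : ℝ)))
    (ν := volume.restrict (Set.Ioi (0 : ℝ))) (f := fun r t => ENNReal.ofReal (F r t))
    (hFm.ennreal_ofReal.aemeasurable)
  rw [setLIntegral_congr_fun measurableSet_Ioi e1, setLIntegral_congr_fun measurableSet_Ioi e2,
    lintegral_const_mul' _ _ ENNReal.ofReal_ne_top, lintegral_const_mul' _ _ ENNReal.ofReal_ne_top,
    lint_of_int (f := fun t : ℝ => t ^ (c - (a + 1) / 2 - 1) * Real.exp (-(1 * t)))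
      (v := Real.Gamma (c - (a + 1) / 2)) _ G3] at e3
  · rw [← ENNReal.ofReal_mul (by positivity)] at e3
    have hnn : 0 ≤ᵐ[volume.restrict (Set.Ioi (0 : ℝ))] fun r : ℝ => r ^ a * (1 + r ^ 2) ^ (-c) := by
      refine (ae_restrict_iff' measurableSet_Ioi).2 (Filter.Eventually.of_forall fun r hr => ?_)
      have hr0 : (0 : ℝ) < r := hr
      simp only [Pi.zero_apply]
      positivity
    have hm : Measurable fun r : ℝ => r ^ a * (1 + r ^ 2) ^ (-c) := by fun_prop
    rw [integral_eq_lintegral_of_nonneg_ae hnn hm.aestronglyMeasurable]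
    have := congrArg ENNReal.toReal e3
    rw [ENNReal.toReal_mul, ENNReal.toReal_ofReal G1.le, ENNReal.toReal_ofReal (by positivity)] at this
    rw [_root_.eq_div_iff (by positivity)]
    linear_combination 2 * this
  · rw [Real.integral_rpow_mul_exp_neg_mul_Ioi (by linarith) one_pos]; simp
  · intro t ht
    have ht0 : (0 : ℝ) < t := ht
    positivity

lemma vol_const {n : ℕ} (hn : 1 ≤ n) :
    (n : ℝ) * (volume : Measure (EE n)).real (Metric.ball 0 1) = 2 * Real.pi ^ ((n : ℝ) / 2) / Real.Gamma ((n : ℝ) / 2) := by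
  have : Nonempty (Fin n) := ⟨⟨0, hn⟩⟩
  have hn' : (0 : ℝ) < n := by exact_mod_cast hn
  have G := Real.Gamma_pos_of_pos (show 0 < (n : ℝ) / 2 by positivity)
  rw [Measure.real, EuclideanSpace.volume_ball]
  simp only [Fintype.card_fin, ENNReal.ofReal_one, one_pow, one_mul]
  rw [ENNReal.toReal_ofReal (by positivity), Real.Gamma_add_one (by positivity), Real.sqrt_eq_rpow,
    ← Real.rpow_natCast, ← Real.rpow_mul Real.pi_pos.le, show 1 / 2 * (n : ℝ) = n / 2 by ring]
  field_simp

lemma radial_int {n : ℕ} (hn : 1 ≤ n) {s c : ℝ} (hs : 0 ≤ s) (hc : ((n : ℝ) + s) / 2 < c) :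
    ∫ y : EE n, ‖y‖ ^ s * (1 + ‖y‖ ^ 2) ^ (-c) =
      Real.pi ^ ((n : ℝ) / 2) / Real.Gamma ((n : ℝ) / 2) *
        (Real.Gamma (((n : ℝ) + s) / 2) * Real.Gamma (c - ((n : ℝ) + s) / 2) / Real.Gamma c) := by
  have := nontriv hn
  have hn' : (1 : ℝ) ≤ n := by exact_mod_cast hn
  have := integral_fun_norm_addHaar (volume : Measure (EE n)) (fun r : ℝ => r ^ s * (1 + r ^ 2) ^ (-c))
  rw [this]
  simp only [finrank_euclideanSpace, Fintype.card_fin, nsmul_eq_mul, smul_eq_mul]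
  have e : ∫ y in Set.Ioi (0 : ℝ), y ^ (n - 1) * (y ^ s * (1 + y ^ 2) ^ (-c)) =
      ∫ r in Set.Ioi (0 : ℝ), r ^ ((n : ℝ) - 1 + s) * (1 + r ^ 2) ^ (-c) := by
    refine setIntegral_congr_fun measurableSet_Ioi fun r hr => ?_
    have hr0 : (0 : ℝ) < r := hr
    change r ^ (n - 1) * (r ^ s * (1 + r ^ 2) ^ (-c)) = r ^ ((n : ℝ) - 1 + s) * (1 + r ^ 2) ^ (-c)
    rw [Real.rpow_add hr0, ← mul_assoc, ← Real.rpow_natCast, Nat.cast_sub hn, Nat.cast_one]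
  rw [e, beta_int (by linarith) (by linarith), ← mul_assoc, vol_const hn,
    show (n : ℝ) - 1 + s + 1 = n + s by ring]
  have G := Real.Gamma_pos_of_pos (show 0 < (n : ℝ) / 2 by positivity)
  have G1 := Real.Gamma_pos_of_pos (show 0 < c by linarith)
  field_simp

lemma SS_eq {n : ℕ} (hn : 1 ≤ n) :
    SS n = Real.pi ^ ((n : ℝ) / 2) * (Real.Gamma ((n : ℝ) / 2) / Real.Gamma n) := by
  have hn' : (1 : ℝ) ≤ n := by exact_mod_cast hn
  have h := radial_int hn (s := 0) (c := n) le_rfl (by linarith)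
  have G := Real.Gamma_pos_of_pos (show 0 < (n : ℝ) / 2 by positivity)
  have : SS n = ∫ y : EE n, ‖y‖ ^ (0 : ℝ) * (1 + ‖y‖ ^ 2) ^ (-(n : ℝ)) := by
    unfold SS ww
    refine integral_congr_ae (Filter.Eventually.of_forall fun y => ?_)
    simp only
    rw [Real.rpow_zero, one_mul, Real.inv_rpow (by positivity), Real.rpow_neg (by positivity)]
  rw [this, h, add_zero, show (n : ℝ) - n / 2 = n / 2 by ring]
  field_simp

lemma k0_eq {n : ℕ} (hn : 1 ≤ n) {μ : ℝ} (hμ : 0 < μ) :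
    k0 n μ = Real.pi ^ ((n : ℝ) / 2) * (Real.Gamma (((n : ℝ) + μ) / 2) / Real.Gamma ((n : ℝ) + μ / 2)) := by
  have hn' : (1 : ℝ) ≤ n := by exact_mod_cast hn
  have h := radial_int hn (s := μ) (c := n + μ / 2) hμ.le (by linarith)
  have G := Real.Gamma_pos_of_pos (show 0 < (n : ℝ) / 2 by positivity)
  have : k0 n μ = ∫ y : EE n, ‖y‖ ^ μ * (1 + ‖y‖ ^ 2) ^ (-((n : ℝ) + μ / 2)) := by
    unfold k0 pot bub ww
    refine integral_congr_ae (Filter.Eventually.of_forall fun y => ?_)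
    simp only
    rw [dist_zero_left, Real.inv_rpow (by positivity), Real.rpow_neg (by positivity)]
  rw [this, h, show (n : ℝ) + μ / 2 - (n + μ) / 2 = n / 2 by ring]
  field_simp

lemma NN_eq {n : ℕ} (hn : 1 ≤ n) {α : ℝ} (hα : (n : ℝ) < α) :
    NN n (α - n) = Real.pi ^ (((n : ℝ) - α) / 2) * (Real.Gamma (α / 2) / Real.Gamma (((n : ℝ) + α) / 2)) *
              (Real.Gamma ((n : ℝ) / 2) / Real.Gamma (n : ℝ)) ^ (-(α / (n : ℝ))) := by
  have hn' : (1 : ℝ) ≤ n := by exact_mod_cast hn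
  have G := Real.Gamma_pos_of_pos (show 0 < (n : ℝ) / 2 by positivity)
  have G1 := Real.Gamma_pos_of_pos (show 0 < (n : ℝ) by positivity)
  have e : 1 - 2 / pp n (α - n) = -(α / n) := by
    unfold pp
    have : (n : ℝ) + (α - n) / 2 ≠ 0 := by linarith
    field_simp
    ring
  rw [NN, e, SS_eq hn, k0_eq hn (by linarith), Real.mul_rpow (by positivity) (by positivity),
    ← Real.rpow_mul Real.pi_pos.le, show ((n : ℝ) + (α - n)) / 2 = α / 2 by ring,
    show (n : ℝ) + (α - n) / 2 = (n + α) / 2 by ring,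
    show ((n : ℝ) - α) / 2 = n / 2 + n / 2 * (-(α / n)) by field_simp; ring, Real.rpow_add Real.pi_pos]
  ring
end RHLS

namespace RHLS
open EuclideanGeometry Filter Topology

lemma const_of_sq {n : ℕ} {k : EE n → ℝ} (h : ∀ x y, k x - dist x y ^ 2 ≤ k y) (x y : EE n) : k x = k y := by
  have hd : ∀ x, HasFDerivAt k (0 : EE n →L[ℝ] ℝ) x := by
    intro x
    have h1 : (fun y => k y - k x) =O[𝓝 x] fun y => ‖y - x‖ ^ 2 := by
      refine Asymptotics.IsBigO.of_bound 1 (Eventually.of_forall fun y => ?_)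
      rw [Real.norm_eq_abs, Real.norm_eq_abs, one_mul, abs_of_nonneg (sq_nonneg ‖y - x‖), abs_le, ← dist_eq_norm]
      have := h x y
      have := h y x
      rw [dist_comm x y] at *
      constructor <;> linarith
    have h2 := h1.hasFDerivAt (𝕜 := ℝ) (n := 2) (by norm_num)
    simpa using h2
  exact is_const_of_fderiv_eq_zero (𝕜 := ℝ) (fun x => (hd x).differentiableAt) (fun x => (hd x).fderiv) x y

lemma ms_point {n : ℕ} (hn : 1 ≤ n) {h : EE n → ℝ} (hc : Continuous h)
    (hl : Tendsto (fun x => h x / ‖x‖ ^ 2) (cocompact (EE n)) (𝓝 1)) (a : EE n)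
    (hpos : 0 < h a)
    (hd : ∀ ρ, 0 < ρ → (∀ z : EE n, ρ < ‖z‖ ^ 2 → ρ * h (a + z) ≤ ‖z‖ ^ 2 * h (a + (ρ / ‖z‖ ^ 2) • z)) ∨
      (∀ z : EE n, ρ < ‖z‖ ^ 2 → ‖z‖ ^ 2 * h (a + (ρ / ‖z‖ ^ 2) • z) ≤ ρ * h (a + z))) (z : EE n) (hz : z ≠ 0) :
    h a * h (a + z) = ‖z‖ ^ 2 * h (a + (h a / ‖z‖ ^ 2) • z) := by
  have := nontriv hn
  have hnt : NeBot (cocompact (EE n)) := inferInstance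
  have hlim1 : Tendsto (fun z => h (a + z) / ‖z‖ ^ 2) (cocompact (EE n)) (𝓝 1) := by
    have ht : Tendsto (fun z : EE n => a + z) (cocompact (EE n)) (cocompact (EE n)) :=
      (Homeomorph.addLeft a).isClosedEmbedding.tendsto_cocompact
    have h1 := hl.comp ht
    have h2 : Tendsto (fun z : EE n => ‖a + z‖ / ‖z‖) (cocompact (EE n)) (𝓝 1) := by
      have h3 : Tendsto (fun z : EE n => ‖a‖ / ‖z‖) (cocompact (EE n)) (𝓝 0) :=
        tendsto_const_nhds.div_atTop (tendsto_norm_cocompact_atTop)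
      have h4 : ∀ᶠ z : EE n in cocompact (EE n), ‖z‖ > 0 := tendsto_norm_cocompact_atTop.eventually_gt_atTop 0
      refine tendsto_of_tendsto_of_tendsto_of_le_of_le' (g := fun z : EE n => 1 - ‖a‖ / ‖z‖)
        (h := fun z : EE n => 1 + ‖a‖ / ‖z‖) (by simpa using h3.const_sub 1) (by simpa using h3.const_add 1) ?_ ?_
      · filter_upwards [h4] with z hz
        rw [le_div_iff₀ hz, sub_mul, div_mul_cancel₀ _ hz.ne']
        have := norm_sub_norm_le z (-a)
        rw [norm_neg, sub_neg_eq_add, add_comm z a] at this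
        linarith
      · filter_upwards [h4] with z hz
        rw [div_le_iff₀ hz, add_mul, div_mul_cancel₀ _ hz.ne']
        have := norm_add_le a z
        linarith
    have h5 := h1.mul (h2.pow 2)
    simp only [one_pow, mul_one] at h5
    refine h5.congr' ?_
    have h6 : ∀ᶠ z : EE n in cocompact (EE n), ‖a + z‖ > 0 :=
      (tendsto_norm_cocompact_atTop.comp ht).eventually_gt_atTop 0
    have h4 : ∀ᶠ z : EE n in cocompact (EE n), ‖z‖ > 0 := tendsto_norm_cocompact_atTop.eventually_gt_atTop 0
    filter_upwards [h4, h6] with z hz hz2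
    simp only [Function.comp]
    field_simp
  have hlim2 : ∀ ρ : ℝ, Tendsto (fun z : EE n => h (a + (ρ / ‖z‖ ^ 2) • z)) (cocompact (EE n)) (𝓝 (h a)) := by
    intro ρ
    have h1 : Tendsto (fun z : EE n => (ρ / ‖z‖ ^ 2) • z) (cocompact (EE n)) (𝓝 0) := by
      rw [tendsto_zero_iff_norm_tendsto_zero]
      have h3 : Tendsto (fun z : EE n => |ρ| / ‖z‖) (cocompact (EE n)) (𝓝 0) :=
        tendsto_const_nhds.div_atTop (tendsto_norm_cocompact_atTop)
      refine h3.congr' ?_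
      have h4 : ∀ᶠ z : EE n in cocompact (EE n), ‖z‖ > 0 := tendsto_norm_cocompact_atTop.eventually_gt_atTop 0
      filter_upwards [h4] with z hz
      rw [norm_smul, Real.norm_eq_abs, abs_div, abs_of_nonneg (by positivity : 0 ≤ ‖z‖ ^ 2)]
      field_simp
    have := (hc.tendsto (a + 0)).comp ((tendsto_const_nhds (x := a)).add h1)
    simpa [Function.comp_def] using this
  have hfar : ∀ ρ : ℝ, ∀ᶠ z : EE n in cocompact (EE n), ρ < ‖z‖ ^ 2 ∧ 0 < ‖z‖ := by
    intro ρ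
    have h4 : ∀ᶠ z : EE n in cocompact (EE n), ‖z‖ > max 1 ρ := tendsto_norm_cocompact_atTop.eventually_gt_atTop _
    filter_upwards [h4] with z hz
    have h5 := lt_of_le_of_lt (le_max_left _ _) hz
    have h6 := lt_of_le_of_lt (le_max_right _ _) hz
    constructor <;> nlinarith
  let P : Set ℝ := {ρ | ∀ z : EE n, ρ < ‖z‖ ^ 2 → ρ * h (a + z) ≤ ‖z‖ ^ 2 * h (a + (ρ / ‖z‖ ^ 2) • z)}
  let Q : Set ℝ := {ρ | ∀ z : EE n, ρ < ‖z‖ ^ 2 → ‖z‖ ^ 2 * h (a + (ρ / ‖z‖ ^ 2) • z) ≤ ρ * h (a + z)}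
  have hP : ∀ ρ ∈ P, ρ ≤ h a := by
    intro ρ hρ
    have := le_of_tendsto_of_tendsto (hlim1.const_mul ρ) (hlim2 ρ) (by
      filter_upwards [hfar ρ] with z hz
      have := hρ z hz.1
      rw [← mul_div_assoc, div_le_iff₀ (pow_pos hz.2 2)]
      linarith)
    linarith
  have hQ : ∀ ρ ∈ Q, h a ≤ ρ := by
    intro ρ hρ
    have := le_of_tendsto_of_tendsto (hlim2 ρ) (hlim1.const_mul ρ) (by
      filter_upwards [hfar ρ] with z hz
      have := hρ z hz.1
      rw [← mul_div_assoc, le_div_iff₀ (pow_pos hz.2 2)]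
      linarith)
    linarith
  have hcz : ∀ z : EE n, Continuous fun ρ : ℝ => ‖z‖ ^ 2 * h (a + (ρ / ‖z‖ ^ 2) • z) := by
    intro z
    exact continuous_const.mul (hc.comp (continuous_const.add ((continuous_id.div_const _).smul continuous_const)))
  have cP : IsClosed P := by
    have : P = ⋂ z : EE n, ({ρ : ℝ | ‖z‖ ^ 2 ≤ ρ} ∪ {ρ | ρ * h (a + z) ≤ ‖z‖ ^ 2 * h (a + (ρ / ‖z‖ ^ 2) • z)}) := by
      ext ρ
      simp only [P, Set.mem_ofPred_eq, Set.mem_iInter, Set.mem_union, ← not_lt (b := ‖(_ : EE n)‖ ^ 2), imp_iff_not_or]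
    rw [this]
    exact isClosed_iInter fun z => (isClosed_le continuous_const continuous_id).union
      (isClosed_le (continuous_id.mul continuous_const) (hcz z))
  have cQ : IsClosed Q := by
    have : Q = ⋂ z : EE n, ({ρ : ℝ | ‖z‖ ^ 2 ≤ ρ} ∪ {ρ | ‖z‖ ^ 2 * h (a + (ρ / ‖z‖ ^ 2) • z) ≤ ρ * h (a + z)}) := by
      ext ρ
      simp only [Q, Set.mem_ofPred_eq, Set.mem_iInter, Set.mem_union, ← not_lt (b := ‖(_ : EE n)‖ ^ 2), imp_iff_not_or]
    rw [this]
    exact isClosed_iInter fun z => (isClosed_le continuous_const continuous_id).union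
      (isClosed_le (hcz z) (continuous_id.mul continuous_const))
  have hpq := isPreconnected_closed_iff.1 (isPreconnected_Ioi (a := (0 : ℝ))) P Q cP cQ
    (fun ρ hρ => hd ρ hρ)
    (by
      refine ⟨h a / 2, by simpa using hpos, ?_⟩
      rcases hd (h a / 2) (by linarith) with h1 | h1
      · exact h1
      · have := hQ _ h1; linarith)
    (by
      refine ⟨h a * 2, by simpa using hpos, ?_⟩
      rcases hd (h a * 2) (by linarith) with h1 | h1
      · have := hP _ h1; linarith
      · exact h1)
  obtain ⟨ρ, hρ0, hρP, hρQ⟩ := hpq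
  have hρ : ρ = h a := le_antisymm (hP _ hρP) (hQ _ hρQ)
  subst hρ
  have key : ∀ z : EE n, h a < ‖z‖ ^ 2 → h a * h (a + z) = ‖z‖ ^ 2 * h (a + (h a / ‖z‖ ^ 2) • z) :=
    fun z hz => le_antisymm (hρP z hz) (hρQ z hz)
  have hz0 : 0 < ‖z‖ := norm_pos_iff.2 hz
  rcases lt_trichotomy (h a) (‖z‖ ^ 2) with h1 | h1 | h1
  · exact key z h1
  · rw [← h1, div_self hpos.ne', one_smul]
  · have e1 : ‖(h a / ‖z‖ ^ 2) • z‖ ^ 2 = h a ^ 2 / ‖z‖ ^ 2 := by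
      rw [norm_smul, Real.norm_eq_abs, mul_pow, sq_abs]
      field_simp
    have e2 : (h a / (h a ^ 2 / ‖z‖ ^ 2)) • (h a / ‖z‖ ^ 2) • z = z := by
      rw [smul_smul]
      convert one_smul ℝ z using 2
      field_simp
    have := key ((h a / ‖z‖ ^ 2) • z) (by rw [e1, lt_div_iff₀ (by positivity)]; nlinarith)
    rw [e1, e2] at this
    field_simp at this
    linarith

lemma ms_main {n : ℕ} (hn : 1 ≤ n) {h : EE n → ℝ} (hc : Continuous h) (hpos : ∀ x, 0 < h x) {l : ℝ} (hl0 : 0 < l)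
    (hl : Tendsto (fun x => h x / ‖x‖ ^ 2) (cocompact (EE n)) (𝓝 l))
    (hd : ∀ (a : EE n) (ρ : ℝ), 0 < ρ →
      (∀ z : EE n, ρ < ‖z‖ ^ 2 → ρ * h (a + z) ≤ ‖z‖ ^ 2 * h (a + (ρ / ‖z‖ ^ 2) • z)) ∨
      (∀ z : EE n, ρ < ‖z‖ ^ 2 → ‖z‖ ^ 2 * h (a + (ρ / ‖z‖ ^ 2) • z) ≤ ρ * h (a + z))) :
    ∃ (x₀ : EE n) (d : ℝ), 0 < d ∧ ∀ x, h x = l * (‖x - x₀‖ ^ 2 + d ^ 2) := by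
  have := nontriv hn
  let k : EE n → ℝ := fun x => h x / l
  have kpos : ∀ x, 0 < k x := fun x => div_pos (hpos x) hl0
  have kc : Continuous k := hc.div_const l
  have klim : Tendsto (fun x => k x / ‖x‖ ^ 2) (cocompact (EE n)) (𝓝 1) := by
    have := hl.div_const l
    rw [div_self hl0.ne'] at this
    refine this.congr fun x => ?_
    simp only [k]; ring
  have keq : ∀ a z : EE n, z ≠ 0 → k a * k (a + z) = ‖z‖ ^ 2 * k (a + (k a / ‖z‖ ^ 2) • z) := by
    intro a z hz
    refine ms_point hn kc klim a (kpos a) (fun ρ hρ => ?_) z hz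
    rcases hd a ρ hρ with h1 | h1
    · left
      intro z hz
      simp only [k]
      rw [← mul_div_assoc, ← mul_div_assoc]
      exact div_le_div_of_nonneg_right (h1 z hz) hl0.le
    · right
      intro z hz
      simp only [k]
      rw [← mul_div_assoc, ← mul_div_assoc]
      exact div_le_div_of_nonneg_right (h1 z hz) hl0.le
  have ktop : Tendsto k (cocompact (EE n)) atTop := by
    have h1 : Tendsto (fun x : EE n => ‖x‖ ^ 2) (cocompact (EE n)) atTop :=
      (tendsto_pow_atTop two_ne_zero).comp tendsto_norm_cocompact_atTop
    refine (klim.pos_mul_atTop one_pos h1).congr' ?_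
    have h4 : ∀ᶠ z : EE n in cocompact (EE n), ‖z‖ > 0 := tendsto_norm_cocompact_atTop.eventually_gt_atTop 0
    filter_upwards [h4] with z hz
    field_simp
  obtain ⟨x₀, hx₀⟩ := kc.exists_forall_le ktop
  have kge : ∀ x, ‖x - x₀‖ ^ 2 ≤ k x := by
    intro x
    by_cases hx : x = x₀
    · subst hx; simpa using (kpos x).le
    have h1 := keq x₀ (x - x₀) (sub_ne_zero.2 hx)
    rw [add_sub_cancel] at h1
    have h2 := hx₀ (x₀ + (k x₀ / ‖x - x₀‖ ^ 2) • (x - x₀))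
    have h3 : ‖x - x₀‖ ^ 2 * k x₀ ≤ k x₀ * k x := by
      rw [h1]; exact mul_le_mul_of_nonneg_left h2 (by positivity)
    have := kpos x₀
    nlinarith
  have hk : ∀ x y, (k x - ‖x - x₀‖ ^ 2) - dist x y ^ 2 ≤ k y - ‖y - x₀‖ ^ 2 := by
    intro x y
    by_cases hxy : y = x
    · subst hxy; simp
    have hz : y - x ≠ 0 := sub_ne_zero.2 hxy
    have hz0 : 0 < ‖y - x‖ := norm_pos_iff.2 hz
    have h1 := keq x (y - x) hz
    rw [add_sub_cancel] at h1
    have h2 := kge (x + (k x / ‖y - x‖ ^ 2) • (y - x))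
    have e1 : ‖x + (k x / ‖y - x‖ ^ 2) • (y - x) - x₀‖ ^ 2 = ‖x - x₀‖ ^ 2 + 2 * ((k x / ‖y - x‖ ^ 2) * inner ℝ (x - x₀) (y - x)) + (k x / ‖y - x‖ ^ 2) ^ 2 * ‖y - x‖ ^ 2 := by
      rw [show x + (k x / ‖y - x‖ ^ 2) • (y - x) - x₀ = (x - x₀) + (k x / ‖y - x‖ ^ 2) • (y - x) by abel,
        norm_add_sq_real, inner_smul_right, norm_smul, mul_pow, Real.norm_eq_abs, sq_abs]
    have e2 : ‖y - x₀‖ ^ 2 = ‖x - x₀‖ ^ 2 + 2 * inner ℝ (x - x₀) (y - x) + ‖y - x‖ ^ 2 := by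
      rw [show y - x₀ = (x - x₀) + (y - x) by abel, norm_add_sq_real]
    have h3 : ‖y - x‖ ^ 2 * ‖x + (k x / ‖y - x‖ ^ 2) • (y - x) - x₀‖ ^ 2 ≤ k x * k y := by
      rw [h1]; exact mul_le_mul_of_nonneg_left h2 (by positivity)
    rw [e1] at h3
    have h4 : ‖y - x‖ ^ 2 * (‖x - x₀‖ ^ 2 + 2 * ((k x / ‖y - x‖ ^ 2) * inner ℝ (x - x₀) (y - x)) + (k x / ‖y - x‖ ^ 2) ^ 2 * ‖y - x‖ ^ 2) = ‖y - x‖ ^ 2 * ‖x - x₀‖ ^ 2 + 2 * k x * inner ℝ (x - x₀) (y - x) + k x ^ 2 := by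
      field_simp
    rw [h4] at h3
    rw [dist_comm, dist_eq_norm, e2]
    have h5 := kpos x
    have h6 := kge x
    have hZ : 0 ≤ ‖y - x‖ ^ 2 := by positivity
    have hX : 0 ≤ ‖x - x₀‖ ^ 2 := by positivity
    generalize inner ℝ (x - x₀) (y - x) = I at *
    generalize ‖y - x‖ ^ 2 = Z at *
    generalize ‖x - x₀‖ ^ 2 = X at *
    by_contra hcon
    push Not at hcon
    have := mul_lt_mul_of_pos_left hcon h5
    nlinarith
  have hconst := fun x => const_of_sq hk x x₀
  simp only [sub_self, norm_zero] at hconst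
  refine ⟨x₀, Real.sqrt (k x₀), Real.sqrt_pos.2 (kpos x₀), fun x => ?_⟩
  rw [Real.sq_sqrt (kpos x₀).le]
  have h1 := hconst x
  have h2 : h x = l * k x := by simp only [k]; field_simp
  rw [h2]
  congr 1
  linarith
end RHLS

namespace RHLS
open EuclideanGeometry Filter Topology

lemma cov {n : ℕ} (x₀ : EE n) {d : ℝ} (hd : 0 < d) (F : EE n → ℝ) :
    ∫ y, F y = d ^ (n : ℝ) * ∫ w, F (x₀ + d • w) := by
  have h1 := Measure.integral_comp_smul (volume : Measure (EE n)) (fun y => F (x₀ + y)) d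
  rw [h1, integral_add_left_eq_self (fun y => F y) x₀]
  simp only [finrank_euclideanSpace, Fintype.card_fin, smul_eq_mul, Real.rpow_natCast]
  rw [abs_of_pos (by positivity)]
  field_simp

noncomputable def QB {n : ℕ} (x₀ : EE n) (d : ℝ) (x : EE n) : ℝ := ‖x - x₀‖ ^ 2 + d ^ 2

lemma QB_pos {n : ℕ} (x₀ : EE n) {d : ℝ} (hd : 0 < d) (x : EE n) : 0 < QB x₀ d x := by
  unfold QB; positivity

lemma QB_cov {n : ℕ} (x₀ : EE n) {d : ℝ} (w : EE n) : QB x₀ d (x₀ + d • w) = d ^ 2 * (ww w)⁻¹ := by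
  unfold QB ww
  rw [add_sub_cancel_left, norm_smul, mul_pow, Real.norm_eq_abs, sq_abs, inv_inv]
  ring

lemma measurable_QB {n : ℕ} (x₀ : EE n) (d : ℝ) : Measurable (QB x₀ d) := by
  unfold QB; fun_prop

lemma QB_cov_rpow {n : ℕ} (x₀ : EE n) {d : ℝ} (hd : 0 < d) (w : EE n) (c : ℝ) :
    QB x₀ d (x₀ + d • w) ^ (-c) = d ^ (-(2 * c)) * ww w ^ c := by
  have h := ww_pos w
  rw [QB_cov, Real.mul_rpow (by positivity) (by positivity), Real.inv_rpow h.le, Real.rpow_neg h.le, inv_inv,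
    ← Real.rpow_two, ← Real.rpow_mul hd.le]
  ring_nf

lemma pot_QB {n : ℕ} (hn : 1 ≤ n) {μ : ℝ} (hμ : 0 < μ) (x₀ : EE n) {d : ℝ} (hd : 0 < d) (x : EE n) :
    pot μ (fun y => QB x₀ d y ^ (-((n : ℝ) + μ / 2))) x =
      d ^ (-((n : ℝ) + μ)) * k0 n μ * QB x₀ d x ^ (μ / 2) := by
  unfold pot
  rw [cov x₀ hd]
  set x' : EE n := d⁻¹ • (x - x₀) with hx'
  have hx : x = x₀ + d • x' := by
    rw [hx', smul_smul, mul_inv_cancel₀ hd.ne', one_smul]; abel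
  have e : ∀ w : EE n, dist x (x₀ + d • w) ^ μ * QB x₀ d (x₀ + d • w) ^ (-((n : ℝ) + μ / 2)) =
      (d ^ μ * d ^ (-(2 * ((n : ℝ) + μ / 2)))) * (dist x' w ^ μ * bub μ w) := by
    intro w
    rw [QB_cov_rpow x₀ hd, hx, dist_add_left, dist_smul₀, Real.norm_of_nonneg hd.le,
      Real.mul_rpow hd.le dist_nonneg, bub]
    ring
  simp only [e]
  rw [integral_const_mul]
  have h2 := pot_bub hn hμ x'
  rw [pot] at h2
  rw [h2]
  have h3 := QB_cov_rpow x₀ hd x' (-(μ / 2))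
  rw [← hx, neg_neg] at h3
  rw [h3]
  rw [show d ^ (n : ℝ) * (d ^ μ * d ^ (-(2 * ((n : ℝ) + μ / 2))) * (k0 n μ * ww x' ^ (-(μ / 2)))) =
    (d ^ (n : ℝ) * d ^ μ * d ^ (-(2 * ((n : ℝ) + μ / 2)))) * (k0 n μ * ww x' ^ (-(μ / 2))) by ring,
    show d ^ (-((n : ℝ) + μ)) * k0 n μ * (d ^ (-(2 * -(μ / 2))) * ww x' ^ (-(μ / 2))) =
    (d ^ (-((n : ℝ) + μ)) * d ^ (-(2 * -(μ / 2)))) * (k0 n μ * ww x' ^ (-(μ / 2))) by ring,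
    ← Real.rpow_add hd, ← Real.rpow_add hd, ← Real.rpow_add hd]
  congr 2
  ring

lemma int_QB {n : ℕ} (x₀ : EE n) {d : ℝ} (hd : 0 < d) :
    ∫ y, QB x₀ d y ^ (-(n : ℝ)) = d ^ (-(n : ℝ)) * SS n := by
  rw [cov x₀ hd]
  simp only [QB_cov_rpow x₀ hd]
  rw [integral_const_mul, ← mul_assoc, ← Real.rpow_add hd]
  unfold SS
  congr 2
  ring

lemma integrable_of_pos {n : ℕ} {F : EE n → ℝ} (h : 0 < ∫ y, F y) : Integrable F := by
  by_contra hc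
  rw [integral_undef hc] at h
  exact lt_irrefl _ h

lemma NN_QB {n : ℕ} (hn : 1 ≤ n) {μ : ℝ} (hμ : 0 < μ) {d : ℝ} (hd : 0 < d) :
    NN n μ = (d ^ (-((n : ℝ) + μ)) * k0 n μ) * (d ^ (-(n : ℝ)) * SS n) ^ (1 - 2 / pp n μ) := by
  have hn' : (1 : ℝ) ≤ n := by exact_mod_cast hn
  have hS := SS_pos hn
  rw [NN, Real.mul_rpow (by positivity) hS.le, ← Real.rpow_mul hd.le]
  have : d ^ (-((n : ℝ) + μ)) * d ^ (-(n : ℝ) * (1 - 2 / pp n μ)) = 1 := by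
    rw [← Real.rpow_add hd]
    convert Real.rpow_zero d using 2
    unfold pp
    field_simp
    ring
  linear_combination (-(k0 n μ * SS n ^ (1 - 2 / pp n μ))) * this

lemma good_of_two {n : ℕ} {μ : ℝ} (hμ : 0 < μ) {f : EE n → ℝ} (hf : Measurable f) (h0 : ∀ x, 0 ≤ f x)
    {x₁ x₂ : EE n} (hx : x₁ ≠ x₂) (h1 : Integrable (fun y => dist x₁ y ^ μ * f y))
    (h2 : Integrable (fun y => dist x₂ y ^ μ * f y)) : Good μ f := by
  refine ⟨hf, h0, ?_⟩
  have hδ : 0 < dist x₁ x₂ := dist_pos.2 hx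
  set δ := dist x₁ x₂ with hδd
  set C : ℝ := 1 + (1 + ‖x₁‖ + ‖x₂‖) * 2 / δ with hC
  have hC0 : 0 < C := by positivity
  refine ((h1.add h2).const_mul (C ^ μ)).mono' ?_ (Eventually.of_forall fun y => ?_)
  · have := measurable_ww (n := n)
    exact Measurable.aestronglyMeasurable (by fun_prop)
  · have hw := ww_pos y
    rw [Real.norm_of_nonneg (mul_nonneg (Real.rpow_nonneg hw.le _) (h0 y))]
    simp only [Pi.add_apply]
    rw [← add_mul, ← mul_assoc]
    refine mul_le_mul_of_nonneg_right ?_ (h0 y)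
    have a1 : ww y ^ (-(μ / 2)) ≤ (1 + ‖y‖) ^ μ := by
      rw [Real.rpow_neg hw.le, ← Real.inv_rpow hw.le, ww, inv_inv, show μ / 2 = (1 / 2) * μ by ring,
        Real.rpow_mul (by positivity)]
      apply Real.rpow_le_rpow (by positivity) _ hμ.le
      rw [← Real.sqrt_eq_rpow, Real.sqrt_le_left (by positivity)]
      nlinarith [norm_nonneg y]
    set s := max (dist x₁ y) (dist x₂ y) with hs
    have s1 : dist x₁ y ≤ s := le_max_left _ _
    have s2 : dist x₂ y ≤ s := le_max_right _ _
    have s3 : δ ≤ 2 * s := by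
      have := dist_triangle_right x₁ x₂ y
      linarith
    have s0 : 0 ≤ s := dist_nonneg.trans s1
    have a2 : 1 + ‖y‖ ≤ C * s := by
      have t1 : ‖y‖ ≤ ‖x₁‖ + dist x₁ y := by
        have := norm_sub_norm_le y x₁
        rw [← dist_eq_norm, dist_comm] at this
        linarith
      have t2 : (1 + ‖x₁‖ + ‖x₂‖) ≤ (1 + ‖x₁‖ + ‖x₂‖) * 2 / δ * s := by
        rw [div_mul_eq_mul_div, le_div_iff₀ hδ, mul_assoc]
        exact mul_le_mul_of_nonneg_left s3 (by positivity)
      have := norm_nonneg x₂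
      rw [hC, add_mul]
      linarith
    have a3 : s ^ μ ≤ dist x₁ y ^ μ + dist x₂ y ^ μ := by
      have b1 : 0 ≤ dist x₁ y ^ μ := by positivity
      have b2 : 0 ≤ dist x₂ y ^ μ := by positivity
      rcases max_choice (dist x₁ y) (dist x₂ y) with h | h <;> rw [hs, h] <;> linarith
    calc ww y ^ (-(μ / 2)) ≤ (1 + ‖y‖) ^ μ := a1
      _ ≤ (C * s) ^ μ := Real.rpow_le_rpow (by positivity) a2 hμ.le
      _ = C ^ μ * s ^ μ := Real.mul_rpow hC0.le s0
      _ ≤ _ := mul_le_mul_of_nonneg_left a3 (by positivity)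

lemma QB_good {n : ℕ} (hn : 1 ≤ n) {μ : ℝ} (hμ : 0 < μ) (x₀ : EE n) {d : ℝ} (hd : 0 < d) :
    Good μ (fun y => QB x₀ d y ^ (-((n : ℝ) + μ / 2))) := by
  have := nontriv hn
  obtain ⟨x₁, x₂, hx⟩ := exists_pair_ne (EE n)
  have hm := measurable_QB x₀ d
  have hk := k0_pos hn hμ
  have hIntg : ∀ x, Integrable (fun y => dist x y ^ μ * QB x₀ d y ^ (-((n : ℝ) + μ / 2))) := by
    intro x
    apply integrable_of_pos
    have := pot_QB hn hμ x₀ hd x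
    unfold pot at this
    rw [this]
    have := QB_pos x₀ hd x
    positivity
  exact good_of_two hμ (by fun_prop) (fun x => Real.rpow_nonneg (QB_pos x₀ hd x).le _) hx (hIntg _) (hIntg _)

lemma lint_QB {n : ℕ} (hn : 1 ≤ n) (x₀ : EE n) {d : ℝ} (hd : 0 < d) :
    ∫⁻ y, ENNReal.ofReal (QB x₀ d y ^ (-(n : ℝ))) = ENNReal.ofReal (d ^ (-(n : ℝ)) * SS n) := by
  have hS := SS_pos hn
  have h := int_QB x₀ hd
  rw [← h, ofReal_integral_eq_lintegral_ofReal (integrable_of_pos (by rw [h]; positivity))]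
  exact Eventually.of_forall fun x => Real.rpow_nonneg (QB_pos x₀ hd x).le _

end RHLS

namespace RHLS
open EuclideanGeometry Filter Topology

lemma bubble_eq {n : ℕ} (hn : 1 ≤ n) {μ : ℝ} (hμ : 0 < μ) (x₀ : EE n) {c d : ℝ} (hc : 0 < c) (hd : 0 < d)
    {f : EE n → ℝ} (hf : ∀ᵐ x, f x = c * QB x₀ d x ^ (-((n : ℝ) + μ / 2))) {q : ℝ} (hq : q = -(2 * n / μ)) :
    (∫⁻ x, (∫⁻ y, ENNReal.ofReal (f y * dist x y ^ μ)) ^ q) ^ (1 / q) =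
      ENNReal.ofReal (NN n μ * (∫ x, |f x| ^ pp n μ) ^ (1 / pp n μ)) := by
  have hn' : (1 : ℝ) ≤ n := by exact_mod_cast hn
  have hk := k0_pos hn hμ
  have hS := SS_pos hn
  have hp := pp_pos hn hμ
  have hq0 : q ≠ 0 := by rw [hq]; have : 0 < 2 * n / μ := by positivity
                         linarith
  have hgood := QB_good hn hμ x₀ hd
  set κ := d ^ (-((n : ℝ) + μ)) * k0 n μ with hκ
  have hκ0 : 0 < κ := by positivity
  set S := d ^ (-(n : ℝ)) * SS n with hSd
  have hS0 : 0 < S := by positivity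
  have e1 : ∀ x, ∫⁻ y, ENNReal.ofReal (f y * dist x y ^ μ) = ENNReal.ofReal (c * κ * QB x₀ d x ^ (μ / 2)) := by
    intro x
    have : ∫⁻ y, ENNReal.ofReal (f y * dist x y ^ μ) =
        ∫⁻ y, ENNReal.ofReal (c * (dist x y ^ μ * QB x₀ d y ^ (-((n : ℝ) + μ / 2)))) := by
      refine lintegral_congr_ae ?_
      filter_upwards [hf] with y hy
      rw [hy]; congr 1; ring
    rw [this, ← ofReal_integral_eq_lintegral_ofReal ((hgood.integrable hμ x).const_mul c), integral_const_mul]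
    · have := pot_QB hn hμ x₀ hd x
      rw [pot] at this
      rw [this]; congr 1; ring
    · exact Eventually.of_forall fun y => mul_nonneg hc.le (mul_nonneg (Real.rpow_nonneg dist_nonneg _) (hgood.nonneg y))
  have e2 : ∀ x, (∫⁻ y, ENNReal.ofReal (f y * dist x y ^ μ)) ^ q =
      ENNReal.ofReal ((c * κ) ^ q) * ENNReal.ofReal (QB x₀ d x ^ (-(n : ℝ))) := by
    intro x
    have hB := QB_pos x₀ hd x
    rw [e1, ENNReal.ofReal_rpow_of_pos (by positivity), ← ENNReal.ofReal_mul (by positivity),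
      Real.mul_rpow (by positivity) (by positivity), ← Real.rpow_mul hB.le]
    congr 3
    rw [hq]; field_simp
  simp only [e2]
  rw [lintegral_const_mul' _ _ ENNReal.ofReal_ne_top, lint_QB hn x₀ hd, ← hSd,
    ← ENNReal.ofReal_mul (by positivity), ENNReal.ofReal_rpow_of_pos (by positivity)]
  congr 1
  have e3 : ∫ x, |f x| ^ pp n μ = c ^ pp n μ * S := by
    rw [hSd, ← int_QB x₀ hd, ← integral_const_mul]
    refine integral_congr_ae ?_
    filter_upwards [hf] with x hx
    have hB := QB_pos x₀ hd x
    rw [hx, abs_of_pos (by positivity), Real.mul_rpow hc.le (by positivity), ← Real.rpow_mul hB.le]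
    congr 2
    have := pp_mul (n := n) hμ
    linarith
  rw [e3, Real.mul_rpow (by positivity) hS0.le, Real.mul_rpow (by positivity) hS0.le, ← Real.rpow_mul (by positivity),
    ← Real.rpow_mul hc.le, mul_one_div_cancel hq0, mul_one_div_cancel hp.ne', Real.rpow_one, Real.rpow_one,
    NN_QB hn hμ hd, ← hκ, ← hSd]
  have : S ^ (1 / q) = S ^ (1 - 2 / pp n μ) * S ^ (1 / pp n μ) := by
    rw [← Real.rpow_add hS0]
    congr 1
    rw [hq]
    unfold pp
    field_simp
    ring
  rw [this]
  ring

lemma rpow_tangent_eq {p x y : ℝ} (hp : 0 < p) (hp1 : p < 1) (hx : 0 ≤ x) (hy : 0 < y)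
    (h : x ^ p = y ^ p + p * y ^ (p - 1) * (x - y)) : x = y := by
  by_contra hne
  have hs : x / y - 1 ≠ 0 := by
    intro h; apply hne; field_simp at h; linarith
  have h00 : 0 ≤ x / y := by positivity
  have h1 := rpow_one_add_lt_one_add_mul_self (s := x / y - 1) (by linarith) hs hp hp1
  rw [add_sub_cancel, Real.div_rpow hx hy.le, div_lt_iff₀ (by positivity), h, Real.rpow_sub_one hy.ne'] at h1
  have : (1 + p * (x / y - 1)) * y ^ p = y ^ p + p * (y ^ p / y) * (x - y) := by field_simp
  linarith

end RHLS

namespace RHLS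
open EuclideanGeometry Filter Topology

lemma nrm_pol {n : ℕ} (hn : 1 ≤ n) {μ : ℝ} (hμ : 0 < μ) (a : EE n) {R e : ℝ} (hR : 0 < R) (he : e ≠ 0)
    {f : EE n → ℝ} (hf : ∀ x, 0 ≤ f x) (hfm : Measurable f) :
    nrm (pp n μ) (pol μ a R e f) = nrm (pp n μ) f := by
  have hp := pp_pos hn hμ
  have key : ∀ g : EE n → ℝ, (∀ x, 0 ≤ g x) → Measurable g →
      ∫⁻ x, (ENNReal.ofReal (g x ^ pp n μ) + ENNReal.ofReal (refl μ a R g x ^ pp n μ)) =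
        2 * ∫⁻ x, ENNReal.ofReal (g x ^ pp n μ) := by
    intro g hg hgm
    rw [lintegral_add_left (by fun_prop), two_mul]
    congr 1
    rw [lintegral_inv hn a hR (fun x => ENNReal.ofReal (g x ^ pp n μ))]
    congr 1; ext x
    have hJ := J_pos (a := a) hR x
    rw [refl, Real.mul_rpow (by positivity) (hg _), ENNReal.ofReal_mul (by positivity), ← Real.rpow_mul hJ.le,
      mul_comm ((n : ℝ) + μ / 2), pp_mul hμ, Real.rpow_natCast]
  have h1 := key f hf hfm
  have h2 := key (pol μ a R e f) (pol_nonneg μ a hR hf) (measurable_pol μ a R e hfm)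
  have h3 : ∀ x, ENNReal.ofReal (pol μ a R e f x ^ pp n μ) + ENNReal.ofReal (refl μ a R (pol μ a R e f) x ^ pp n μ) =
    ENNReal.ofReal (f x ^ pp n μ) + ENNReal.ofReal (refl μ a R f x ^ pp n μ) :=
    fun x => pol_sum μ a hR he f x (fun t => ENNReal.ofReal (t ^ pp n μ))
  simp only [h3] at h2
  rw [h1] at h2
  unfold nrm
  rw [(ENNReal.mul_right_inj (by norm_num) (by norm_num)).1 h2]

lemma pot_limit {n : ℕ} {μ : ℝ} (hμ : 0 < μ) {f : EE n → ℝ} (h : Good μ f) :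
    Tendsto (fun x => pot μ f x / ‖x‖ ^ μ) (cocompact (EE n)) (𝓝 (∫ y, f y)) := by
  have hcg : (cocompact (EE n)).IsCountablyGenerated := by
    rw [← Metric.cobounded_eq_cocompact, ← comap_norm_atTop]
    infer_instance
  have e : ∀ x, pot μ f x / ‖x‖ ^ μ = ∫ y, (dist x y / ‖x‖) ^ μ * f y := by
    intro x
    rw [pot, ← integral_div]
    congr 1; ext y
    rw [Real.div_rpow dist_nonneg (norm_nonneg _)]; ring
  simp only [e]
  have hm := h.meas
  have hfar : ∀ᶠ z : EE n in cocompact (EE n), ‖z‖ ≥ 1 := tendsto_norm_cocompact_atTop.eventually_ge_atTop 1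
  refine tendsto_integral_filter_of_dominated_convergence (fun y => 2 ^ μ * (ww y ^ (-(μ / 2)) * f y)) ?_ ?_
    (h.int.const_mul _) ?_
  · exact Eventually.of_forall fun x => Measurable.aestronglyMeasurable (by fun_prop)
  · filter_upwards [hfar] with x hx
    refine Eventually.of_forall fun y => ?_
    have hw := ww_pos y
    rw [Real.norm_of_nonneg (mul_nonneg (Real.rpow_nonneg (by positivity) _) (h.nonneg y)), ← mul_assoc]
    refine mul_le_mul_of_nonneg_right ?_ (h.nonneg y)
    have a1 : ww y ^ (-(μ / 2)) = ((1 + ‖y‖ ^ 2) ^ (1 / 2 : ℝ)) ^ μ := by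
      rw [Real.rpow_neg hw.le, ← Real.inv_rpow hw.le, ww, inv_inv, show μ / 2 = (1 / 2) * μ by ring,
        Real.rpow_mul (by positivity)]
    rw [a1, ← Real.mul_rpow (by positivity) (by positivity)]
    apply Real.rpow_le_rpow (by positivity) _ hμ.le
    rw [← Real.sqrt_eq_rpow, div_le_iff₀ (by linarith)]
    have b1 : 1 ≤ √(1 + ‖y‖ ^ 2) := Real.one_le_sqrt.2 (by nlinarith)
    have b2 : ‖y‖ ≤ √(1 + ‖y‖ ^ 2) := Real.le_sqrt_of_sq_le (by linarith)
    have b3 : dist x y ≤ ‖x‖ + ‖y‖ := by rw [dist_eq_norm]; exact norm_sub_le x y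
    nlinarith
  · refine Eventually.of_forall fun y => ?_
    have h2 : Tendsto (fun x : EE n => dist x y / ‖x‖) (cocompact (EE n)) (𝓝 1) := by
      have h3 : Tendsto (fun z : EE n => ‖y‖ / ‖z‖) (cocompact (EE n)) (𝓝 0) :=
        tendsto_const_nhds.div_atTop (tendsto_norm_cocompact_atTop)
      refine tendsto_of_tendsto_of_tendsto_of_le_of_le' (g := fun z : EE n => 1 - ‖y‖ / ‖z‖)
        (h := fun z : EE n => 1 + ‖y‖ / ‖z‖) (by simpa using h3.const_sub 1) (by simpa using h3.const_add 1) ?_ ?_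
      · filter_upwards [hfar] with z hz
        have hz0 : 0 < ‖z‖ := by linarith
        rw [le_div_iff₀ hz0, sub_mul, div_mul_cancel₀ _ hz0.ne', dist_eq_norm]
        have := norm_sub_norm_le z y
        linarith
      · filter_upwards [hfar] with z hz
        have hz0 : 0 < ‖z‖ := by linarith
        rw [div_le_iff₀ hz0, add_mul, div_mul_cancel₀ _ hz0.ne', dist_eq_norm]
        have := norm_sub_le z y
        linarith
    have h3 := (h2.rpow_const (p := μ) (Or.inl one_ne_zero)).mul_const (f y)
    simpa using h3

lemma dich {n : ℕ} (hn : 1 ≤ n) {μ q : ℝ} (hμ : 0 < μ) (hq : q - 1 = -(2 * ((n : ℝ) + μ / 2) / μ)) {f : EE n → ℝ} (h : Good μ f)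
    (hpos : ∀ x, 0 < pot μ f x) (a : EE n) {R : ℝ} (hR : 0 < R)
    (hae : ∀ᵐ x : EE n, ∀ᵐ y : EE n, 0 ≤ ((dist x a ^ 2 - R ^ 2) *
        (pot μ f x ^ (q - 1) - refl μ a R (fun x => pot μ f x ^ (q - 1)) x)) *
        ((dist y a ^ 2 - R ^ 2) * (f y - refl μ a R f y))) :
    (∀ x, R < dist x a → pot μ f x ≤ J a R x ^ (-(μ / 2)) * pot μ f (inversion a R x)) ∨
    (∀ x, R < dist x a → J a R x ^ (-(μ / 2)) * pot μ f (inversion a R x) ≤ pot μ f x) := by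
  by_cases hP : ∀ x, R < dist x a → pot μ f x ≤ J a R x ^ (-(μ / 2)) * pot μ f (inversion a R x)
  · exact Or.inl hP
  right
  push Not at hP
  obtain ⟨x₁, hx₁, hlt⟩ := hP
  have hx₁a : x₁ ≠ a := by rintro rfl; rw [dist_self] at hx₁; linarith
  have hcu := h.continuous hμ
  have hcJ : ContinuousAt (J a R) x₁ := by
    have : (fun x => (R / dist x a) ^ 2) =ᶠ[𝓝 x₁] J a R := by
      filter_upwards [isOpen_ne.mem_nhds hx₁a] with x hx
      rw [J_of_ne hx]
    refine ContinuousAt.congr ?_ this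
    have : dist x₁ a ≠ 0 := dist_ne_zero.2 hx₁a
    fun_prop (disch := assumption)
  have hci : ContinuousAt (inversion a R) x₁ := by
    have : inversion a R = fun x => (R / dist x a) ^ 2 • (x - a) + a := by
      ext1 x; simp [inversion]
    rw [this]
    have : dist x₁ a ≠ 0 := dist_ne_zero.2 hx₁a
    fun_prop (disch := assumption)
  have hev : ∀ᶠ x in 𝓝 x₁, J a R x ^ (-(μ / 2)) * pot μ f (inversion a R x) < pot μ f x := by
    refine ContinuousAt.eventually_lt ?_ hcu.continuousAt hlt
    exact (hcJ.rpow_const (Or.inl (J_pos hR x₁).ne')).mul (ContinuousAt.comp (g := pot μ f) hcu.continuousAt hci)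
  have hev2 : ∀ᶠ x in 𝓝 x₁, R < dist x a :=
    (continuous_id.dist continuous_const).continuousAt.eventually (lt_mem_nhds hx₁)
  have hdense := Measure.dense_of_ae hae
  obtain ⟨x, hx1, hx2⟩ := hdense.inter_nhds_nonempty (hev.and hev2)
  obtain ⟨hx3, hx4⟩ : _ ∧ _ := hx2
  have hx1' : ∀ᵐ y : EE n, 0 ≤ ((dist x a ^ 2 - R ^ 2) *
        (pot μ f x ^ (q - 1) - refl μ a R (fun x => pot μ f x ^ (q - 1)) x)) *
        ((dist y a ^ 2 - R ^ 2) * (f y - refl μ a R f y)) := hx1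
  have hJ := J_pos (a := a) hR x
  have hneg : (dist x a ^ 2 - R ^ 2) *
        (pot μ f x ^ (q - 1) - refl μ a R (fun x => pot μ f x ^ (q - 1)) x) < 0 := by
    have c1 : 0 < dist x a ^ 2 - R ^ 2 := by nlinarith
    have c2 : refl μ a R (fun x => pot μ f x ^ (q - 1)) x =
        (J a R x ^ (-(μ / 2)) * pot μ f (inversion a R x)) ^ (q - 1) := by
      rw [refl, Real.mul_rpow (by positivity) (hpos _).le, ← Real.rpow_mul hJ.le, hq]
      congr 2
      field_simp
    have c3 : pot μ f x ^ (q - 1) < (J a R x ^ (-(μ / 2)) * pot μ f (inversion a R x)) ^ (q - 1) := by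
      apply Real.rpow_lt_rpow_of_neg (mul_pos (by positivity) (hpos _)) hx3
      rw [hq]
      have : 0 < 2 * ((n : ℝ) + μ / 2) / μ := by positivity
      linarith
    rw [c2]
    exact mul_neg_of_pos_of_neg c1 (by linarith)
  have hF : ∀ᵐ y : EE n, (dist y a ^ 2 - R ^ 2) * (f y - refl μ a R f y) ≤ 0 := by
    filter_upwards [hx1'] with y hy
    by_contra hc
    push Not at hc
    have := mul_neg_of_neg_of_pos hneg hc
    linarith
  intro w hw
  have hwa : w ≠ a := by rintro rfl; rw [dist_self] at hw; linarith
  have hd := (pot_diff hn μ a hR hwa f (h.integrable hμ)).1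
  have hle : ∫ y, (Ks μ a R w y - dist w y ^ μ) * (f y - refl μ a R f y) ≤ 0 := by
    apply integral_nonpos_of_ae
    filter_upwards [hF] with y hy
    have c1 : 0 < dist w a ^ 2 - R ^ 2 := by nlinarith
    simp only [Pi.zero_apply]
    rcases lt_trichotomy (dist y a ^ 2 - R ^ 2) 0 with h1 | h1 | h1
    · have h2 := Ks_le hμ a hR (y := y) hwa (mul_nonpos_of_nonneg_of_nonpos c1.le h1.le)
      have h3 : 0 ≤ f y - refl μ a R f y := by
        by_contra hc
        push Not at hc
        have := mul_pos_of_neg_of_neg h1 hc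
        linarith
      exact mul_nonpos_of_nonpos_of_nonneg (by linarith) h3
    · have h2 := Ks_le hμ a hR (y := y) hwa (by rw [h1, mul_zero])
      have h3 := Ks_ge hμ a hR (y := y) hwa (by rw [h1, mul_zero])
      rw [le_antisymm h2 h3]; simp
    · have h2 := Ks_ge hμ a hR (y := y) hwa (by positivity)
      have h3 : f y - refl μ a R f y ≤ 0 := by
        by_contra hc
        push Not at hc
        have := mul_pos h1 hc
        linarith
      exact mul_nonpos_of_nonneg_of_nonpos (by linarith) h3
  unfold pot
  linarith
end RHLS

namespace RHLS
open EuclideanGeometry Filter Topology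

/-- moving spheres conclusion for the potential -/
lemma pot_shape {n : ℕ} (hn : 1 ≤ n) {μ q : ℝ} (hμ : 0 < μ) (hq : q - 1 = -(2 * ((n : ℝ) + μ / 2) / μ))
    {f : EE n → ℝ} (h : Good μ f) (hfne : ¬ f =ᵐ[volume] 0)
    (hae : ∀ (a : EE n) (R : ℝ), 0 < R → ∀ᵐ x : EE n, ∀ᵐ y : EE n, 0 ≤ ((dist x a ^ 2 - R ^ 2) *
        (pot μ f x ^ (q - 1) - refl μ a R (fun x => pot μ f x ^ (q - 1)) x)) *
        ((dist y a ^ 2 - R ^ 2) * (f y - refl μ a R f y))) :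
    ∃ (x₀ : EE n) (d C : ℝ), 0 < d ∧ 0 < C ∧ ∀ x, pot μ f x = C * QB x₀ d x ^ (μ / 2) := by
  have hpos := pot_pos hn hμ h hfne
  have hcu := h.continuous hμ
  have hI : 0 < ∫ y, f y := by
    refine lt_of_le_of_ne (integral_nonneg h.nonneg) fun hz => hfne ?_
    exact (integral_eq_zero_iff_of_nonneg h.nonneg (h.integrable_self hμ)).1 hz.symm
  have hlim := (pot_limit hμ h).rpow_const (p := 2 / μ) (Or.inl hI.ne')
  have hlim' : Tendsto (fun x => pot μ f x ^ (2 / μ) / ‖x‖ ^ 2) (cocompact (EE n)) (𝓝 ((∫ y, f y) ^ (2 / μ))) := by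
    refine hlim.congr fun x => ?_
    rw [Real.div_rpow (hpos x).le (by positivity), ← Real.rpow_mul (norm_nonneg _), mul_div_cancel₀ _ hμ.ne',
      Real.rpow_two]
  have hl0 : 0 < (∫ y, f y) ^ (2 / μ) := by positivity
  obtain ⟨x₀, d, hd, hx⟩ := ms_main hn (h := fun x => pot μ f x ^ (2 / μ))
    (hcu.rpow_const fun x => Or.inl (hpos x).ne') (fun x => Real.rpow_pos_of_pos (hpos x) _) hl0 hlim' (by
      intro a ρ hρ
      have hR : 0 < √ρ := Real.sqrt_pos.2 hρ
      have conv : ∀ z : EE n, ρ < ‖z‖ ^ 2 → √ρ < dist (a + z) a ∧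
          (J a (√ρ) (a + z) ^ (-(μ / 2)) * pot μ f (inversion a (√ρ) (a + z))) ^ (2 / μ) =
            (‖z‖ ^ 2 * pot μ f (a + (ρ / ‖z‖ ^ 2) • z) ^ (2 / μ)) / ρ := by
        intro z hz
        have hz0 : 0 < ‖z‖ := by
          by_contra hc
          have : ‖z‖ = 0 := le_antisymm (not_lt.1 hc) (norm_nonneg _)
          rw [this] at hz; norm_num at hz; linarith
        have hza : a + z ≠ a := by
          intro hc; rw [add_eq_left] at hc; rw [hc] at hz0; simp at hz0
        have hdist : dist (a + z) a = ‖z‖ := by rw [dist_eq_norm, add_sub_cancel_left]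
        have hJ : J a (√ρ) (a + z) = ρ / ‖z‖ ^ 2 := by
          rw [J_of_ne hza, hdist, div_pow, Real.sq_sqrt hρ.le]
        have hinv : inversion a (√ρ) (a + z) = a + (ρ / ‖z‖ ^ 2) • z := by
          rw [inversion, hdist, div_pow, Real.sq_sqrt hρ.le]
          simp [add_comm]
        refine ⟨?_, ?_⟩
        · rw [hdist]; exact (Real.sqrt_lt' hz0).2 hz
        · rw [hJ, hinv, Real.mul_rpow (by positivity) (hpos _).le, ← Real.rpow_mul (by positivity),
            show -(μ / 2) * (2 / μ) = -1 by field_simp, Real.rpow_neg_one, inv_div]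
          ring
      rcases dich hn hμ hq h hpos a hR (hae a _ hR) with h1 | h1
      · left
        intro z hz
        obtain ⟨c1, c2⟩ := conv z hz
        have := Real.rpow_le_rpow (hpos _).le (h1 _ c1) (show 0 ≤ 2 / μ by positivity)
        rw [c2, le_div_iff₀ hρ] at this
        linarith
      · right
        intro z hz
        obtain ⟨c1, c2⟩ := conv z hz
        have := Real.rpow_le_rpow (mul_nonneg (Real.rpow_nonneg (J_pos hR _).le _) (hpos _).le)
          (h1 _ c1) (show 0 ≤ 2 / μ by positivity)
        rw [c2, div_le_iff₀ hρ] at this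
        linarith)
  refine ⟨x₀, d, ((∫ y, f y) ^ (2 / μ)) ^ (μ / 2), hd, by positivity, fun x => ?_⟩
  have h1 := congrArg (fun t => t ^ (μ / 2)) (hx x)
  rw [← Real.rpow_mul (hpos x).le, show 2 / μ * (μ / 2) = 1 by field_simp, Real.rpow_one,
    Real.mul_rpow hl0.le (by positivity)] at h1
  rw [h1, QB]

/-- equality in the tangent-line argument -/
lemma jensen_end {n : ℕ} (hn : 1 ≤ n) {μ q : ℝ} (hμ : 0 < μ) (hq : q = -(2 * n / μ))
    {f : EE n → ℝ} (h : Good μ f) (hfp : Integrable (fun x => f x ^ pp n μ))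
    {x₀ : EE n} {d C : ℝ} (hd : 0 < d) (hC : 0 < C) (hu : ∀ x, pot μ f x = C * QB x₀ d x ^ (μ / 2))
    (heq : (∫⁻ x, ENNReal.ofReal (pot μ f x ^ q)) ^ (1 / q) =
      ENNReal.ofReal (NN n μ * (∫ x, f x ^ pp n μ) ^ (1 / pp n μ))) :
    ∃ t, 0 < t ∧ ∀ᵐ x, f x = t * QB x₀ d x ^ (-((n : ℝ) + μ / 2)) := by
  have hn' : (1 : ℝ) ≤ n := by exact_mod_cast hn
  have hk := k0_pos hn hμ
  have hSS := SS_pos hn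
  have hp := pp_pos hn hμ
  have hp1 := pp_lt_one hn hμ
  have hpm := pp_mul (n := n) hμ
  have hN := NN_pos hn hμ
  have hNN := NN_QB hn hμ hd
  have hB := QB_pos x₀ hd
  have hBm := measurable_QB x₀ d
  have hv := QB_good hn hμ x₀ hd
  have hq0 : q ≠ 0 := by
    rw [hq]
    have : 0 < 2 * n / μ := by positivity
    linarith
  have hpot := pot_QB hn hμ x₀ hd
  have hlB := lint_QB hn x₀ hd
  have hIB := int_QB x₀ hd
  set κ := d ^ (-((n : ℝ) + μ)) * k0 n μ with hκ
  have hκ0 : 0 < κ := by positivity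
  set S := d ^ (-(n : ℝ)) * SS n with hS
  have hS0 : 0 < S := by positivity
  set p := pp n μ with hpd
  set F := ∫ x, f x ^ p with hFd
  have hF0 : 0 ≤ F := integral_nonneg fun x => Real.rpow_nonneg (h.nonneg x) _
  set t := C / κ with ht
  have ht0 : 0 < t := by positivity
  -- value of F
  have hF : F = t ^ p * S := by
    have e1 : ∀ x, ENNReal.ofReal (pot μ f x ^ q) = ENNReal.ofReal (C ^ q) * ENNReal.ofReal (QB x₀ d x ^ (-(n : ℝ))) := by
      intro x
      have := hB x
      rw [hu, ← ENNReal.ofReal_mul (by positivity), Real.mul_rpow hC.le (by positivity), ← Real.rpow_mul this.le]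
      congr 3
      rw [hq]; field_simp
    simp only [e1] at heq
    rw [lintegral_const_mul' _ _ ENNReal.ofReal_ne_top, hlB, ← ENNReal.ofReal_mul (by positivity),
      ENNReal.ofReal_rpow_of_pos (by positivity), ENNReal.ofReal_eq_ofReal_iff (by positivity) (by positivity),
      Real.mul_rpow (by positivity) hS0.le, ← Real.rpow_mul hC.le, mul_one_div_cancel hq0, Real.rpow_one, hNN] at heq
    have e2 : S ^ (1 / q) = S ^ (1 - 2 / p) * S ^ (1 / p) := by
      rw [← Real.rpow_add hS0]
      congr 1
      rw [hq, hpd]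
      unfold pp
      field_simp
      ring
    rw [e2] at heq
    have hS1 : 0 < S ^ (1 - 2 / p) := by positivity
    have e3 : F ^ (1 / p) = t * S ^ (1 / p) := by
      rw [ht]
      field_simp
      have := mul_right_cancel₀ hS1.ne' (a := κ * F ^ (1 / p)) (c := C * S ^ (1 / p)) (by linarith)
      linarith
    have e4 := congrArg (fun s => s ^ p) e3
    rw [← Real.rpow_mul hF0, one_div_mul_cancel hp.ne', Real.rpow_one, Real.mul_rpow ht0.le (by positivity),
      ← Real.rpow_mul hS0.le, one_div_mul_cancel hp.ne', Real.rpow_one] at e4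
    exact e4
  -- first moment
  have hmom : ∫⁻ x, ENNReal.ofReal (f x * QB x₀ d x ^ (μ / 2)) = ENNReal.ofReal (t * S) := by
    have e1 := DD_eq_pot hμ hv.nonneg h
    have e2 := DD_eq_pot hμ h.nonneg hv
    rw [DD_symm hv.meas h.meas, e2] at e1
    have e3 : ∀ x, ENNReal.ofReal (f x * pot μ (fun y => QB x₀ d y ^ (-((n : ℝ) + μ / 2))) x) =
        ENNReal.ofReal κ * ENNReal.ofReal (f x * QB x₀ d x ^ (μ / 2)) := by
      intro x
      rw [hpot, ← ENNReal.ofReal_mul hκ0.le]; congr 1; ring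
    have e4 : ∀ x, ENNReal.ofReal (QB x₀ d x ^ (-((n : ℝ) + μ / 2)) * pot μ f x) =
        ENNReal.ofReal C * ENNReal.ofReal (QB x₀ d x ^ (-(n : ℝ))) := by
      intro x
      rw [hu, ← ENNReal.ofReal_mul hC.le]; congr 1
      rw [mul_left_comm, ← Real.rpow_add (hB x)]
      congr 2; ring
    simp only [e3, e4] at e1
    rw [lintegral_const_mul' _ _ ENNReal.ofReal_ne_top, lintegral_const_mul' _ _ ENNReal.ofReal_ne_top, hlB] at e1
    have hk1 : ENNReal.ofReal κ ≠ 0 := by simpa using hκ0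
    apply (ENNReal.mul_right_inj hk1 ENNReal.ofReal_ne_top).1
    rw [e1, ← ENNReal.ofReal_mul hC.le, ← ENNReal.ofReal_mul hκ0.le]
    congr 1
    rw [ht]; field_simp
  have hfB0 : ∀ x, 0 ≤ f x * QB x₀ d x ^ (μ / 2) := fun x => mul_nonneg (h.nonneg x) (Real.rpow_nonneg (hB x).le _)
  have hfm := h.meas
  have hfBm : AEStronglyMeasurable (fun x => f x * QB x₀ d x ^ (μ / 2)) volume :=
    Measurable.aestronglyMeasurable (by fun_prop)
  have hfBi : Integrable (fun x => f x * QB x₀ d x ^ (μ / 2)) := by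
    refine ⟨hfBm, ?_⟩
    rw [hasFiniteIntegral_iff_ofReal (Eventually.of_forall hfB0), hmom]
    exact ENNReal.ofReal_lt_top
  have hfBv : ∫ x, f x * QB x₀ d x ^ (μ / 2) = t * S := by
    rw [integral_eq_lintegral_of_nonneg_ae (Eventually.of_forall hfB0) hfBm, hmom, ENNReal.toReal_ofReal (by positivity)]
  have hBi : Integrable (fun x => QB x₀ d x ^ (-(n : ℝ))) := integrable_of_pos (by rw [hIB]; positivity)
  -- the tangent defect
  set G : EE n → ℝ := fun x => t ^ p * QB x₀ d x ^ (-(n : ℝ)) +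
    (p * t ^ (p - 1) * (f x * QB x₀ d x ^ (μ / 2)) - p * t ^ p * QB x₀ d x ^ (-(n : ℝ))) - f x ^ p with hG
  have i1 : Integrable (fun x => t ^ p * QB x₀ d x ^ (-(n : ℝ))) := hBi.const_mul _
  have i2 : Integrable (fun x => p * t ^ (p - 1) * (f x * QB x₀ d x ^ (μ / 2))) := hfBi.const_mul _
  have i3 : Integrable (fun x => p * t ^ p * QB x₀ d x ^ (-(n : ℝ))) := hBi.const_mul _
  have i4 : Integrable (fun x => p * t ^ (p - 1) * (f x * QB x₀ d x ^ (μ / 2)) - p * t ^ p * QB x₀ d x ^ (-(n : ℝ))) :=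
    i2.sub i3
  have i5 : Integrable (fun x => t ^ p * QB x₀ d x ^ (-(n : ℝ)) +
    (p * t ^ (p - 1) * (f x * QB x₀ d x ^ (μ / 2)) - p * t ^ p * QB x₀ d x ^ (-(n : ℝ)))) := i1.add i4
  have hGi : Integrable G := i5.sub hfp
  have hGint : ∫ x, G x = 0 := by
    rw [hG, integral_sub i5 hfp, integral_add i1 i4,
      integral_sub i2 i3, integral_const_mul, integral_const_mul, integral_const_mul,
      hfBv, hIB, ← hFd, hF]
    have : t ^ p = t ^ (p - 1) * t := by rw [Real.rpow_sub_one ht0.ne']; field_simp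
    rw [this]; ring
  have hGeq : ∀ x, G x = (t * QB x₀ d x ^ (-((n : ℝ) + μ / 2))) ^ p + p * (t * QB x₀ d x ^ (-((n : ℝ) + μ / 2))) ^ (p - 1) *
      (f x - t * QB x₀ d x ^ (-((n : ℝ) + μ / 2))) - f x ^ p := by
    intro x
    have hb := hB x
    rw [Real.mul_rpow ht0.le (by positivity), Real.mul_rpow ht0.le (by positivity), ← Real.rpow_mul hb.le,
      ← Real.rpow_mul hb.le, show -((n : ℝ) + μ / 2) * p = -(n : ℝ) by linarith,
      show -((n : ℝ) + μ / 2) * (p - 1) = μ / 2 by linarith, hG]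
    have c1 : t ^ p = t ^ (p - 1) * t := by rw [Real.rpow_sub_one ht0.ne']; field_simp
    have c2 : QB x₀ d x ^ (-(n : ℝ)) = QB x₀ d x ^ (μ / 2) * QB x₀ d x ^ (-((n : ℝ) + μ / 2)) := by
      rw [← Real.rpow_add hb]; congr 1; ring
    simp only
    rw [c2, c1]
    ring
  have hG0 : ∀ x, 0 ≤ G x := by
    intro x
    rw [hGeq]
    have hb := hB x
    have := rpow_le_tangent hp hp1 (h.nonneg x) (show 0 < t * QB x₀ d x ^ (-((n : ℝ) + μ / 2)) by positivity)
    linarith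
  have hz := (integral_eq_zero_iff_of_nonneg hG0 hGi).1 hGint
  refine ⟨t, ht0, ?_⟩
  filter_upwards [hz] with x hx
  have hb := hB x
  have hx' : G x = 0 := hx
  rw [hGeq] at hx'
  exact rpow_tangent_eq hp hp1 (h.nonneg x) (by positivity) (by linarith)

end RHLS

namespace RHLS
open EuclideanGeometry Filter Topology

theorem forward {n : ℕ} (hn : 1 ≤ n) {μ q : ℝ} (hμ : 0 < μ) (hq : q = -(2 * n / μ))
    {f : EE n → ℝ} (hfm : Measurable f) (hf0 : ∀ x, 0 ≤ f x) (hfp : Integrable (fun x => f x ^ pp n μ))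
    (hfne : ¬ f =ᵐ[volume] 0)
    (heq : (∫⁻ x, (∫⁻ y, ENNReal.ofReal (f y * dist x y ^ μ)) ^ q) ^ (1 / q) =
      ENNReal.ofReal (NN n μ * (∫ x, f x ^ pp n μ) ^ (1 / pp n μ))) :
    ∃ (c d : ℝ) (x₀ : EE n), 0 < c ∧ 0 < d ∧ ∀ᵐ x, f x = c * QB x₀ d x ^ (-((n : ℝ) + μ / 2)) := by
  have hn' : (1 : ℝ) ≤ n := by exact_mod_cast hn
  have hp := pp_pos hn hμ
  have hN := NN_pos hn hμ
  have hqneg : q < 0 := by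
    rw [hq]
    have : 0 < 2 * n / μ := by positivity
    linarith
  have hq1 : q - 1 = -(2 * ((n : ℝ) + μ / 2) / μ) := by rw [hq]; field_simp; ring
  have hfp0 : ∀ x, 0 ≤ f x ^ pp n μ := fun x => Real.rpow_nonneg (hf0 x) _
  have hF0 : 0 < ∫ x, f x ^ pp n μ := by
    refine lt_of_le_of_ne (integral_nonneg hfp0) fun hz => hfne ?_
    have := (integral_eq_zero_iff_of_nonneg hfp0 hfp).1 hz.symm
    filter_upwards [this] with x hx
    exact ((Real.rpow_eq_zero (hf0 x) hp.ne').1 hx)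
  have hV0 : 0 < NN n μ * (∫ x, f x ^ pp n μ) ^ (1 / pp n μ) := by positivity
  -- finiteness at two points
  have hA0 : ∫⁻ x, (∫⁻ y, ENNReal.ofReal (f y * dist x y ^ μ)) ^ q ≠ 0 := by
    intro h0
    rw [h0, ENNReal.zero_rpow_of_neg (by rw [one_div]; exact inv_neg''.2 hqneg)] at heq
    exact ENNReal.ofReal_ne_top heq.symm
  have hex1 : ∀ z : EE n, ∃ x, x ≠ z ∧ ∫⁻ y, ENNReal.ofReal (f y * dist x y ^ μ) ≠ ∞ := by
    intro z
    by_contra hc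
    push Not at hc
    apply hA0
    rw [lintegral_congr_ae (g := fun _ => 0)]
    · simp
    · filter_upwards [ae_ne hn z] with x hx
      rw [hc x hx, ENNReal.top_rpow_of_neg hqneg]
  obtain ⟨x₁, -, hx₁⟩ := hex1 0
  obtain ⟨x₂, hx₂₁, hx₂⟩ := hex1 x₁
  have hintof : ∀ x, ∫⁻ y, ENNReal.ofReal (f y * dist x y ^ μ) ≠ ∞ → Integrable (fun y => dist x y ^ μ * f y) := by
    intro x hx
    have h0 : ∀ y, 0 ≤ dist x y ^ μ * f y := fun y => mul_nonneg (Real.rpow_nonneg dist_nonneg _) (hf0 y)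
    refine ⟨Measurable.aestronglyMeasurable (by fun_prop), ?_⟩
    rw [hasFiniteIntegral_iff_ofReal (Eventually.of_forall h0)]
    simp only [mul_comm (dist x _ ^ μ)]
    exact hx.lt_top
  have h : Good μ f := good_of_two hμ hfm hf0 hx₂₁.symm (hintof _ hx₁) (hintof _ hx₂)
  have hpos := pot_pos hn hμ h hfne
  have hcu := h.continuous hμ
  have hU : ∀ x, (∫⁻ y, ENNReal.ofReal (f y * dist x y ^ μ)) ^ q = ENNReal.ofReal (pot μ f x ^ q) := by
    intro x
    rw [← ENNReal.ofReal_rpow_of_pos (hpos x), pot, ofReal_integral_eq_lintegral_ofReal (h.integrable hμ x)]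
    · simp only [mul_comm]
    · exact Eventually.of_forall fun y => mul_nonneg (Real.rpow_nonneg dist_nonneg _) (hf0 y)
  simp only [hU] at heq hA0
  set A := ∫⁻ x, ENNReal.ofReal (pot μ f x ^ q) with hA
  have hAt : A ≠ ∞ := by
    intro h0
    rw [h0, ENNReal.top_rpow_of_neg (by rw [one_div]; exact inv_neg''.2 hqneg)] at heq
    have := heq.symm
    rw [ENNReal.ofReal_eq_zero] at this
    linarith
  -- the dual function
  let g : EE n → ℝ := fun x => pot μ f x ^ (q - 1)
  have hg0 : ∀ x, 0 ≤ g x := fun x => Real.rpow_nonneg (hpos x).le _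
  have hgm : Measurable g := hcu.measurable.pow_const _
  have hD : DD μ g f = A := by
    rw [DD_eq_pot hμ hg0 h, hA]
    congr 1; ext x
    congr 1
    simp only [g]
    rw [Real.rpow_sub_one (hpos x).ne']
    have := hpos x
    field_simp
  have hng : nrm (pp n μ) g = A ^ (1 / pp n μ) := by
    unfold nrm
    congr 1
    rw [hA]
    congr 1; ext x
    simp only [g]
    rw [← Real.rpow_mul (hpos x).le]
    congr 2
    rw [hq1, hq]
    unfold pp
    field_simp
  have hnf : nrm (pp n μ) f = ENNReal.ofReal ((∫ x, f x ^ pp n μ) ^ (1 / pp n μ)) := by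
    unfold nrm
    rw [← ENNReal.ofReal_rpow_of_pos hF0, ofReal_integral_eq_lintegral_ofReal hfp (Eventually.of_forall hfp0)]
  have hDeq : DD μ g f = ENNReal.ofReal (NN n μ) * (nrm (pp n μ) g * nrm (pp n μ) f) := by
    rw [hD, hng, mul_left_comm, hnf, ← ENNReal.ofReal_mul hN.le, ← heq, ← ENNReal.rpow_add _ _ hA0 hAt]
    have : 1 / pp n μ + 1 / q = 1 := by
      rw [hq]
      unfold pp
      field_simp
      ring
    rw [this, ENNReal.rpow_one]
  obtain ⟨x₀, d, C, hd, hC, hu⟩ := pot_shape hn hμ hq1 h hfne (by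
    intro a R hR
    refine DD_pol_eq hn hμ a hR (e := 1) one_ne_zero hg0 hf0 hgm hfm (by rw [hD]; exact hAt) ?_
    have := crit_sharp hn hμ (pol_nonneg μ a (e := 1) hR hg0) (pol_nonneg μ a (e := 1) hR hf0)
      (measurable_pol μ a R 1 hgm) (measurable_pol μ a R 1 hfm)
    rw [nrm_pol hn hμ a hR one_ne_zero hg0 hgm, nrm_pol hn hμ a hR one_ne_zero hf0 hfm] at this
    rw [hDeq]
    exact this)
  obtain ⟨t, ht, hft⟩ := jensen_end hn hμ hq h hfp hd hC hu heq
  exact ⟨t, d, x₀, ht, hd, hft⟩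

end RHLS


/-- **Extremal functions for the sharp reversed HLS inequality on `ℝⁿ`**
(Corollary 1.3, equality case): for `1 ≤ n < α`, `p = 2n/(n+α)`, `q = 2n/(n-α)`, a
nonnegative `f ∈ L^p(ℝⁿ)`, not identically zero, achieves equality
`‖I_α f‖_{L^q(ℝⁿ)} = N*(n,α) ‖f‖_{L^p(ℝⁿ)}` if and only if
`f(x) = c (1/(|x-x₀|² + d²))^((n+α)/2)` for some `c, d > 0` and `x₀ ∈ ℝⁿ`. -/
theorem sharp_reversed_HLS_Rn_extremals (n : ℕ) (hn : 1 ≤ n) (α p q : ℝ)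
    (hα : (n : ℝ) < α)
    (hp : p = 2 * n / ((n : ℝ) + α)) (hq : q = 2 * n / ((n : ℝ) - α))
    (f : EuclideanSpace ℝ (Fin n) → ℝ)
    (hf : Measurable f) (hfpos : ∀ x, 0 ≤ f x)
    (hfLp : Integrable (fun x => |f x| ^ p))
    (hfne : ¬ (f =ᵐ[volume] 0)) :
    (∫⁻ x, (rieszNeg n α f x) ^ q) ^ (1 / q) =
        ENNReal.ofReal
          ((Real.pi ^ (((n : ℝ) - α) / 2) * (Real.Gamma (α / 2) / Real.Gamma (((n : ℝ) + α) / 2)) *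
              (Real.Gamma ((n : ℝ) / 2) / Real.Gamma (n : ℝ)) ^ (-(α / (n : ℝ)))) *
            (∫ x, |f x| ^ p) ^ (1 / p)) ↔
      ∃ (c d : ℝ) (x₀ : EuclideanSpace ℝ (Fin n)), 0 < c ∧ 0 < d ∧
        ∀ᵐ x ∂(volume : Measure (EuclideanSpace ℝ (Fin n))),
          f x = c * (1 / (‖x - x₀‖ ^ 2 + d ^ 2)) ^ (((n : ℝ) + α) / 2) := by
  have hn' : (1 : ℝ) ≤ n := by exact_mod_cast hn
  have hμ : 0 < α - n := by linarith
  have hp' : p = RHLS.pp n (α - n) := by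
    rw [hp]; unfold RHLS.pp
    have h1 : (n : ℝ) + α ≠ 0 := by linarith
    have h2 : (n : ℝ) + (α - n) / 2 ≠ 0 := by linarith
    rw [div_eq_div_iff h1 h2]; ring
  have hq' : q = -(2 * n / (α - n)) := by
    rw [hq, ← neg_sub α (n : ℝ), div_neg]
  have hab : ∀ x, |f x| = f x := fun x => abs_of_nonneg (hfpos x)
  have hQ : ∀ (x₀ : EuclideanSpace ℝ (Fin n)) (d : ℝ), 0 < d → ∀ x,
      (1 / (‖x - x₀‖ ^ 2 + d ^ 2)) ^ (((n : ℝ) + α) / 2) =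
        RHLS.QB x₀ d x ^ (-((n : ℝ) + (α - n) / 2)) := by
    intro x₀ d hd x
    have h := (RHLS.QB_pos x₀ hd x).le
    rw [Real.rpow_neg h]
    unfold RHLS.QB at h ⊢
    rw [one_div, Real.inv_rpow h]
    congr 2; ring
  rw [← RHLS.NN_eq hn hα]
  simp only [rieszNeg]
  constructor
  · intro heq
    simp only [hab] at heq hfLp
    rw [hp'] at heq hfLp
    obtain ⟨c, d, x₀, hc, hd, h⟩ := RHLS.forward hn hμ hq' hf hfpos hfLp hfne heq
    refine ⟨c, d, x₀, hc, hd, ?_⟩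
    filter_upwards [h] with x hx
    rw [hx, hQ x₀ d hd x]
  · rintro ⟨c, d, x₀, hc, hd, h⟩
    rw [hp']
    refine RHLS.bubble_eq hn hμ x₀ hc hd ?_ hq'
    filter_upwards [h] with x hx
    rw [hx, hQ x₀ d hd x]
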